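/- Let (u,K) be a reduced global Mumford–Shah minimizer in ℝ³. Assume that K is contained in a closed half-plane H ⊆ ℝ³ and that K contains at least one point of the edge of H. Then K = H. -/

import Mathlib

open MeasureTheory Metric Set Filter
open scoped ENNReal NNReal Topology

noncomputable section

/-- `ℝ^N` as a Euclidean space. -/
abbrev Rn (N : ℕ) := EuclideanSpace ℝ (Fin N)

/-- `u` is locally Lipschitz on the set `s` (neighborhoods taken within `s`). -/
def LocLipOn (N : ℕ) (u : Rn N → ℝ) (s : Set (Rn N)) : Prop :=
  ∀ x ∈ s, ∃ t ∈ nhdsWithin x s, ∃ C : ℝ≥0, LipschitzOnWith C u t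

/-- An admissible pair `(u, K)`: `K ⊆ ℝ^N` closed, `u` locally Lipschitz on `ℝ^N ∖ K`
with `∫_{B_R ∖ K} (u² + |∇u|²) < ∞` for every `R > 0`. -/
structure MSPair (N : ℕ) where
  K : Set (Rn N)
  u : Rn N → ℝ
  closed : IsClosed K
  lip : LocLipOn N u Kᶜ
  integ : ∀ R : ℝ, 0 < R →
    IntegrableOn (fun x => (u x) ^ 2 + ‖gradient u x‖ ^ 2) (ball 0 R \ K) volume

/-- The Mumford–Shah energy `∫_{B ∖ K} |∇u|² + H^{N-1}(K ∩ B)` of a pair in a set `B`. -/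
def MSEnergy (N : ℕ) (P : MSPair N) (B : Set (Rn N)) : ℝ≥0∞ :=
  (∫⁻ x in B \ P.K, ENNReal.ofReal (‖gradient P.u x‖ ^ 2)) + μH[(N : ℝ) - 1] (P.K ∩ B)

/-- `Q = (v, L)` is a competitor for `P = (u, K)` in the open ball `B`:
`L ∖ B = K ∖ B`, `v = u` outside `B ∪ K ∪ L`, and the topological separation condition. -/
def Competitor (N : ℕ) (P Q : MSPair N) (B : Set (Rn N)) : Prop :=
  Q.K \ B = P.K \ B ∧
  (∀ x, x ∉ B ∪ P.K ∪ Q.K → Q.u x = P.u x) ∧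
  ∀ x, x ∉ B ∪ P.K → ∀ y, y ∉ B ∪ P.K →
    connectedComponentIn P.Kᶜ x ≠ connectedComponentIn P.Kᶜ y →
    connectedComponentIn Q.Kᶜ x ≠ connectedComponentIn Q.Kᶜ y

/-- Global Mumford–Shah minimizer in `ℝ^N`. -/
def IsGlobalMin (N : ℕ) (P : MSPair N) : Prop :=
  ∀ (c : Rn N) (R : ℝ), 0 < R → ∀ Q : MSPair N,
    Competitor N P Q (ball c R) → MSEnergy N P (ball c R) ≤ MSEnergy N Q (ball c R)

/-- Reduced global minimizer: no competitor with smaller singular set and the same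
function off `K` exists. -/
def MSIsReduced (N : ℕ) (P : MSPair N) : Prop :=
  ∀ (c : Rn N) (R : ℝ), 0 < R → ∀ Q : MSPair N,
    Competitor N P Q (ball c R) → Q.K ⊆ P.K →
    (∀ x, x ∉ P.K → Q.u x = P.u x) → Q.K = P.K

/-- The model closed half-plane `{(x, y, 0) : x ∈ ℝ, y ≥ 0}` in `ℝ³`. -/
def modelHalfPlane : Set (Rn 3) := {w | w 2 = 0 ∧ 0 ≤ w 1}

/-- The edge `{(x, 0, 0) : x ∈ ℝ}` of the model half-plane. -/
def modelEdge : Set (Rn 3) := {w | w 2 = 0 ∧ w 1 = 0}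

section

/-- The standing assumptions. -/
structure Setup (P : MSPair 3) (J : Rn 2 →ₗᵢ[ℝ] Rn 3) (p : Rn 3) (k : Set (Rn 2)) : Prop where
  hmin : IsGlobalMin 3 P
  hred : MSIsReduced 3 P
  hK : P.K = (fun a => p + J a) '' k
  hk : IsClosed k
  hk0 : ∀ a ∈ k, 0 ≤ a 1

namespace Setup
variable {P : MSPair 3} {J : Rn 2 →ₗᵢ[ℝ] Rn 3} {p : Rn 3} {k : Set (Rn 2)}

theorem range_ne_top (J : Rn 2 →ₗᵢ[ℝ] Rn 3) : LinearMap.range J.toLinearMap ≠ ⊤ := by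
  intro h
  have h1 := LinearMap.finrank_range_le J.toLinearMap
  rw [h, finrank_top] at h1
  simp at h1

theorem plane_null (J : Rn 2 →ₗᵢ[ℝ] Rn 3) (p : Rn 3) :
    volume (range (fun a => p + J a)) = 0 := by
  have h := Measure.addHaar_submodule (volume : Measure (Rn 3)) _ (range_ne_top J)
  have : range (fun a => p + J a) = (fun x => p + x) '' (LinearMap.range J.toLinearMap : Set (Rn 3)) := by
    ext x; simp [eq_neg_add_iff_add_eq]
  rw [this]
  simpa using h

theorem vol_K (S : Setup P J p k) : volume P.K = 0 :=
  measure_mono_null (by rw [S.hK]; exact image_subset_range _ _) (plane_null J p)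

theorem precon (S : Setup P J p k) : IsPreconnected P.Kᶜ := by
  set H : Set (Rn 3) := (fun a => p + J a) '' {a | 0 ≤ a 1} with hH
  set e : Rn 2 := !₂[0, -1] with he
  have hstar : StarConvex ℝ (p + J e) Hᶜ := by
    intro x hx s t hs ht hst hmem
    rcases ht.eq_or_lt with rfl | ht'
    · have : s = 1 := by linarith
      subst this
      obtain ⟨a, ha, hae⟩ := hmem
      have : J a = J e := by simpa using hae
      have := J.injective this
      subst this
      simp [he] at ha
      linarith
    · apply hx
      obtain ⟨a, ha, hae⟩ := hmem
      refine ⟨t⁻¹ • (a - s • e), ?_, ?_⟩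
      · simp only [mem_ofPred_eq] at ha ⊢
        simp [he]
        positivity
      · have hs' : s = 1 - t := by linarith
        simp only at hae
        simp only [map_smul, map_sub]
        have : J a = s • (p + J e) + t • x - p := by rw [← hae]; abel
        rw [this, hs']
        have h2 : t⁻¹ * t = 1 := inv_mul_cancel₀ ht'.ne'
        have : (((1 - t) • (p + J e) + t • x - p) - (1 - t) • J e) = t • (x - p) := by module
        rw [this, smul_smul, h2]; module
  have hne : p + J e ∈ Hᶜ := by
    rintro ⟨a, ha, hae⟩
    have : J a = J e := by simpa using hae
    have := J.injective this
    subst this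
    simp [he] at ha
    linarith
  have h1 : IsPreconnected Hᶜ := by
    have := hstar.isPathConnected hne
    exact this.isConnected.isPreconnected
  have hnull : volume H = 0 := measure_mono_null (image_subset_range _ _) (plane_null J p)
  have hd : closure Hᶜ = univ := by
    rw [closure_compl, Measure.interior_eq_empty_of_null hnull, compl_empty]
  refine h1.subset_closure (compl_subset_compl.2 ?_) (by rw [hd]; exact subset_univ _)
  rw [S.hK]; exact image_mono S.hk0

theorem comp (S : Setup P J p k) {Q : MSPair 3} {B : Set (Rn 3)} (h1 : Q.K \ B = P.K \ B)
    (h2 : ∀ x, x ∉ B ∪ P.K ∪ Q.K → Q.u x = P.u x) : Competitor 3 P Q B := by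
  refine ⟨h1, h2, fun x hx y hy hne => absurd ?_ hne⟩
  rw [S.precon.connectedComponentIn, S.precon.connectedComponentIn]
  · exact fun h => hy (Or.inr h)
  · exact fun h => hx (Or.inr h)

theorem locLip (Q : MSPair 3) : LocallyLipschitzOn Q.Kᶜ Q.u := by
  intro x hx
  obtain ⟨t, ht, C, hC⟩ := Q.lip x hx
  exact ⟨C, t, ht, hC⟩

theorem _root_.locLipOn_of {u : Rn 3 → ℝ} {s : Set (Rn 3)} (h : LocallyLipschitzOn s u) :
    LocLipOn 3 u s := by
  intro x hx
  obtain ⟨C, t, ht, hC⟩ := h hx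
  exact ⟨t, ht, C, hC⟩

theorem aediff (S : Setup P J p k) : ∀ᵐ x, DifferentiableAt ℝ P.u x := by
  have hopen : IsOpen P.Kᶜ := P.closed.isOpen_compl
  have key : ∀ x ∈ P.Kᶜ, ∃ t ∈ 𝓝[P.Kᶜ] x, volume (t ∩ {x | ¬ DifferentiableAt ℝ P.u x}) = 0 := by
    intro x hx
    obtain ⟨C, t, ht, hC⟩ := locLip P hx
    rw [hopen.nhdsWithin_eq hx] at ht ⊢
    refine ⟨interior t, interior_mem_nhds.2 ht, ?_⟩
    have h := (hC.mono interior_subset).ae_differentiableWithinAt_of_mem (μ := volume)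
    rw [ae_iff] at h
    refine measure_mono_null ?_ h
    rintro z ⟨hz, hnd⟩ hh
    exact hnd ((hh hz).differentiableAt (isOpen_interior.mem_nhds hz))
  have h2 : volume (P.Kᶜ ∩ {x | ¬ DifferentiableAt ℝ P.u x}) = 0 := by
    apply measure_null_of_locally_null
    rintro x ⟨hx, -⟩
    obtain ⟨t, ht, h0⟩ := key x hx
    exact ⟨_, inter_mem (nhdsWithin_mono _ inter_subset_left ht)
      (mem_of_superset self_mem_nhdsWithin inter_subset_right), h0⟩
  rw [ae_iff]
  refine measure_mono_null (t := P.K ∪ (P.Kᶜ ∩ {x | ¬ DifferentiableAt ℝ P.u x})) ?_ ?_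
  · intro x hx
    by_cases hxK : x ∈ P.K
    · exact Or.inl hxK
    · exact Or.inr ⟨hxK, hx⟩
  · rw [measure_union_null_iff]; exact ⟨S.vol_K, h2⟩

theorem aesm (S : Setup P J p k) : AEStronglyMeasurable P.u volume := by
  have h : AEStronglyMeasurable P.u (volume.restrict P.Kᶜ) :=
    (locLip P).continuousOn.aestronglyMeasurable P.closed.isOpen_compl.measurableSet
  rwa [Measure.restrict_eq_self_of_ae_mem] at h
  rw [ae_iff]; simpa using S.vol_K

theorem grad_meas (u : Rn 3 → ℝ) : Measurable (gradient u) := by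
  unfold gradient
  exact ((InnerProductSpace.toDual ℝ (Rn 3)).symm.continuous.measurable).comp (measurable_fderiv ℝ u)

theorem int_both (S : Setup P J p k) (y : Rn 3) (r : ℝ) :
    IntegrableOn (fun x => (P.u x) ^ 2 + ‖gradient P.u x‖ ^ 2) (ball y r) volume := by
  have h := P.integ (‖y‖ + |r| + 1) (by positivity)
  have h2 : IntegrableOn (fun x => (P.u x) ^ 2 + ‖gradient P.u x‖ ^ 2)
      (ball 0 (‖y‖ + |r| + 1)) volume :=
    h.congr_set_ae (sdiff_null_ae_eq_self S.vol_K).symm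
  refine h2.mono_set fun x hx => ?_
  rw [mem_ball, dist_eq_norm] at *
  have : ‖x‖ ≤ ‖x - y‖ + ‖y‖ := by simpa using norm_add_le (x - y) y
  rw [sub_zero]
  linarith [le_abs_self r]

theorem int_u2 (S : Setup P J p k) (y : Rn 3) (r : ℝ) :
    IntegrableOn (fun x => (P.u x) ^ 2) (ball y r) volume := by
  refine (S.int_both y r).mono' (S.aesm.restrict.pow 2) (ae_of_all _ fun x => ?_)
  rw [Real.norm_of_nonneg (sq_nonneg _)]
  linarith [sq_nonneg ‖gradient P.u x‖]

theorem int_g2 (S : Setup P J p k) (y : Rn 3) (r : ℝ) :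
    IntegrableOn (fun x => ‖gradient P.u x‖ ^ 2) (ball y r) volume := by
  refine (S.int_both y r).mono' (((grad_meas P.u).norm.pow_const 2).aestronglyMeasurable) (ae_of_all _ fun x => ?_)
  rw [Real.norm_of_nonneg (sq_nonneg _)]
  linarith [sq_nonneg (P.u x)]

end Setup

end

section

/-- cutoff profile -/
def eta (r q : ℝ) : ℝ := (max 0 (1 - q / r ^ 2)) ^ 2
/-- minus the derivative of the cutoff profile -/
def om (r q : ℝ) : ℝ := 2 / r ^ 2 * max 0 (1 - q / r ^ 2)

theorem hasDerivAt_maxsq (s : ℝ) : HasDerivAt (fun s : ℝ => (max 0 s) ^ 2) (2 * max 0 s) s := by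
  rcases lt_trichotomy s 0 with h | h | h
  · have : (fun s : ℝ => (max 0 s) ^ 2) =ᶠ[𝓝 s] fun _ => 0 := by
      filter_upwards [gt_mem_nhds h] with x hx
      rw [max_eq_left hx.le]; simp
    rw [max_eq_left h.le, mul_zero]
    exact (hasDerivAt_const s 0).congr_of_eventuallyEq this
  · subst h
    simp only [max_self, mul_zero]
    rw [hasDerivAt_iff_isLittleO_nhds_zero]
    simp only [zero_add, max_self, smul_zero, sub_zero]
    norm_num
    refine Asymptotics.IsBigO.trans_isLittleO (g := fun h : ℝ => h ^ 2) ?_ ?_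
    · refine Asymptotics.isBigO_of_le _ fun x => ?_
      simp only [Real.norm_eq_abs, abs_pow]
      refine pow_le_pow_left₀ (abs_nonneg _) ?_ 2
      rcases le_total 0 x with hx | hx
      · rw [max_eq_right hx]
      · rw [max_eq_left hx]; simp
    · exact Asymptotics.isLittleO_pow_id (𝕜 := ℝ) (n := 2) (by norm_num)
  · have : (fun s : ℝ => (max 0 s) ^ 2) =ᶠ[𝓝 s] fun s => s ^ 2 := by
      filter_upwards [lt_mem_nhds h] with x hx
      rw [max_eq_right hx.le]
    rw [max_eq_right h.le]
    have h2 : HasDerivAt (fun s : ℝ => s ^ 2) (2 * s) s := by simpa using hasDerivAt_pow 2 s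
    exact h2.congr_of_eventuallyEq this

theorem eta_nonneg (r q : ℝ) : 0 ≤ eta r q := sq_nonneg _
theorem om_nonneg (r q : ℝ) : 0 ≤ om r q := by unfold om; positivity
theorem eta_le_one (r : ℝ) {q : ℝ} (hq : 0 ≤ q) : eta r q ≤ 1 := by
  unfold eta
  have h1 : max 0 (1 - q / r ^ 2) ≤ 1 := max_le zero_le_one (sub_le_self _ (by positivity))
  have h0 : 0 ≤ max 0 (1 - q / r ^ 2) := le_max_left _ _
  nlinarith
theorem om_le (r : ℝ) {q : ℝ} (hq : 0 ≤ q) : om r q ≤ 2 / r ^ 2 := by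
  unfold om
  have h1 : max 0 (1 - q / r ^ 2) ≤ 1 := max_le zero_le_one (sub_le_self _ (by positivity))
  have : 0 ≤ 2 / r ^ 2 := by positivity
  nlinarith
theorem max_zero_of {r q : ℝ} (hr : 0 < r) (hq : r ^ 2 ≤ q) : max 0 (1 - q / r ^ 2) = 0 := by
  apply max_eq_left
  have : 1 ≤ q / r ^ 2 := by rw [le_div_iff₀ (by positivity)]; linarith
  linarith
theorem eta_zero {r q : ℝ} (hr : 0 < r) (hq : r ^ 2 ≤ q) : eta r q = 0 := by
  unfold eta; rw [max_zero_of hr hq]; simp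
theorem om_zero {r q : ℝ} (hr : 0 < r) (hq : r ^ 2 ≤ q) : om r q = 0 := by
  unfold om; rw [max_zero_of hr hq]; simp
theorem om_pos {r q : ℝ} (hr : 0 < r) (hq : q < r ^ 2) : 0 < om r q := by
  unfold om
  have : q / r ^ 2 < 1 := by rw [div_lt_one (by positivity)]; exact hq
  have : 0 < max 0 (1 - q / r ^ 2) := lt_max_of_lt_right (by linarith)
  positivity
theorem om_mul_le {r q : ℝ} (hr : 0 < r) (hq : 0 ≤ q) : om r q * q ≤ 2 := by
  rcases le_total (r ^ 2) q with h | h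
  · rw [om_zero hr h]; simp
  · calc om r q * q ≤ 2 / r ^ 2 * r ^ 2 := by
          gcongr
          exact om_le r hq
      _ = 2 := by field_simp

theorem hasDerivAt_eta (r q : ℝ) : HasDerivAt (eta r) (-om r q) q := by
  have h := (hasDerivAt_maxsq (1 - q / r ^ 2)).comp q
    (((hasDerivAt_id q).div_const (r ^ 2)).const_sub 1)
  refine h.congr_deriv ?_
  unfold om; ring

theorem hasDerivAt_eta_r {r : ℝ} (hr : 0 < r) (q : ℝ) :
    HasDerivAt (fun r => eta r q) (2 * om r q * q / r) r := by
  have h0 : HasDerivAt (fun r : ℝ => 1 - q / r ^ 2) (2 * q / r ^ 3) r := by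
    have h1 : HasDerivAt (fun r : ℝ => r ^ 2) (2 * r) r := by simpa using hasDerivAt_pow 2 r
    have := ((h1.inv (by positivity)).const_mul q).const_sub 1
    refine (this.congr_deriv ?_)
    field_simp
  have h := (hasDerivAt_maxsq (1 - q / r ^ 2)).comp r h0
  refine h.congr_deriv ?_
  unfold om; field_simp

theorem continuous_eta (r : ℝ) : Continuous (eta r) := by unfold eta; fun_prop
theorem continuous_om (r : ℝ) : Continuous (om r) := by unfold om; fun_prop

theorem contDiff_eta (r : ℝ) : ContDiff ℝ 1 (eta r) := by
  rw [contDiff_one_iff_deriv]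
  refine ⟨fun q => (hasDerivAt_eta r q).differentiableAt, ?_⟩
  have : deriv (eta r) = fun q => - om r q := by ext q; exact (hasDerivAt_eta r q).deriv
  rw [this]
  exact (continuous_om r).neg

section
variable {V : Type*} [NormedAddCommGroup V] [InnerProductSpace ℝ V]

theorem hasFDerivAt_normsq (y x : V) :
    HasFDerivAt (fun x : V => ‖x - y‖ ^ 2) ((2:ℝ) • innerSL ℝ (x - y)) x := by
  have h := (hasFDerivAt_id x).sub_const y |>.norm_sq
  refine h.congr_fderiv ?_
  ext v; simp

theorem hasFDerivAt_etax (r : ℝ) (y x : V) :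
    HasFDerivAt (fun x : V => eta r (‖x - y‖ ^ 2)) ((-(2 * om r (‖x - y‖ ^ 2))) • innerSL ℝ (x - y)) x := by
  have h := (hasDerivAt_eta r (‖x - y‖ ^ 2)).comp_hasFDerivAt x (hasFDerivAt_normsq y x)
  refine h.congr_fderiv ?_
  rw [smul_smul]; congr 1; ring

theorem contDiff_etax (r : ℝ) (y : V) : ContDiff ℝ 1 (fun x : V => eta r (‖x - y‖ ^ 2)) :=
  (contDiff_eta r).comp ((contDiff_id.sub contDiff_const).norm_sq ℝ)

set_option linter.unusedSectionVars false in
theorem etax_zero {r : ℝ} (hr : 0 < r) {y x : V} (h : x ∉ ball y r) : eta r (‖x - y‖ ^ 2) = 0 := by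
  apply eta_zero hr
  rw [mem_ball, dist_eq_norm, not_lt] at h
  gcongr
set_option linter.unusedSectionVars false in
theorem omx_zero {r : ℝ} (hr : 0 < r) {y x : V} (h : x ∉ ball y r) : om r (‖x - y‖ ^ 2) = 0 := by
  apply om_zero hr
  rw [mem_ball, dist_eq_norm, not_lt] at h
  gcongr
end

theorem quad_zero {a b δ : ℝ} (hδ : 0 < δ) (h : ∀ t, |t| ≤ δ → 0 ≤ t * a + t ^ 2 * b) : a = 0 := by
  by_contra ha
  set s := min δ (|a| / (2 * (|b| + 1))) with hs
  have hap : 0 < |a| := abs_pos.2 ha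
  have hs0 : 0 < s := lt_min hδ (by positivity)
  have hsb : s * |b| < |a| := by
    have h1 : s ≤ |a| / (2 * (|b| + 1)) := min_le_right _ _
    rw [le_div_iff₀ (by positivity)] at h1
    nlinarith [abs_nonneg b]
  have hb : b ≤ |b| := le_abs_self b
  rcases lt_or_gt_of_ne ha with h0 | h0
  · have := h s (by rw [abs_of_pos hs0]; exact min_le_left _ _)
    rw [abs_of_neg h0] at hsb
    nlinarith
  · have := h (-s) (by rw [abs_neg, abs_of_pos hs0]; exact min_le_left _ _)
    rw [abs_of_pos h0] at hsb
    nlinarith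

instance haar2 : Measure.IsAddHaarMeasure (μH[2] : Measure (Rn 2)) := by
  have h := MeasureTheory.isAddHaarMeasure_hausdorffMeasure (E := Rn 2)
  simpa using h

namespace Setup
variable {P : MSPair 3} {J : Rn 2 →ₗᵢ[ℝ] Rn 3} {p : Rn 3} {k : Set (Rn 2)}

theorem iso (J : Rn 2 →ₗᵢ[ℝ] Rn 3) (p : Rn 3) : Isometry (fun a => p + J a) :=
  (isometry_add_left p).comp J.isometry

theorem muH_image (J : Rn 2 →ₗᵢ[ℝ] Rn 3) (p : Rn 3) (s : Set (Rn 2)) :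
    μH[((3:ℕ) : ℝ) - 1] ((fun a => p + J a) '' s) = μH[2] s := by
  rw [(iso J p).hausdorffMeasure_image (Or.inl (by norm_num))]
  norm_num

theorem inter_ball (J : Rn 2 →ₗᵢ[ℝ] Rn 3) (p : Rn 3) (s : Set (Rn 2)) (b : Rn 2) (r : ℝ) :
    ((fun a => p + J a) '' s) ∩ ball (p + J b) r = (fun a => p + J a) '' (s ∩ ball b r) := by
  ext x
  constructor
  · rintro ⟨⟨a, ha, rfl⟩, hx⟩
    refine ⟨a, ⟨ha, ?_⟩, rfl⟩
    rw [mem_ball] at hx ⊢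
    rwa [(iso J p).dist_eq] at hx
  · rintro ⟨a, ⟨ha, hx⟩, rfl⟩
    refine ⟨⟨a, ha, rfl⟩, ?_⟩
    rw [mem_ball] at hx ⊢
    rwa [(iso J p).dist_eq]

theorem muK_lt_top (S : Setup P J p k) (y : Rn 3) (r : ℝ) :
    μH[((3:ℕ) : ℝ) - 1] (P.K ∩ ball y r) < ∞ := by
  have h1 : P.K ∩ ball y r ⊆ (fun a => p + J a) '' (ball 0 (dist y p + r)) := by
    rintro x ⟨hx, hxb⟩
    rw [S.hK] at hx
    obtain ⟨a, ha, rfl⟩ := hx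
    refine ⟨a, ?_, rfl⟩
    rw [mem_ball] at hxb ⊢
    have h2 : dist a 0 = dist (p + J a) (p + J 0) := ((iso J p).dist_eq a 0).symm
    rw [h2, map_zero, add_zero]
    linarith [dist_triangle (p + J a) y p]
  refine (measure_mono h1).trans_lt ?_
  rw [muH_image]
  exact measure_ball_lt_top

theorem energy_eq {Q : MSPair 3} (h0 : volume Q.K = 0) {B : Set (Rn 3)}
    (hi : IntegrableOn (fun x => ‖gradient Q.u x‖ ^ 2) B) :
    MSEnergy 3 Q B = ENNReal.ofReal (∫ x in B, ‖gradient Q.u x‖ ^ 2) + μH[((3:ℕ) : ℝ) - 1] (Q.K ∩ B) := by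
  unfold MSEnergy
  rw [setLIntegral_congr (sdiff_null_ae_eq_self h0),
    ofReal_integral_eq_lintegral_ofReal hi (ae_of_all _ fun x => sq_nonneg _)]

theorem min_real (S : Setup P J p k) {Q : MSPair 3} {y : Rn 3} {r : ℝ} (hr : 0 < r)
    (h1 : Q.K \ ball y r = P.K \ ball y r)
    (h2 : ∀ x, x ∉ ball y r ∪ P.K ∪ Q.K → Q.u x = P.u x)
    (h0 : volume Q.K = 0) (hi : IntegrableOn (fun x => ‖gradient Q.u x‖ ^ 2) (ball y r))
    (hf : μH[((3:ℕ) : ℝ) - 1] (Q.K ∩ ball y r) ≠ ∞) :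
    (∫ x in ball y r, ‖gradient P.u x‖ ^ 2) + (μH[((3:ℕ) : ℝ) - 1] (P.K ∩ ball y r)).toReal ≤
    (∫ x in ball y r, ‖gradient Q.u x‖ ^ 2) + (μH[((3:ℕ) : ℝ) - 1] (Q.K ∩ ball y r)).toReal := by
  have h := S.hmin y r hr Q (S.comp h1 h2)
  rw [energy_eq S.vol_K (S.int_g2 y r), energy_eq h0 hi] at h
  have h' := ENNReal.toReal_mono (ENNReal.add_ne_top.2 ⟨ENNReal.ofReal_ne_top, hf⟩) h
  rwa [ENNReal.toReal_add ENNReal.ofReal_ne_top (S.muK_lt_top y r).ne,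
    ENNReal.toReal_add ENNReal.ofReal_ne_top hf, ENNReal.toReal_ofReal (by positivity),
    ENNReal.toReal_ofReal (by positivity)] at h'

theorem int_dom (S : Setup P J p k) {g : Rn 3 → ℝ} {y : Rn 3} {r : ℝ} (C : ℝ)
    (hg : AEStronglyMeasurable g volume)
    (h : ∀ᵐ x, x ∈ ball y r → |g x| ≤ C * (P.u x ^ 2 + ‖gradient P.u x‖ ^ 2 + 1)) :
    IntegrableOn g (ball y r) := by
  have h1 : IntegrableOn (fun x => C * (P.u x ^ 2 + ‖gradient P.u x‖ ^ 2 + 1)) (ball y r) :=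
    ((S.int_both y r).add (integrableOn_const (measure_ball_lt_top.ne))).const_mul C
  refine h1.mono' hg.restrict ?_
  rw [ae_restrict_iff' measurableSet_ball]
  exact h

end Setup

end

section

theorem LocallyLipschitzOn.rmul {V : Type*} [PseudoMetricSpace V] {s : Set V} {f g : V → ℝ}
    (hf : LocallyLipschitzOn s f) (hg : LocallyLipschitzOn s g) :
    LocallyLipschitzOn s (fun x => f x * g x) := by
  intro x hx
  obtain ⟨C1, t1, ht1, h1⟩ := hf hx
  obtain ⟨C2, t2, ht2, h2⟩ := hg hx
  have hfc := (hf.continuousOn x hx).norm.eventually_lt_const (lt_add_one ‖f x‖)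
  have hgc := (hg.continuousOn x hx).norm.eventually_lt_const (lt_add_one ‖g x‖)
  set A : ℝ≥0 := ‖f x‖₊ + 1
  set B : ℝ≥0 := ‖g x‖₊ + 1
  refine ⟨A * C2 + B * C1, t1 ∩ t2 ∩ ({z | ‖f z‖ < ‖f x‖ + 1} ∩ {z | ‖g z‖ < ‖g x‖ + 1}),
    inter_mem (inter_mem ht1 ht2) (inter_mem hfc hgc), ?_⟩
  rw [lipschitzOnWith_iff_dist_le_mul]
  rintro a ⟨⟨ha1, ha2⟩, ha3, ha4⟩ b ⟨⟨hb1, hb2⟩, hb3, hb4⟩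
  have e1 := h1.dist_le_mul a ha1 b hb1
  have e2 := h2.dist_le_mul a ha2 b hb2
  rw [Real.dist_eq] at *
  have : f a * g a - f b * g b = f a * (g a - g b) + g b * (f a - f b) := by ring
  rw [this]
  refine (abs_add_le _ _).trans ?_
  rw [abs_mul, abs_mul]
  have hA : |f a| ≤ A := by simpa [A] using (show ‖f a‖ < ‖f x‖ + 1 from ha3).le
  have hB : |g b| ≤ B := by simpa [B] using (show ‖g b‖ < ‖g x‖ + 1 from hb4).le
  push_cast
  calc |f a| * |g a - g b| + |g b| * |f a - f b| ≤ A * (C2 * dist a b) + B * (C1 * dist a b) := by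
        gcongr
    _ = _ := by ring

theorem LocallyLipschitzOn.radd {V : Type*} [PseudoMetricSpace V] {s : Set V} {f g : V → ℝ}
    (hf : LocallyLipschitzOn s f) (hg : LocallyLipschitzOn s g) :
    LocallyLipschitzOn s (fun x => f x + g x) := by
  intro x hx
  obtain ⟨C1, t1, ht1, h1⟩ := hf hx
  obtain ⟨C2, t2, ht2, h2⟩ := hg hx
  exact ⟨C1 + C2, t1 ∩ t2, inter_mem ht1 ht2, (h1.mono inter_subset_left).add (h2.mono inter_subset_right)⟩

namespace Setup
variable {P : MSPair 3} {J : Rn 2 →ₗᵢ[ℝ] Rn 3} {p : Rn 3} {k : Set (Rn 2)}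

/-- weighted Dirichlet energy -/
def Dt (P : MSPair 3) (y : Rn 3) (r : ℝ) : ℝ := ∫ x, eta r (‖x - y‖ ^ 2) * ‖gradient P.u x‖ ^ 2

theorem setInt_eq {g : Rn 3 → ℝ} {y : Rn 3} {r : ℝ} (h : ∀ x, x ∉ ball y r → g x = 0) :
    ∫ x in ball y r, g x = ∫ x, g x := setIntegral_eq_integral_of_forall_compl_eq_zero h

/-- variation of the gradient -/
def gv (P : MSPair 3) (y : Rn 3) (c r : ℝ) (x : Rn 3) : Rn 3 :=
  eta r (‖x - y‖ ^ 2) • gradient P.u x - (2 * om r (‖x - y‖ ^ 2) * (P.u x - c)) • (x - y)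

theorem gv_meas (S : Setup P J p k) (y : Rn 3) (c r : ℝ) :
    AEStronglyMeasurable (gv P y c r) volume := by
  unfold gv
  have h1 : Continuous fun x : Rn 3 => eta r (‖x - y‖ ^ 2) := (contDiff_etax r y).continuous
  have h2 : Continuous fun x : Rn 3 => 2 * om r (‖x - y‖ ^ 2) := by
    have := continuous_om r
    fun_prop
  refine (h1.aestronglyMeasurable.smul (grad_meas P.u).aestronglyMeasurable).sub ?_
  refine (h2.aestronglyMeasurable.mul (S.aesm.sub aestronglyMeasurable_const)).smul ?_
  exact (by fun_prop : Continuous fun x : Rn 3 => x - y).aestronglyMeasurable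

theorem gv_bound (y : Rn 3) (c : ℝ) {r : ℝ} (hr : 0 < r) (x : Rn 3) :
    ‖gv P y c r x‖ ^ 2 ≤ (2 + 64 / r ^ 2 * (1 + c ^ 2)) * (P.u x ^ 2 + ‖gradient P.u x‖ ^ 2 + 1) := by
  have hq : 0 ≤ ‖x - y‖ ^ 2 := sq_nonneg _
  have h1 : ‖eta r (‖x - y‖ ^ 2) • gradient P.u x‖ ≤ ‖gradient P.u x‖ := by
    rw [norm_smul, Real.norm_of_nonneg (eta_nonneg _ _)]
    exact mul_le_of_le_one_left (norm_nonneg _) (eta_le_one r hq)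
  have h2 : ‖(2 * om r (‖x - y‖ ^ 2) * (P.u x - c)) • (x - y)‖ ^ 2 ≤ 16 / r ^ 2 * (P.u x - c) ^ 2 := by
    rw [norm_smul, mul_pow, Real.norm_eq_abs, sq_abs]
    have e1 := om_mul_le hr hq
    have e2 := om_le r hq
    have e3 := om_nonneg r (‖x - y‖ ^ 2)
    calc (2 * om r (‖x - y‖ ^ 2) * (P.u x - c)) ^ 2 * ‖x - y‖ ^ 2
        = 4 * (om r (‖x - y‖ ^ 2) * (om r (‖x - y‖ ^ 2) * ‖x - y‖ ^ 2)) * (P.u x - c) ^ 2 := by ring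
      _ ≤ 4 * (2 / r ^ 2 * 2) * (P.u x - c) ^ 2 := by gcongr
      _ = _ := by ring
  have h3 : ‖gv P y c r x‖ ^ 2 ≤ 2 * ‖gradient P.u x‖ ^ 2 + 2 * (16 / r ^ 2 * (P.u x - c) ^ 2) := by
    have := norm_sub_le (eta r (‖x - y‖ ^ 2) • gradient P.u x) ((2 * om r (‖x - y‖ ^ 2) * (P.u x - c)) • (x - y))
    unfold gv
    calc _ ≤ (‖eta r (‖x - y‖ ^ 2) • gradient P.u x‖ + ‖(2 * om r (‖x - y‖ ^ 2) * (P.u x - c)) • (x - y)‖) ^ 2 := by gcongr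
      _ ≤ 2 * ‖eta r (‖x - y‖ ^ 2) • gradient P.u x‖ ^ 2 + 2 * ‖(2 * om r (‖x - y‖ ^ 2) * (P.u x - c)) • (x - y)‖ ^ 2 := by
          nlinarith [sq_nonneg (‖eta r (‖x - y‖ ^ 2) • gradient P.u x‖ - ‖(2 * om r (‖x - y‖ ^ 2) * (P.u x - c)) • (x - y)‖)]
      _ ≤ _ := by gcongr
  have h4 : (P.u x - c) ^ 2 ≤ 2 * (1 + c ^ 2) * (P.u x ^ 2 + ‖gradient P.u x‖ ^ 2 + 1) := by
    nlinarith [sq_nonneg (P.u x + c), sq_nonneg (P.u x), sq_nonneg ‖gradient P.u x‖,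
      mul_nonneg (sq_nonneg c) (sq_nonneg (P.u x)), mul_nonneg (sq_nonneg c) (sq_nonneg ‖gradient P.u x‖)]
  have h5 : 0 ≤ 16 / r ^ 2 := by positivity
  calc _ ≤ 2 * ‖gradient P.u x‖ ^ 2 + 2 * (16 / r ^ 2 * (2 * (1 + c ^ 2) * (P.u x ^ 2 + ‖gradient P.u x‖ ^ 2 + 1))) := by
        refine h3.trans ?_; gcongr
    _ ≤ 2 * (P.u x ^ 2 + ‖gradient P.u x‖ ^ 2 + 1) + 2 * (16 / r ^ 2 * (2 * (1 + c ^ 2) * (P.u x ^ 2 + ‖gradient P.u x‖ ^ 2 + 1))) := by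
        nlinarith [sq_nonneg (P.u x)]
    _ = _ := by ring

theorem grad_outer (y : Rn 3) (c r t : ℝ) {x : Rn 3} (hx : DifferentiableAt ℝ P.u x) :
    gradient (fun x => P.u x + t * ((P.u x - c) * eta r (‖x - y‖ ^ 2))) x
      = gradient P.u x + t • gv P y c r x := by
  have hg : HasFDerivAt P.u (innerSL ℝ (gradient P.u x)) x := by
    have := hx.hasGradientAt.hasFDerivAt
    refine this.congr_fderiv ?_
    ext v; simp
  apply HasGradientAt.gradient
  rw [hasGradientAt_iff_hasFDerivAt]
  have h := hg.add (((hg.sub_const c).mul (hasFDerivAt_etax r y x)).const_mul t)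
  refine h.congr_fderiv ?_
  ext v
  simp [gv, inner_add_left, inner_sub_left, inner_smul_left]
  ring

theorem outer (S : Setup P J p k) (y : Rn 3) (c : ℝ) {r : ℝ} (hr : 0 < r) :
    Dt P y r = 2 * ∫ x, om r (‖x - y‖ ^ 2) * (P.u x - c) * inner ℝ (x - y) (gradient P.u x) := by
  set C := (2 + 64 / r ^ 2 * (1 + c ^ 2)) with hC
  have hC0 : 0 < C := by positivity
  have hM : ∀ x, ‖gradient P.u x‖ ^ 2 ≤ (P.u x ^ 2 + ‖gradient P.u x‖ ^ 2 + 1) := fun x => by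
    nlinarith [sq_nonneg (P.u x)]
  have hgvm := S.gv_meas y c r
  have hgm : AEStronglyMeasurable (gradient P.u) volume := (grad_meas P.u).aestronglyMeasurable
  -- the competitor
  have hlip : ∀ t : ℝ, LocallyLipschitzOn P.Kᶜ
      (fun x => P.u x + t * ((P.u x - c) * eta r (‖x - y‖ ^ 2))) := by
    intro t
    have hc : ∀ c : ℝ, LocallyLipschitzOn P.Kᶜ (fun _ : Rn 3 => c) := fun c =>
      (LipschitzWith.const c).locallyLipschitz.locallyLipschitzOn
    have he : LocallyLipschitzOn P.Kᶜ (fun x : Rn 3 => eta r (‖x - y‖ ^ 2)) :=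
      (contDiff_etax r y).locallyLipschitz.locallyLipschitzOn
    have := (locLip P).radd ((hc t).rmul (((locLip P).radd (hc (-c))).rmul he))
    simpa [sub_eq_add_neg] using this
  have hgrad : ∀ t : ℝ, ∀ᵐ x, gradient (fun x => P.u x + t * ((P.u x - c) * eta r (‖x - y‖ ^ 2))) x
      = gradient P.u x + t • gv P y c r x := fun t => by
    filter_upwards [S.aediff] with x hx using grad_outer y c r t hx
  have hi : ∀ t : ℝ, ∀ z s, IntegrableOn (fun x => ‖gradient (fun x => P.u x + t * ((P.u x - c) * eta r (‖x - y‖ ^ 2))) x‖ ^ 2) (ball z s) := by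
    intro t z s
    refine S.int_dom (2 + 2 * t ^ 2 * C) ((grad_meas _).norm.pow_const 2).aestronglyMeasurable ?_
    filter_upwards [hgrad t] with x hx _
    rw [hx, abs_of_nonneg (sq_nonneg _)]
    have h1 := gv_bound (P := P) y c hr x
    have h2 : ‖gradient P.u x + t • gv P y c r x‖ ^ 2 ≤ 2 * ‖gradient P.u x‖ ^ 2 + 2 * (t ^ 2 * ‖gv P y c r x‖ ^ 2) := by
      have h3 := norm_add_le (gradient P.u x) (t • gv P y c r x)
      have h4 : ‖t • gv P y c r x‖ ^ 2 = t ^ 2 * ‖gv P y c r x‖ ^ 2 := by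
        rw [norm_smul, mul_pow, Real.norm_eq_abs, sq_abs]
      rw [← h4]
      nlinarith [norm_nonneg (gradient P.u x + t • gv P y c r x), sq_nonneg (‖gradient P.u x‖ - ‖t • gv P y c r x‖)]
    have h5 := hM x
    have h6 : t ^ 2 * ‖gv P y c r x‖ ^ 2 ≤ t ^ 2 * (C * (P.u x ^ 2 + ‖gradient P.u x‖ ^ 2 + 1)) := by gcongr
    nlinarith
  have hint : ∀ t R : ℝ, 0 < R → IntegrableOn (fun x => (P.u x + t * ((P.u x - c) * eta r (‖x - y‖ ^ 2))) ^ 2 +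
      ‖gradient (fun x => P.u x + t * ((P.u x - c) * eta r (‖x - y‖ ^ 2))) x‖ ^ 2) (ball 0 R \ P.K) volume := by
    intro t R hR
    refine IntegrableOn.mono_set ?_ sdiff_subset
    refine Integrable.add ?_ (hi t 0 R)
    have hm : AEStronglyMeasurable (fun x => P.u x + t * ((P.u x - c) * eta r (‖x - y‖ ^ 2))) volume :=
      S.aesm.add (((S.aesm.sub aestronglyMeasurable_const).mul
        (contDiff_etax r y).continuous.aestronglyMeasurable).const_mul t)
    refine S.int_dom (2 + 4 * t ^ 2 * (1 + c ^ 2)) (hm.pow 2) (ae_of_all _ fun x _ => ?_)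
    rw [abs_of_nonneg (sq_nonneg _)]
    have e1 := eta_nonneg r (‖x - y‖ ^ 2)
    have e2 := eta_le_one r (sq_nonneg ‖x - y‖)
    have e3 : ((P.u x - c) * eta r (‖x - y‖ ^ 2)) ^ 2 ≤ (P.u x - c) ^ 2 := by
      rw [mul_pow]
      refine mul_le_of_le_one_right (sq_nonneg _) (pow_le_one₀ e1 e2)
    have e4 : (P.u x + t * ((P.u x - c) * eta r (‖x - y‖ ^ 2))) ^ 2 ≤ 2 * P.u x ^ 2 + 2 * (t ^ 2 * (P.u x - c) ^ 2) := by
      have : t ^ 2 * ((P.u x - c) * eta r (‖x - y‖ ^ 2)) ^ 2 ≤ t ^ 2 * (P.u x - c) ^ 2 := by gcongr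
      nlinarith [sq_nonneg (P.u x - t * ((P.u x - c) * eta r (‖x - y‖ ^ 2)))]
    have e5 : (P.u x - c) ^ 2 ≤ 2 * (1 + c ^ 2) * (P.u x ^ 2 + ‖gradient P.u x‖ ^ 2 + 1) := by
      nlinarith [sq_nonneg (P.u x + c), sq_nonneg (P.u x), sq_nonneg ‖gradient P.u x‖,
        mul_nonneg (sq_nonneg c) (sq_nonneg (P.u x)), mul_nonneg (sq_nonneg c) (sq_nonneg ‖gradient P.u x‖)]
    have e6 : t ^ 2 * (P.u x - c) ^ 2 ≤ t ^ 2 * (2 * (1 + c ^ 2) * (P.u x ^ 2 + ‖gradient P.u x‖ ^ 2 + 1)) := by gcongr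
    nlinarith [sq_nonneg ‖gradient P.u x‖]
  -- energies
  have iD := S.int_g2 y r
  have iC : IntegrableOn (fun x => inner ℝ (gradient P.u x) (gv P y c r x)) (ball y r) := by
    refine S.int_dom (1 + C) (hgm.inner hgvm) (ae_of_all _ fun x _ => ?_)
    have h1 := gv_bound (P := P) y c hr x
    have h2 := abs_real_inner_le_norm (gradient P.u x) (gv P y c r x)
    have := hM x
    nlinarith [sq_nonneg (‖gradient P.u x‖ - ‖gv P y c r x‖), sq_nonneg ‖gradient P.u x‖, sq_nonneg ‖gv P y c r x‖]
  have iV : IntegrableOn (fun x => ‖gv P y c r x‖ ^ 2) (ball y r) := by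
    refine S.int_dom C (hgvm.norm.pow 2) (ae_of_all _ fun x _ => ?_)
    rw [abs_of_nonneg (sq_nonneg _)]
    exact gv_bound (P := P) y c hr x
  have key : ∫ x in ball y r, inner ℝ (gradient P.u x) (gv P y c r x) = 0 := by
    have : 2 * ∫ x in ball y r, inner ℝ (gradient P.u x) (gv P y c r x) = 0 := by
      refine quad_zero (b := ∫ x in ball y r, ‖gv P y c r x‖ ^ 2) zero_lt_one fun t _ => ?_
      let Q : MSPair 3 := ⟨P.K, fun x => P.u x + t * ((P.u x - c) * eta r (‖x - y‖ ^ 2)), P.closed,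
        locLipOn_of (hlip t), hint t⟩
      have h := S.min_real (Q := Q) hr rfl (fun x hx => by
        have : x ∉ ball y r := fun h => hx (Or.inl (Or.inl h))
        simp only [Q, etax_zero hr this]; ring) S.vol_K (hi t y r) (S.muK_lt_top y r).ne
      have h2 : ∫ x in ball y r, ‖gradient Q.u x‖ ^ 2 = (∫ x in ball y r, ‖gradient P.u x‖ ^ 2) +
          (t * (2 * ∫ x in ball y r, inner ℝ (gradient P.u x) (gv P y c r x)) + t ^ 2 * ∫ x in ball y r, ‖gv P y c r x‖ ^ 2) := by
        rw [← integral_const_mul, ← integral_const_mul, ← integral_const_mul, ← integral_add, ← integral_add]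
        · refine integral_congr_ae (ae_restrict_of_ae ?_)
          filter_upwards [hgrad t] with x hx
          simp only [Q]
          rw [hx, norm_add_sq_real, norm_smul, mul_pow, Real.norm_eq_abs, sq_abs, inner_smul_right]
          ring
        · exact iD
        · exact ((iC.const_mul 2).const_mul t).add (iV.const_mul _)
        · exact (iC.const_mul 2).const_mul t
        · exact iV.const_mul _
      rw [h2] at h
      simp only [Q] at h
      linarith
    linarith
  have i1 : IntegrableOn (fun x => eta r (‖x - y‖ ^ 2) * ‖gradient P.u x‖ ^ 2) (ball y r) := by
    refine S.int_dom 1 ((contDiff_etax r y).continuous.aestronglyMeasurable.mul (hgm.norm.pow 2)) (ae_of_all _ fun x _ => ?_)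
    have e1 := eta_nonneg r (‖x - y‖ ^ 2)
    have e2 := eta_le_one r (sq_nonneg ‖x - y‖)
    rw [abs_of_nonneg (by positivity), one_mul]
    exact (mul_le_of_le_one_left (sq_nonneg _) e2).trans (hM x)
  have e : ∀ x, inner ℝ (gradient P.u x) (gv P y c r x) = eta r (‖x - y‖ ^ 2) * ‖gradient P.u x‖ ^ 2
      - 2 * (om r (‖x - y‖ ^ 2) * (P.u x - c) * inner ℝ (x - y) (gradient P.u x)) := by
    intro x
    unfold gv
    rw [inner_sub_right, inner_smul_right, inner_smul_right, real_inner_self_eq_norm_sq,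
      real_inner_comm (x - y)]
    ring
  have i2 : IntegrableOn (fun x => 2 * (om r (‖x - y‖ ^ 2) * (P.u x - c) * inner ℝ (x - y) (gradient P.u x))) (ball y r) := by
    have := i1.sub iC
    refine this.congr (ae_of_all _ fun x => ?_)
    simp only [e, Pi.sub_apply]; ring
  simp only [e] at key
  rw [integral_sub i1 i2, integral_const_mul, setInt_eq, setInt_eq] at key
  · unfold Dt; linarith
  · intro x hx; rw [omx_zero hr hx]; ring
  · intro x hx; rw [etax_zero hr hx]; ring

end Setup

end

section

section flow
variable {V : Type*} [NormedAddCommGroup V] [InnerProductSpace ℝ V]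

/-- radial vector field -/
def rX (r : ℝ) (y x : V) : V := eta r (‖x - y‖ ^ 2) • (x - y)
/-- radial flow -/
def rF (t r : ℝ) (y x : V) : V := x + t • rX r y x
/-- rank-one perturbation of a multiple of the identity -/
def rk (α β : ℝ) (ξ : V) : V →L[ℝ] V :=
  α • ContinuousLinearMap.id ℝ V + β • (innerSL ℝ ξ).smulRight ξ

theorem rk_apply (α β : ℝ) (ξ v : V) : rk α β ξ v = α • v + (β * inner ℝ ξ v) • ξ := by
  simp [rk, smul_smul]

theorem hasFDerivAt_rX (r : ℝ) (y x : V) :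
    HasFDerivAt (rX r y) (rk (eta r (‖x - y‖ ^ 2)) (-(2 * om r (‖x - y‖ ^ 2))) (x - y)) x := by
  have h := (hasFDerivAt_etax r y x).smul ((hasFDerivAt_id x).sub_const y)
  refine h.congr_fderiv ?_
  ext v
  simp [rk_apply, inner_sub_left]

theorem rX_lip {r : ℝ} (hr : 0 < r) (y : V) : LipschitzWith 5 (rX r y) := by
  refine lipschitzWith_of_nnnorm_fderiv_le (𝕜 := ℝ) (fun x => (hasFDerivAt_rX r y x).differentiableAt) fun x => ?_
  rw [(hasFDerivAt_rX r y x).fderiv, ← NNReal.coe_le_coe, coe_nnnorm]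
  refine ContinuousLinearMap.opNorm_le_bound _ (by positivity) fun v => ?_
  rw [rk_apply]
  have h1 := eta_le_one r (sq_nonneg ‖x - y‖)
  have h2 := om_mul_le hr (sq_nonneg ‖x - y‖)
  have h3 := om_nonneg r (‖x - y‖ ^ 2)
  have h4 := abs_real_inner_le_norm (x - y) v
  refine (norm_add_le _ _).trans ?_
  rw [norm_smul, norm_smul, Real.norm_of_nonneg (eta_nonneg _ _), Real.norm_eq_abs, abs_mul, abs_neg,
    abs_of_nonneg (by positivity : 0 ≤ 2 * om r (‖x - y‖ ^ 2))]
  calc _ ≤ 1 * ‖v‖ + 2 * om r (‖x - y‖ ^ 2) * (‖x - y‖ * ‖v‖) * ‖x - y‖ := by gcongr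
    _ = 1 * ‖v‖ + 2 * (om r (‖x - y‖ ^ 2) * ‖x - y‖ ^ 2) * ‖v‖ := by ring
    _ ≤ 1 * ‖v‖ + 2 * 2 * ‖v‖ := by gcongr
    _ = _ := by norm_num; ring

theorem hasFDerivAt_rF (t r : ℝ) (y x : V) :
    HasFDerivAt (rF t r y) (rk (1 + t * eta r (‖x - y‖ ^ 2)) (-(2 * t * om r (‖x - y‖ ^ 2))) (x - y)) x := by
  have h := (hasFDerivAt_id x).add ((hasFDerivAt_rX r y x).const_smul t)
  refine h.congr_fderiv ?_
  ext v
  simp only [_root_.add_apply, _root_.smul_apply, rk_apply,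
    ContinuousLinearMap.id_apply]
  module

theorem rF_off (t : ℝ) {r : ℝ} (hr : 0 < r) {y x : V} (h : x ∉ ball y r) : rF t r y x = x := by
  simp [rF, rX, etax_zero hr h]

theorem tX_lip {t r : ℝ} (ht : |t| ≤ 1 / 10) (hr : 0 < r) (y a b : V) :
    ‖t • rX r y a - t • rX r y b‖ ≤ 1 / 2 * ‖a - b‖ := by
  rw [← smul_sub, norm_smul, Real.norm_eq_abs]
  have := (rX_lip hr y).dist_le_mul a b
  rw [dist_eq_norm, dist_eq_norm] at this
  have h5 : ((5 : ℝ≥0) : ℝ) = 5 := by norm_num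
  rw [h5] at this
  have h0 := abs_nonneg t
  have h1 := norm_nonneg (a - b)
  calc _ ≤ 1 / 10 * (5 * ‖a - b‖) := by gcongr
    _ = _ := by ring

theorem rF_homeo [CompleteSpace V] {t r : ℝ} (ht : |t| ≤ 1 / 10) (hr : 0 < r) (y : V) :
    ∃ h : V ≃ₜ V, (∀ x, h x = rF t r y x) ∧ LipschitzWith 2 h.symm := by
  have hanti : AntilipschitzWith 2 (rF t r y) := by
    refine AntilipschitzWith.of_le_mul_dist fun a b => ?_
    have := tX_lip ht hr y a b
    rw [dist_eq_norm, dist_eq_norm]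
    have h2 : a - b = (rF t r y a - rF t r y b) - (t • rX r y a - t • rX r y b) := by
      unfold rF; abel
    have h3 : ‖a - b‖ ≤ ‖rF t r y a - rF t r y b‖ + ‖t • rX r y a - t • rX r y b‖ := by
      conv_lhs => rw [h2]
      exact norm_sub_le _ _
    norm_num
    linarith
  have hsurj : Function.Surjective (rF t r y) := by
    intro z
    have hc : ContractingWith (1 / 2) (fun x => z - t • rX r y x) := by
      refine ⟨by norm_num, LipschitzWith.of_dist_le_mul fun a b => ?_⟩
      have := tX_lip ht hr y a b
      rw [dist_eq_norm, dist_eq_norm, sub_sub_sub_cancel_left, norm_sub_rev]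
      simpa using this
    refine ⟨hc.fixedPoint, ?_⟩
    have := hc.fixedPoint_isFixedPt
    unfold Function.IsFixedPt at this
    unfold rF
    simp only at this
    exact (sub_eq_iff_eq_add.1 this).symm
  have hcont : Continuous (rF t r y) := by
    unfold rF
    have := (rX_lip hr y).continuous
    fun_prop
  let e := Equiv.ofBijective (rF t r y) ⟨hanti.injective, hsurj⟩
  have hl : LipschitzWith 2 e.symm := by
    exact hanti.to_rightInverse e.right_inv
  exact ⟨⟨e, hcont, hl.continuous⟩, fun x => rfl, hl⟩

theorem rF_image {t r s : ℝ} (hr : 0 < r) (hrs : r ≤ s) (y : V) (h : V ≃ₜ V)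
    (hh : ∀ x, h x = rF t r y x) : h '' ball y s = ball y s := by
  have key : ∀ x, x ∉ ball y s → h x = x := fun x hx => by
    rw [hh, rF_off t hr fun h => hx (ball_subset_ball hrs h)]
  have : h '' (ball y s)ᶜ = (ball y s)ᶜ := by
    ext x
    constructor
    · rintro ⟨z, hz, rfl⟩
      rwa [key z hz]
    · intro hx; exact ⟨x, hx, key x hx⟩
  rw [image_compl_eq h.bijective] at this
  exact compl_injective this

theorem rk_det [FiniteDimensional ℝ V] {α : ℝ} (hα : α ≠ 0) (β : ℝ) (ξ : V) :
    (rk α β ξ).det = α ^ Module.finrank ℝ V * (1 + β / α * ‖ξ‖ ^ 2) := by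
  have h : (rk α β ξ : V →ₗ[ℝ] V) = α • LinearMap.transvection (innerSL ℝ ξ : V →ₗ[ℝ] ℝ) ((β / α) • ξ) := by
    ext v
    simp [rk_apply, LinearMap.transvection.apply, smul_smul]
    congr 1
    field_simp
  unfold ContinuousLinearMap.det
  rw [h, LinearMap.det_smul, LinearMap.transvection.det]
  congr 1
  simp

/-- the explicit inverse -/
theorem rk_comp {α β : ℝ} (hα : α ≠ 0) {ξ : V} (hγ : α + β * ‖ξ‖ ^ 2 ≠ 0) (v : V) :
    rk α β ξ (rk α⁻¹ (-(β / (α * (α + β * ‖ξ‖ ^ 2)))) ξ v) = v ∧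
    rk α⁻¹ (-(β / (α * (α + β * ‖ξ‖ ^ 2)))) ξ (rk α β ξ v) = v := by
  constructor
  all_goals
    simp only [rk_apply, inner_add_right, inner_smul_right, real_inner_self_eq_norm_sq, smul_add, smul_smul]
    rw [add_assoc, ← add_smul]
    have h1 : α * α⁻¹ = 1 := mul_inv_cancel₀ hα
    have h2 : α⁻¹ * α = 1 := inv_mul_cancel₀ hα
    simp only [h1, h2, one_smul, add_eq_left, smul_eq_zero]
    left
    field_simp
    ring

/-- linear equivalence -/
def rkE {α β : ℝ} (hα : α ≠ 0) {ξ : V} (hγ : α + β * ‖ξ‖ ^ 2 ≠ 0) : V ≃L[ℝ] V :=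
  ContinuousLinearEquiv.equivOfInverse (rk α β ξ) (rk α⁻¹ (-(β / (α * (α + β * ‖ξ‖ ^ 2)))) ξ)
    (fun v => (rk_comp hα hγ v).2) (fun v => (rk_comp hα hγ v).1)

theorem grad_symm [CompleteSpace V] {u : V → ℝ} {x : V} {α β : ℝ} {ξ : V} (h : V ≃ₜ V) (hα : α ≠ 0)
    (hγ : α + β * ‖ξ‖ ^ 2 ≠ 0)
    (hd : HasFDerivAt h (rk α β ξ) x) (hu : DifferentiableAt ℝ u x) :
    gradient (fun z => u (h.symm z)) (h x) = rk α⁻¹ (-(β / (α * (α + β * ‖ξ‖ ^ 2)))) ξ (gradient u x) := by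
  have h1 : HasFDerivAt h.symm ((rkE hα hγ).symm : V →L[ℝ] V) (h x) := by
    refine HasFDerivAt.of_local_left_inverse (f := h) (f' := rkE hα hγ) h.symm.continuous.continuousAt ?_
      (Eventually.of_forall fun z => h.apply_symm_apply z)
    rw [h.symm_apply_apply]
    exact hd
  apply HasGradientAt.gradient
  rw [hasGradientAt_iff_hasFDerivAt]
  have h2 : HasFDerivAt u (fderiv ℝ u x) (h.symm (h x)) := by
    rw [h.symm_apply_apply]; exact hu.hasFDerivAt
  refine (h2.comp _ h1).congr_fderiv ?_
  ext v
  have e : ∀ w, fderiv ℝ u x w = inner ℝ (gradient u x) w := fun w => by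
    rw [hu.hasGradientAt.hasFDerivAt.fderiv]; simp
  have e2 : ((rkE hα hγ).symm : V →L[ℝ] V) v = rk α⁻¹ (-(β / (α * (α + β * ‖ξ‖ ^ 2)))) ξ v := rfl
  rw [ContinuousLinearMap.comp_apply, e, e2]
  simp only [rk_apply, inner_add_right, inner_smul_right, InnerProductSpace.toDual_apply_apply,
    inner_add_left, inner_smul_left]
  rw [real_inner_comm ξ]
  simp
  ring

end flow

theorem quad_alg {t e o q : ℝ} (ht : |t| ≤ 1 / 10) (he0 : 0 ≤ e) (he1 : e ≤ 1) (ho : 0 ≤ o)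
    (hq : 0 ≤ q) (hoq : o * q ≤ 2) :
    9 / 10 ≤ 1 + t * e ∧ 1 / 2 ≤ (1 + t * e) + -(2 * t * o) * q ∧ 1 + t * e ≤ 11 / 10 ∧
      (1 + t * e) + -(2 * t * o) * q ≤ 2 := by
  have h0 : 0 ≤ o * q := by positivity
  have := abs_le.1 ht
  refine ⟨?_, ?_, ?_, ?_⟩ <;> nlinarith

theorem rk_norm {V : Type*} [NormedAddCommGroup V] [InnerProductSpace ℝ V] {α β : ℝ} (hα : α ≠ 0)
    {ξ : V} (hγ : α + β * ‖ξ‖ ^ 2 ≠ 0) (g : V) :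
    (α ^ 3 * (1 + β / α * ‖ξ‖ ^ 2)) * ‖rk α⁻¹ (-(β / (α * (α + β * ‖ξ‖ ^ 2)))) ξ g‖ ^ 2
      = (α + β * ‖ξ‖ ^ 2) * ‖g‖ ^ 2 - 2 * β * (inner ℝ ξ g) ^ 2
        + β ^ 2 * ‖ξ‖ ^ 2 * (inner ℝ ξ g) ^ 2 / (α + β * ‖ξ‖ ^ 2) := by
  rw [rk_apply, norm_add_sq_real, norm_smul, norm_smul, mul_pow, mul_pow, Real.norm_eq_abs, Real.norm_eq_abs, sq_abs, sq_abs,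
    inner_smul_left, inner_smul_right, real_inner_comm ξ g]
  simp only [conj_trivial]
  set q := ‖ξ‖ ^ 2
  set s := inner ℝ ξ g
  set G := ‖g‖ ^ 2
  field_simp
  ring

end

section

theorem integral_comb {α : Type*} [MeasurableSpace α] {μ : Measure α} {f g h : α → ℝ} {t s : ℝ}
    (hf : Integrable f μ) (hg : Integrable g μ) (hh : Integrable h μ) :
    ∫ x, (f x + t * g x + s * h x) ∂μ = (∫ x, f x ∂μ) + t * (∫ x, g x ∂μ) + s * ∫ x, h x ∂μ := by
  have h1 : Integrable (fun x => f x + t * g x) μ := hf.add (hg.const_mul t)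
  rw [integral_add h1 (hh.const_mul s), integral_add hf (hg.const_mul t), integral_const_mul,
    integral_const_mul]

namespace Setup
variable {P : MSPair 3} {J : Rn 2 →ₗᵢ[ℝ] Rn 3} {p : Rn 3} {k : Set (Rn 2)}

/-- inner variation integrand -/
def iv (P : MSPair 3) (y : Rn 3) (r : ℝ) (x : Rn 3) : ℝ :=
  (eta r (‖x - y‖ ^ 2) - 2 * om r (‖x - y‖ ^ 2) * ‖x - y‖ ^ 2) * ‖gradient P.u x‖ ^ 2
    + 4 * om r (‖x - y‖ ^ 2) * (inner ℝ (x - y) (gradient P.u x)) ^ 2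

theorem rF_iota (J : Rn 2 →ₗᵢ[ℝ] Rn 3) (p : Rn 3) (t r : ℝ) (b a : Rn 2) :
    rF t r (p + J b) (p + J a) = p + J (rF t r b a) := by
  simp only [rF, rX, add_sub_add_left_eq_sub, ← map_sub, J.norm_map, map_add, map_smul, add_assoc]

theorem iv_le {y : Rn 3} {r : ℝ} (hr : 0 < r) (x : Rn 3) : |iv P y r x| ≤ 16 * ‖gradient P.u x‖ ^ 2 := by
  unfold iv
  have h1 := eta_le_one r (sq_nonneg ‖x - y‖)
  have h1' := eta_nonneg r (‖x - y‖ ^ 2)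
  have h2 := om_mul_le hr (sq_nonneg ‖x - y‖)
  have h3 := om_nonneg r (‖x - y‖ ^ 2)
  have h4 := abs_real_inner_le_norm (x - y) (gradient P.u x)
  have h5 : (inner ℝ (x - y) (gradient P.u x)) ^ 2 ≤ ‖x - y‖ ^ 2 * ‖gradient P.u x‖ ^ 2 := by
    rw [← sq_abs, ← mul_pow]; gcongr
  have h6 : om r (‖x - y‖ ^ 2) * (inner ℝ (x - y) (gradient P.u x)) ^ 2 ≤ 2 * ‖gradient P.u x‖ ^ 2 := by
    calc _ ≤ om r (‖x - y‖ ^ 2) * (‖x - y‖ ^ 2 * ‖gradient P.u x‖ ^ 2) := by gcongr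
      _ = (om r (‖x - y‖ ^ 2) * ‖x - y‖ ^ 2) * ‖gradient P.u x‖ ^ 2 := by ring
      _ ≤ _ := by gcongr
  have h7 : 0 ≤ om r (‖x - y‖ ^ 2) * (inner ℝ (x - y) (gradient P.u x)) ^ 2 := by positivity
  have h8 : 0 ≤ om r (‖x - y‖ ^ 2) * ‖x - y‖ ^ 2 := by positivity
  have hG := sq_nonneg ‖gradient P.u x‖
  rw [abs_le]
  constructor <;> nlinarith

theorem meas_etax (r : ℝ) {V : Type*} [NormedAddCommGroup V] [InnerProductSpace ℝ V] [MeasurableSpace V] [BorelSpace V] (y : V) :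
    Measurable fun x : V => eta r (‖x - y‖ ^ 2) := (contDiff_etax r y).continuous.measurable
theorem cont_omx (r : ℝ) {V : Type*} [NormedAddCommGroup V] (y : V) :
    Continuous fun x : V => om r (‖x - y‖ ^ 2) := by
  have := continuous_om r
  fun_prop
theorem meas_inner (P : MSPair 3) (y : Rn 3) : Measurable fun x => inner ℝ (x - y) (gradient P.u x) :=
  ((by fun_prop : Continuous fun x : Rn 3 => x - y).measurable).inner (grad_meas P.u)

theorem iv_meas (P : MSPair 3) (y : Rn 3) (r : ℝ) : Measurable (iv P y r) := by
  unfold iv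
  have h1 := meas_etax r y
  have h2 := (cont_omx r y).measurable
  have h3 := meas_inner P y
  have h4 := grad_meas P.u
  have h5 : Measurable fun x : Rn 3 => ‖x - y‖ := (by fun_prop : Continuous _).measurable
  exact ((h1.sub ((h2.const_mul 2).mul (h5.pow_const 2))).mul (h4.norm.pow_const 2)).add
    ((h2.const_mul 4).mul (h3.pow_const 2))

theorem iv_int (S : Setup P J p k) (y z : Rn 3) {r : ℝ} (hr : 0 < r) (s : ℝ) : IntegrableOn (iv P y r) (ball z s) := by
  refine S.int_dom 16 (iv_meas P y r).aestronglyMeasurable (ae_of_all _ fun x _ => (iv_le hr x).trans ?_)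
  nlinarith [sq_nonneg (P.u x)]

theorem inner_var (S : Setup P J p k) (b : Rn 2) {r : ℝ} (hr : 0 < r) :
    (∫ x, iv P (p + J b) r x) +
      ∫ a in k, (2 * eta r (‖a - b‖ ^ 2) - 2 * om r (‖a - b‖ ^ 2) * ‖a - b‖ ^ 2) ∂μH[2] = 0 := by
  set y := p + J b with hy
  have hw : ∀ a : Rn 2, a ∉ ball b r → (2 * eta r (‖a - b‖ ^ 2) - 2 * om r (‖a - b‖ ^ 2) * ‖a - b‖ ^ 2) = 0 := by
    intro a ha; rw [etax_zero hr ha, omx_zero hr ha]; ring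
  have e1 : ∫ x, iv P y r x = ∫ x in ball y r, iv P y r x := by
    rw [setInt_eq]
    intro x hx; unfold iv; rw [etax_zero hr hx, omx_zero hr hx]; ring
  have e2 : ∫ a in k, (2 * eta r (‖a - b‖ ^ 2) - 2 * om r (‖a - b‖ ^ 2) * ‖a - b‖ ^ 2) ∂μH[2]
      = ∫ a in k ∩ ball b r, (2 * eta r (‖a - b‖ ^ 2) - 2 * om r (‖a - b‖ ^ 2) * ‖a - b‖ ^ 2) ∂μH[2] := by
    rw [← setIntegral_eq_of_subset_of_forall_sdiff_eq_zero (s := k ∩ ball b r) (t := k) S.hk.measurableSet inter_subset_left]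
    rintro a ⟨ha, hna⟩
    exact hw a fun h => hna ⟨ha, h⟩
  rw [e1, e2]
  refine quad_zero (b := 32 * (∫ x in ball y r, ‖gradient P.u x‖ ^ 2) + (μH[2] : Measure (Rn 2)).real (k ∩ ball b r))
    (δ := 1 / 10) (by norm_num) fun t ht => ?_
  obtain ⟨h, hh, hl⟩ := rF_homeo ht hr y
  obtain ⟨φ, hφ, -⟩ := rF_homeo ht hr b
  have hιφ : ∀ a, h (p + J a) = p + J (φ a) := fun a => by rw [hh, hφ, hy, rF_iota]
  have hKim : h '' P.K = (fun a => p + J a) '' (φ '' k) := by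
    rw [S.hK, image_image, image_image]; exact image_congr fun a _ => hιφ a
  have hoff : ∀ x, x ∉ ball y r → h x = x := fun x hx => by rw [hh, rF_off t hr hx]
  have hoff' : ∀ x, x ∉ ball y r → h.symm x = x := fun x hx => by
    rw [Homeomorph.symm_apply_eq, hoff x hx]
  have hd : ∀ x, HasFDerivAt h (rk (1 + t * eta r (‖x - y‖ ^ 2)) (-(2 * t * om r (‖x - y‖ ^ 2))) (x - y)) x := by
    intro x
    have : (h : Rn 3 → Rn 3) = rF t r y := funext hh
    rw [this]; exact hasFDerivAt_rF t r y x
  have hdφ : ∀ x, HasFDerivAt φ (rk (1 + t * eta r (‖x - b‖ ^ 2)) (-(2 * t * om r (‖x - b‖ ^ 2))) (x - b)) x := by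
    intro x
    have : (φ : Rn 2 → Rn 2) = rF t r b := funext hφ
    rw [this]; exact hasFDerivAt_rF t r b x
  have hq : ∀ {V : Type} [NormedAddCommGroup V] (v : V), 9 / 10 ≤ 1 + t * eta r (‖v‖ ^ 2) ∧
      1 / 2 ≤ (1 + t * eta r (‖v‖ ^ 2)) + -(2 * t * om r (‖v‖ ^ 2)) * ‖v‖ ^ 2 ∧ 1 + t * eta r (‖v‖ ^ 2) ≤ 11 / 10 ∧
      (1 + t * eta r (‖v‖ ^ 2)) + -(2 * t * om r (‖v‖ ^ 2)) * ‖v‖ ^ 2 ≤ 2 := fun v =>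
    quad_alg ht (eta_nonneg _ _) (eta_le_one r (sq_nonneg _)) (om_nonneg _ _) (sq_nonneg _) (om_mul_le hr (sq_nonneg _))
  set dt : Rn 3 → ℝ := fun x => (1 + t * eta r (‖x - y‖ ^ 2)) ^ 3 *
    (1 + (-(2 * t * om r (‖x - y‖ ^ 2))) / (1 + t * eta r (‖x - y‖ ^ 2)) * ‖x - y‖ ^ 2) with hdt
  have hdt_eq : ∀ x, dt x = (1 + t * eta r (‖x - y‖ ^ 2)) ^ 2 * ((1 + t * eta r (‖x - y‖ ^ 2)) + -(2 * t * om r (‖x - y‖ ^ 2)) * ‖x - y‖ ^ 2) := by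
    intro x
    have := (hq (x - y)).1
    have h0 : 1 + t * eta r (‖x - y‖ ^ 2) ≠ 0 := by linarith
    simp only [hdt]
    field_simp
  have hdt_nn : ∀ x, 0 ≤ dt x := fun x => by
    rw [hdt_eq]; obtain ⟨q1, q2, -, -⟩ := hq (x - y)
    exact mul_nonneg (sq_nonneg _) (by linarith)
  have hdt_le : ∀ x, dt x ≤ 3 := fun x => by
    rw [hdt_eq]; obtain ⟨q1, q2, q3, q4⟩ := hq (x - y)
    calc _ ≤ (11 / 10 : ℝ) ^ 2 * 2 := by gcongr
      _ ≤ 3 := by norm_num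
  have hdet : ∀ x, |(rk (1 + t * eta r (‖x - y‖ ^ 2)) (-(2 * t * om r (‖x - y‖ ^ 2))) (x - y)).det| = dt x := by
    intro x
    have := (hq (x - y)).1
    rw [rk_det (by linarith), finrank_euclideanSpace_fin]
    exact abs_of_nonneg (hdt_nn x)
  have hdt_meas : Measurable dt := by
    have h1 := meas_etax r y
    have h2 := (cont_omx r y).measurable
    have h5 : Measurable fun x : Rn 3 => ‖x - y‖ := (by fun_prop : Continuous _).measurable
    fun_prop
  set v : Rn 3 → ℝ := fun z => P.u (h.symm z) with hv
  have hgr : ∀ᵐ x, dt x * ‖gradient v (h x)‖ ^ 2 ≤ ‖gradient P.u x‖ ^ 2 + t * iv P y r x + 32 * t ^ 2 * ‖gradient P.u x‖ ^ 2 := by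
    filter_upwards [S.aediff] with x hx
    obtain ⟨q1, q2, q3, q4⟩ := hq (x - y)
    have hα : 1 + t * eta r (‖x - y‖ ^ 2) ≠ 0 := by linarith
    have hγ : (1 + t * eta r (‖x - y‖ ^ 2)) + -(2 * t * om r (‖x - y‖ ^ 2)) * ‖x - y‖ ^ 2 ≠ 0 := by linarith
    rw [grad_symm h hα hγ (hd x) hx, hdt, rk_norm hα hγ]
    have h5 : (inner ℝ (x - y) (gradient P.u x)) ^ 2 ≤ ‖x - y‖ ^ 2 * ‖gradient P.u x‖ ^ 2 := by
      rw [← sq_abs, ← mul_pow]; gcongr; exact abs_real_inner_le_norm (x - y) (gradient P.u x)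
    have h2 := om_mul_le hr (sq_nonneg ‖x - y‖)
    have h3 := om_nonneg r (‖x - y‖ ^ 2)
    have h6 : (-(2 * t * om r (‖x - y‖ ^ 2))) ^ 2 * ‖x - y‖ ^ 2 * (inner ℝ (x - y) (gradient P.u x)) ^ 2 /
        ((1 + t * eta r (‖x - y‖ ^ 2)) + -(2 * t * om r (‖x - y‖ ^ 2)) * ‖x - y‖ ^ 2) ≤ 32 * t ^ 2 * ‖gradient P.u x‖ ^ 2 := by
      rw [div_le_iff₀ (by linarith)]
      calc _ ≤ (-(2 * t * om r (‖x - y‖ ^ 2))) ^ 2 * ‖x - y‖ ^ 2 * (‖x - y‖ ^ 2 * ‖gradient P.u x‖ ^ 2) := by gcongr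
        _ = 4 * t ^ 2 * (om r (‖x - y‖ ^ 2) * ‖x - y‖ ^ 2) ^ 2 * ‖gradient P.u x‖ ^ 2 := by ring
        _ ≤ 4 * t ^ 2 * 2 ^ 2 * ‖gradient P.u x‖ ^ 2 := by gcongr
        _ = 32 * t ^ 2 * ‖gradient P.u x‖ ^ 2 * (1 / 2) := by ring
        _ ≤ _ := by gcongr
    unfold iv
    linarith
  have hvm : AEStronglyMeasurable (fun x => ‖gradient v (h x)‖ ^ 2) volume :=
    (((grad_meas v).comp h.measurable).norm.pow_const 2).aestronglyMeasurable
  -- integrability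
  have hgr2 : ∀ᵐ x, |dt x * ‖gradient v (h x)‖ ^ 2| ≤ 10 * (P.u x ^ 2 + ‖gradient P.u x‖ ^ 2 + 1) := by
    filter_upwards [hgr] with x hx
    rw [abs_of_nonneg (mul_nonneg (hdt_nn x) (sq_nonneg _))]
    refine hx.trans ?_
    have h1 := iv_le (P := P) (y := y) hr x
    have h2 : t * iv P y r x ≤ 1 / 10 * (16 * ‖gradient P.u x‖ ^ 2) := by
      refine (le_abs_self _).trans ?_
      rw [abs_mul]; gcongr
    have h3 : t ^ 2 ≤ 1 / 100 := by rw [← sq_abs]; nlinarith [abs_nonneg t]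
    nlinarith [sq_nonneg (P.u x), sq_nonneg ‖gradient P.u x‖]
  have hig : ∀ s, r ≤ s → IntegrableOn (fun x => ‖gradient v x‖ ^ 2) (ball y s) := by
    intro s hs
    rw [← rF_image hr hs y h hh, integrableOn_image_iff_integrableOn_abs_det_fderiv_smul volume measurableSet_ball
      (fun x _ => (hd x).hasFDerivWithinAt) h.injective.injOn]
    simp only [hdet, smul_eq_mul]
    refine S.int_dom 10 (hdt_meas.aestronglyMeasurable.mul hvm) ?_
    filter_upwards [hgr2] with x hx _ using hx
  have hiu : ∀ s, r ≤ s → IntegrableOn (fun x => v x ^ 2) (ball y s) := by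
    intro s hs
    rw [← rF_image hr hs y h hh, integrableOn_image_iff_integrableOn_abs_det_fderiv_smul volume measurableSet_ball
      (fun x _ => (hd x).hasFDerivWithinAt) h.injective.injOn]
    simp only [hdet, smul_eq_mul, hv, h.symm_apply_apply]
    refine S.int_dom 3 (hdt_meas.aestronglyMeasurable.mul (S.aesm.pow 2)) (ae_of_all _ fun x _ => ?_)
    rw [abs_of_nonneg (mul_nonneg (hdt_nn x) (sq_nonneg _))]
    have := hdt_le x
    nlinarith [sq_nonneg (P.u x), sq_nonneg ‖gradient P.u x‖]
  have hlip : LocallyLipschitzOn (h '' P.K)ᶜ v := by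
    intro z hz
    have hz' : h.symm z ∈ P.Kᶜ := fun hm => hz ⟨_, hm, h.apply_symm_apply z⟩
    obtain ⟨C, s, hs, hC⟩ := locLip P hz'
    refine ⟨C * 2, h.symm ⁻¹' s, ?_, hC.comp (hl.lipschitzOnWith) (fun x hx => hx)⟩
    have : Tendsto h.symm (𝓝[(h '' P.K)ᶜ] z) (𝓝[P.Kᶜ] (h.symm z)) :=
      h.symm.continuous.continuousWithinAt.tendsto_nhdsWithin (fun x hx hm => hx ⟨_, hm, h.apply_symm_apply x⟩)
    exact this hs
  let Q : MSPair 3 := ⟨h '' P.K, v, h.isClosedMap _ P.closed, locLipOn_of hlip, fun R hR => by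
    have h1 := (hiu (r + (R + dist 0 y)) (by linarith [dist_nonneg (x := (0 : Rn 3)) (y := y)])).add
      (hig (r + (R + dist 0 y)) (by linarith [dist_nonneg (x := (0 : Rn 3)) (y := y)]))
    refine IntegrableOn.mono_set (t := ball y (r + (R + dist 0 y))) h1 ?_
    exact sdiff_subset.trans (ball_subset_ball' (by linarith))⟩
  have hmeas : μH[((3:ℕ) : ℝ) - 1] (h '' P.K ∩ ball y r) = μH[2] (φ '' (k ∩ ball b r)) := by
    rw [hKim, hy, inter_ball, muH_image, image_inter φ.injective, rF_image hr le_rfl b φ hφ]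
  have hPmeas : μH[((3:ℕ) : ℝ) - 1] (P.K ∩ ball y r) = μH[2] (k ∩ ball b r) := by
    rw [S.hK, hy, inter_ball, muH_image]
  have hfin : μH[2] (k ∩ ball b r) ≠ ∞ := ((measure_mono inter_subset_right).trans_lt measure_ball_lt_top).ne
  have hfinφ : μH[2] (φ '' (k ∩ ball b r)) ≠ ∞ := by
    rw [image_inter φ.injective, rF_image hr le_rfl b φ hφ]
    exact ((measure_mono inter_subset_right).trans_lt measure_ball_lt_top).ne
  have hm := S.min_real (Q := Q) (y := y) hr (by
      ext x; simp only [Q]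
      constructor
      · rintro ⟨⟨z, hz, rfl⟩, hx⟩
        refine ⟨?_, hx⟩
        have := hoff' _ hx
        rw [h.symm_apply_apply] at this
        rwa [← this]
      · rintro ⟨hx, hxb⟩
        exact ⟨⟨x, hx, hoff x hxb⟩, hxb⟩)
    (fun x hx => by
      have : x ∉ ball y r := fun h => hx (Or.inl (Or.inl h))
      simp only [Q, hv, hoff' x this])
    (by simp only [Q]; rw [hKim]; exact measure_mono_null (image_subset_range _ _) (plane_null J p))
    (hig r le_rfl) (by simp only [Q]; rw [hmeas]; exact hfinφ)
  simp only [Q] at hm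
  rw [hmeas, hPmeas] at hm
  -- volume part
  have hvol : ∫ x in ball y r, ‖gradient v x‖ ^ 2 ≤ (∫ x in ball y r, ‖gradient P.u x‖ ^ 2)
      + t * (∫ x in ball y r, iv P y r x) + t ^ 2 * (32 * ∫ x in ball y r, ‖gradient P.u x‖ ^ 2) := by
    have e := integral_image_eq_integral_abs_det_fderiv_smul volume (measurableSet_ball (x := y) (ε := r))
      (fun x _ => (hd x).hasFDerivWithinAt) h.injective.injOn (fun x => ‖gradient v x‖ ^ 2)
    rw [rF_image hr le_rfl y h hh] at e
    rw [e]
    simp only [hdet, smul_eq_mul]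
    have i1 := S.int_g2 y r
    have i2 := S.iv_int y y hr r
    calc _ ≤ ∫ x in ball y r, (‖gradient P.u x‖ ^ 2 + t * iv P y r x + t ^ 2 * (32 * ‖gradient P.u x‖ ^ 2)) := by
          refine integral_mono_ae ?_ ((i1.add (i2.const_mul t)).add ((i1.const_mul 32).const_mul (t ^ 2))) ?_
          · refine S.int_dom 10 (hdt_meas.aestronglyMeasurable.mul hvm) ?_
            filter_upwards [hgr2] with x hx _ using hx
          · refine ae_restrict_of_ae ?_
            filter_upwards [hgr] with x hx
            linarith
      _ = _ := by
          rw [integral_comb i1 i2 (i1.const_mul 32), integral_const_mul]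
  have harea : (μH[2] (φ '' (k ∩ ball b r))).toReal ≤ (μH[2] (k ∩ ball b r)).toReal +
      t * (∫ a in k ∩ ball b r, (2 * eta r (‖a - b‖ ^ 2) - 2 * om r (‖a - b‖ ^ 2) * ‖a - b‖ ^ 2) ∂μH[2]) +
      t ^ 2 * (μH[2] (k ∩ ball b r)).toReal := by
    have e := integral_image_eq_integral_abs_det_fderiv_smul (μH[2] : Measure (Rn 2)) (S.hk.measurableSet.inter (measurableSet_ball (x := b) (ε := r)))
      (fun x _ => (hdφ x).hasFDerivWithinAt) φ.injective.injOn (fun x => (1 : ℝ))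
    rw [setIntegral_const, smul_eq_mul, mul_one, Measure.real] at e
    rw [e]
    have i0 : IntegrableOn (fun _ : Rn 2 => (1 : ℝ)) (k ∩ ball b r) μH[2] := integrableOn_const hfin
    have i1 : IntegrableOn (fun a : Rn 2 => (2 * eta r (‖a - b‖ ^ 2) - 2 * om r (‖a - b‖ ^ 2) * ‖a - b‖ ^ 2)) (k ∩ ball b r) μH[2] := by
      refine (i0.const_mul 4).mono' ?_ (ae_of_all _ fun a => ?_)
      · have h1 := (contDiff_etax r b).continuous
        have h2 := cont_omx r b
        exact (by fun_prop : Continuous fun a : Rn 2 => (2 * eta r (‖a - b‖ ^ 2) - 2 * om r (‖a - b‖ ^ 2) * ‖a - b‖ ^ 2)).aestronglyMeasurable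
      · have h1 := eta_le_one r (sq_nonneg ‖a - b‖)
        have h1' := eta_nonneg r (‖a - b‖ ^ 2)
        have h2 := om_mul_le hr (sq_nonneg ‖a - b‖)
        have h3 : 0 ≤ om r (‖a - b‖ ^ 2) * ‖a - b‖ ^ 2 := mul_nonneg (om_nonneg _ _) (sq_nonneg _)
        rw [Real.norm_eq_abs, abs_le]; constructor <;> linarith
    have hpt : ∀ a : Rn 2, |(rk (1 + t * eta r (‖a - b‖ ^ 2)) (-(2 * t * om r (‖a - b‖ ^ 2))) (a - b)).det| • (1:ℝ) ≤
        1 + t * (2 * eta r (‖a - b‖ ^ 2) - 2 * om r (‖a - b‖ ^ 2) * ‖a - b‖ ^ 2) + t ^ 2 * 1 ∧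
        0 ≤ (rk (1 + t * eta r (‖a - b‖ ^ 2)) (-(2 * t * om r (‖a - b‖ ^ 2))) (a - b)).det ∧
        (rk (1 + t * eta r (‖a - b‖ ^ 2)) (-(2 * t * om r (‖a - b‖ ^ 2))) (a - b)).det
          = (1 + t * eta r (‖a - b‖ ^ 2)) * ((1 + t * eta r (‖a - b‖ ^ 2)) + -(2 * t * om r (‖a - b‖ ^ 2)) * ‖a - b‖ ^ 2) := by
      intro a
      obtain ⟨q1, q2, q3, q4⟩ := hq (a - b)
      have h0 : 1 + t * eta r (‖a - b‖ ^ 2) ≠ 0 := by linarith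
      have e : (rk (1 + t * eta r (‖a - b‖ ^ 2)) (-(2 * t * om r (‖a - b‖ ^ 2))) (a - b)).det
          = (1 + t * eta r (‖a - b‖ ^ 2)) * ((1 + t * eta r (‖a - b‖ ^ 2)) + -(2 * t * om r (‖a - b‖ ^ 2)) * ‖a - b‖ ^ 2) := by
        rw [rk_det h0, finrank_euclideanSpace_fin]
        field_simp
      have hnn : 0 ≤ (rk (1 + t * eta r (‖a - b‖ ^ 2)) (-(2 * t * om r (‖a - b‖ ^ 2))) (a - b)).det := by
        rw [e]; exact mul_nonneg (by linarith) (by linarith)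
      refine ⟨?_, hnn, e⟩
      rw [abs_of_nonneg hnn, e, smul_eq_mul, mul_one]
      have h1 := eta_le_one r (sq_nonneg ‖a - b‖)
      have h1' := eta_nonneg r (‖a - b‖ ^ 2)
      have h3 : 0 ≤ om r (‖a - b‖ ^ 2) * ‖a - b‖ ^ 2 := mul_nonneg (om_nonneg _ _) (sq_nonneg _)
      have h4 : eta r (‖a - b‖ ^ 2) * (eta r (‖a - b‖ ^ 2) - 2 * (om r (‖a - b‖ ^ 2) * ‖a - b‖ ^ 2)) ≤ 1 := by nlinarith
      nlinarith [mul_le_mul_of_nonneg_left h4 (sq_nonneg t)]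
    calc _ ≤ ∫ a in k ∩ ball b r, (1 + t * (2 * eta r (‖a - b‖ ^ 2) - 2 * om r (‖a - b‖ ^ 2) * ‖a - b‖ ^ 2) + t ^ 2 * 1) ∂μH[2] := by
          refine integral_mono_of_nonneg (ae_of_all _ fun a => ?_) ((i0.add (i1.const_mul t)).add (i0.const_mul (t ^ 2))) (ae_of_all _ fun a => (hpt a).1)
          simp
      _ = _ := by
          rw [integral_comb i0 i1 i0, setIntegral_const, smul_eq_mul, mul_one]
          rfl
  unfold Measure.real
  linarith

end Setup

end

section

/-- open cube -/
def oc (y : Rn 3) (r : ℝ) : Set (Rn 3) := {x | ∀ i, |x i - y i| < r}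
/-- closed cube -/
def cc (y : Rn 3) (r : ℝ) : Set (Rn 3) := {x | ∀ i, |x i - y i| ≤ r}

theorem oc_open (y : Rn 3) (r : ℝ) : IsOpen (oc y r) := by
  have : oc y r = ⋂ i : Fin 3, {x : Rn 3 | |x i - y i| < r} := by ext; simp [oc]
  rw [this]
  exact isOpen_iInter_of_finite fun i => isOpen_lt (by fun_prop) continuous_const
theorem cc_closed (y : Rn 3) (r : ℝ) : IsClosed (cc y r) := by
  have : cc y r = ⋂ i : Fin 3, {x : Rn 3 | |x i - y i| ≤ r} := by ext; simp [cc]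
  rw [this]
  exact isClosed_iInter fun i => isClosed_le (by fun_prop) continuous_const
theorem oc_sub (y : Rn 3) (r : ℝ) : oc y r ⊆ cc y r := fun _ h i => (h i).le
theorem ball_sub_oc (y : Rn 3) (r : ℝ) : ball y r ⊆ oc y r := by
  intro x hx i
  rw [mem_ball, dist_eq_norm] at hx
  have := PiLp.norm_apply_le (x - y) i
  simp at this
  linarith
theorem cc_sub_ball (y : Rn 3) {r : ℝ} (hr : 0 < r) : cc y r ⊆ ball y (3 * r) := by
  intro x hx
  rw [mem_ball, EuclideanSpace.dist_eq]
  rw [Real.sqrt_lt' (by positivity)]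
  have : ∀ i, dist (x i) (y i) ^ 2 ≤ r ^ 2 := fun i => by
    rw [Real.dist_eq]; exact pow_le_pow_left₀ (abs_nonneg _) (hx i) 2
  calc _ ≤ ∑ i : Fin 3, r ^ 2 := Finset.sum_le_sum fun i _ => this i
    _ < _ := by simp; nlinarith [sq_nonneg r, hr, mul_pos hr hr]

/-- face parametrization -/
def fm (i : Fin 3) (c : ℝ) (z : Fin 2 → ℝ) : Rn 3 := WithLp.toLp 2 (Fin.insertNth (α := fun _ => ℝ) i c z)

theorem fm_lip (i : Fin 3) (c : ℝ) : LipschitzWith 2 (fm i c) := by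
  refine LipschitzWith.of_dist_le_mul fun a b => ?_
  have h : ∀ j, dist (fm i c a j) (fm i c b j) ≤ dist a b := by
    intro j
    have h1 := dist_le_pi_dist (Fin.insertNth (α := fun _ => ℝ) i c a) (Fin.insertNth (α := fun _ => ℝ) i c b) j
    rw [Fin.dist_insertNth_insertNth, dist_self, max_eq_right dist_nonneg] at h1
    exact h1
  rw [EuclideanSpace.dist_eq]
  refine Real.sqrt_le_iff.2 ⟨by positivity, ?_⟩
  calc _ ≤ ∑ i : Fin 3, dist a b ^ 2 := Finset.sum_le_sum fun j _ => pow_le_pow_left₀ dist_nonneg (h j) 2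
    _ ≤ _ := by simp; nlinarith [sq_nonneg (dist a b)]

theorem face_meas (i : Fin 3) (c : ℝ) (z : Fin 2 → ℝ) {r : ℝ} (hr : 0 < r) :
    μH[((3:ℕ) : ℝ) - 1] (fm i c '' Icc (fun j => z j - r) (fun j => z j + r)) ≤ ENNReal.ofReal (16 * r ^ 2) := by
  have h := (fm_lip i c).hausdorffMeasure_image_le (d := ((3:ℕ) : ℝ) - 1) (by norm_num) (Icc (fun j => z j - r) (fun j => z j + r))
  refine h.trans ?_
  have e1 : ((3:ℕ) : ℝ) - 1 = (2 : ℕ) := by norm_num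
  have e2 := hausdorffMeasure_pi_real (ι := Fin 2)
  rw [Fintype.card_fin] at e2
  rw [e1, e2, Real.volume_Icc_pi, ENNReal.rpow_natCast]
  have e3 : ∀ j : Fin 2, z j + r - (z j - r) = 2 * r := fun j => by ring
  simp only [e3, Finset.prod_const, Finset.card_univ, Fintype.card_fin]
  rw [← ENNReal.ofReal_pow (by positivity)]
  rw [show ((2 : ℝ≥0) : ℝ≥0∞) ^ 2 = ENNReal.ofReal 4 by norm_num, ← ENNReal.ofReal_mul (by norm_num)]
  apply ENNReal.ofReal_le_ofReal
  nlinarith [sq_nonneg r]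

theorem bd_sub (y : Rn 3) (r : ℝ) : cc y r \ oc y r ⊆
    ⋃ i : Fin 3, (fm i (y i - r) '' Icc (fun j => y (i.succAbove j) - r) (fun j => y (i.succAbove j) + r) ∪
      fm i (y i + r) '' Icc (fun j => y (i.succAbove j) - r) (fun j => y (i.succAbove j) + r)) := by
  rintro x ⟨hx, hxo⟩
  simp only [oc, mem_ofPred_eq, not_forall, not_lt] at hxo
  obtain ⟨i, hi⟩ := hxo
  have hi' : |x i - y i| = r := le_antisymm (hx i) hi
  rw [mem_iUnion]
  refine ⟨i, ?_⟩
  have hmem : (fun j => x (i.succAbove j)) ∈ Icc (fun j => y (i.succAbove j) - r) (fun j => y (i.succAbove j) + r) := by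
    constructor
    · intro j; have := (abs_le.1 (hx (i.succAbove j))).1; simp only; linarith
    · intro j; have := (abs_le.1 (hx (i.succAbove j))).2; simp only; linarith
  have hfm : fm i (x i) (fun j => x (i.succAbove j)) = x := by
    ext j
    simp only [fm]
    rcases Fin.eq_self_or_eq_succAbove i j with rfl | ⟨l, rfl⟩
    · simp
    · simp
  rcases abs_choice (x i - y i) with h | h
  · right
    have : y i + r = x i := by linarith
    rw [this]; exact ⟨_, hmem, hfm⟩
  · left
    have : y i - r = x i := by linarith
    rw [this]; exact ⟨_, hmem, hfm⟩

theorem bd_meas (y : Rn 3) {r : ℝ} (hr : 0 < r) :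
    μH[((3:ℕ) : ℝ) - 1] (cc y r \ oc y r) ≤ ENNReal.ofReal (96 * r ^ 2) := by
  refine (measure_mono (bd_sub y r)).trans ?_
  refine (measure_iUnion_fintype_le _ _).trans ?_
  calc _ ≤ ∑ i : Fin 3, (ENNReal.ofReal (16 * r ^ 2) + ENNReal.ofReal (16 * r ^ 2)) := by
        refine Finset.sum_le_sum fun i _ => (measure_union_le _ _).trans ?_
        exact add_le_add (face_meas i _ _ hr) (face_meas i _ _ hr)
    _ = _ := by
        rw [← ENNReal.ofReal_add (by positivity) (by positivity)]
        simp only [Finset.sum_const, Finset.card_univ, Fintype.card_fin, nsmul_eq_mul]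
        rw [show ((3 : ℕ) : ℝ≥0∞) = ENNReal.ofReal 3 by norm_num, ← ENNReal.ofReal_mul (by norm_num)]
        congr 1; ring

theorem bd_null (y : Rn 3) {r : ℝ} (hr : 0 < r) : volume (cc y r \ oc y r) = 0 := by
  have h1 : μH[(Module.finrank ℝ (Rn 3) : ℝ)] (cc y r \ oc y r) = 0 := by
    rcases Measure.hausdorffMeasure_zero_or_top (d₁ := ((3:ℕ) : ℝ) - 1) (d₂ := (Module.finrank ℝ (Rn 3) : ℝ)) (by simp) (cc y r \ oc y r) with h | h
    · exact h
    · have := bd_meas y hr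
      rw [h] at this
      exact absurd (top_le_iff.1 this) ENNReal.ofReal_ne_top
  exact (Measure.absolutelyContinuous_isAddHaarMeasure volume (μH[(Module.finrank ℝ (Rn 3) : ℝ)] : Measure (Rn 3))) h1

namespace Setup
variable {P : MSPair 3} {J : Rn 2 →ₗᵢ[ℝ] Rn 3} {p : Rn 3} {k : Set (Rn 2)}

theorem energy_bound (S : Setup P J p k) (y : Rn 3) {r : ℝ} (hr : 0 < r) :
    ∫ x in ball y r, ‖gradient P.u x‖ ^ 2 ≤ 96 * r ^ 2 := by
  classical
  set U := oc y r with hU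
  set C := cc y r with hC
  set v : Rn 3 → ℝ := fun x => if x ∈ U then 0 else P.u x with hv
  set L := (P.K \ U) ∪ (C \ U) with hL
  have hUo : IsOpen U := oc_open y r
  have hLc : IsClosed L := (P.closed.sdiff hUo).union ((cc_closed y r).sdiff hUo)
  have hU0 : ∀ x ∈ U, v =ᶠ[𝓝 x] fun _ => 0 := fun x hx => by
    filter_upwards [hUo.mem_nhds hx] with z hz
    simp [hv, hz]
  have hC0 : ∀ x, x ∉ C → v =ᶠ[𝓝 x] P.u := fun x hx => by
    filter_upwards [(cc_closed y r).isOpen_compl.mem_nhds hx] with z hz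
    have : z ∉ U := fun h => hz (oc_sub y r h)
    simp [hv, this]
  have hcase : ∀ x, x ∉ L → x ∈ U ∨ (x ∉ C ∧ x ∉ P.K) := by
    intro x hx
    by_cases h : x ∈ U
    · exact Or.inl h
    · exact Or.inr ⟨fun hc => hx (Or.inr ⟨hc, h⟩), fun hc => hx (Or.inl ⟨hc, h⟩)⟩
  have hvolL : volume L = 0 := by
    rw [hL, measure_union_null_iff]
    exact ⟨measure_mono_null sdiff_subset S.vol_K, bd_null y hr⟩
  have hg : ∀ x, x ∉ L → ‖gradient v x‖ ^ 2 = Uᶜ.indicator (fun x => ‖gradient P.u x‖ ^ 2) x := by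
    intro x hx
    rcases hcase x hx with h | ⟨h, h'⟩
    · have : gradient v x = 0 := by
        unfold gradient; rw [(hU0 x h).fderiv_eq]; simp
      rw [this, indicator_of_notMem (by simpa using h)]; simp
    · have : gradient v x = gradient P.u x := by
        unfold gradient; rw [(hC0 x h).fderiv_eq]
      rw [this, indicator_of_mem]
      exact fun hh => h (oc_sub y r hh)
  have hgae : ∀ᵐ x, ‖gradient v x‖ ^ 2 = Uᶜ.indicator (fun x => ‖gradient P.u x‖ ^ 2) x := by
    rw [ae_iff]
    refine measure_mono_null (fun x hx => ?_) hvolL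
    by_contra h; exact hx (hg x h)
  have hi : ∀ z s, IntegrableOn (fun x => ‖gradient v x‖ ^ 2) (ball z s) := by
    intro z s
    refine S.int_dom 1 ((grad_meas v).norm.pow_const 2).aestronglyMeasurable ?_
    filter_upwards [hgae] with x hx _
    rw [hx, abs_of_nonneg (indicator_nonneg (fun _ _ => sq_nonneg _) _)]
    refine (indicator_le_self' (fun _ _ => sq_nonneg _) x).trans ?_
    nlinarith [sq_nonneg (P.u x)]
  have hlip : LocallyLipschitzOn Lᶜ v := by
    intro x hx
    rcases hcase x hx with h | ⟨h, h'⟩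
    · refine ⟨0, U, mem_nhdsWithin_of_mem_nhds (hUo.mem_nhds h), ?_⟩
      intro a ha b hb
      simp [hv, ha, hb]
    · obtain ⟨D, s, hs, hD⟩ := locLip P h'
      refine ⟨D, s ∩ Cᶜ, ?_, ?_⟩
      · rw [P.closed.isOpen_compl.nhdsWithin_eq h'] at hs
        exact mem_nhdsWithin_of_mem_nhds (inter_mem hs ((cc_closed y r).isOpen_compl.mem_nhds h))
      · intro a ha b hb
        have h1 : a ∉ U := fun h => ha.2 (oc_sub y r h)
        have h2 : b ∉ U := fun h => hb.2 (oc_sub y r h)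
        simpa [hv, h1, h2] using hD ha.1 hb.1
  let Q : MSPair 3 := ⟨L, v, hLc, locLipOn_of hlip, fun R hR => by
    refine IntegrableOn.mono_set (t := ball 0 R) ?_ sdiff_subset
    refine Integrable.add ?_ (hi 0 R)
    have hm : AEStronglyMeasurable v volume := by
      have : v = Uᶜ.indicator P.u := by
        ext x; by_cases h : x ∈ U <;> simp [hv, h]
      rw [this]; exact S.aesm.indicator hUo.measurableSet.compl
    refine S.int_dom 1 (hm.pow 2) (ae_of_all _ fun x _ => ?_)
    rw [abs_of_nonneg (sq_nonneg _)]
    by_cases h : x ∈ U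
    · simp [hv, h]; positivity
    · simp [hv, h]; nlinarith [sq_nonneg ‖gradient P.u x‖]⟩
  have hCB := cc_sub_ball y hr
  have hbd := bd_meas y hr
  have hLm : μH[((3:ℕ) : ℝ) - 1] (L ∩ ball y (3 * r)) ≤ μH[((3:ℕ) : ℝ) - 1] (P.K ∩ ball y (3 * r)) + ENNReal.ofReal (96 * r ^ 2) := by
    have : L ∩ ball y (3 * r) ⊆ (P.K ∩ ball y (3 * r)) ∪ (C \ U) := by
      rintro x ⟨h | h, hb⟩
      · exact Or.inl ⟨h.1, hb⟩
      · exact Or.inr h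
    refine (measure_mono this).trans ((measure_union_le _ _).trans ?_)
    gcongr
  have hfin : μH[((3:ℕ) : ℝ) - 1] (P.K ∩ ball y (3 * r)) + ENNReal.ofReal (96 * r ^ 2) ≠ ∞ :=
    ENNReal.add_ne_top.2 ⟨(S.muK_lt_top _ _).ne, ENNReal.ofReal_ne_top⟩
  have hm := S.min_real (Q := Q) (y := y) (r := 3 * r) (by positivity) (by
      ext x; simp only [Q]
      constructor
      · rintro ⟨h | h, hx⟩
        · exact ⟨h.1, hx⟩
        · exact absurd (hCB h.1) hx
      · rintro ⟨h, hx⟩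
        exact ⟨Or.inl ⟨h, fun hu => hx (hCB (oc_sub y r hu))⟩, hx⟩)
    (fun x hx => by
      have : x ∉ U := fun h => hx (Or.inl (Or.inl (hCB (oc_sub y r h))))
      simp [Q, hv, this])
    hvolL (hi _ _) (ne_top_of_le_ne_top hfin hLm)
  simp only [Q] at hm
  have hLr := ENNReal.toReal_mono hfin hLm
  rw [ENNReal.toReal_add (S.muK_lt_top _ _).ne ENNReal.ofReal_ne_top, ENNReal.toReal_ofReal (by positivity)] at hLr
  have i1 := S.int_g2 y (3 * r)
  have e1 : ∫ x in ball y (3 * r), ‖gradient v x‖ ^ 2 = ∫ x in ball y (3 * r) \ U, ‖gradient P.u x‖ ^ 2 := by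
    rw [integral_congr_ae (ae_restrict_of_ae hgae), setIntegral_indicator hUo.measurableSet.compl]
    rfl
  have e2 := integral_inter_add_sdiff (f := fun x => ‖gradient P.u x‖ ^ 2) (μ := volume) (s := ball y (3 * r)) (t := U) hUo.measurableSet i1
  have e3 : ∫ x in ball y r, ‖gradient P.u x‖ ^ 2 ≤ ∫ x in ball y (3 * r) ∩ U, ‖gradient P.u x‖ ^ 2 := by
    refine setIntegral_mono_set (i1.mono_set inter_subset_left) (ae_of_all _ fun x => sq_nonneg _) ?_
    refine Eventually.of_forall fun x hx => ?_
    exact ⟨ball_subset_ball (by linarith) hx, ball_sub_oc y r hx⟩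
  rw [e1] at hm
  linarith

end Setup

end

section

theorem weight_deriv {V : Type*} [NormedAddCommGroup V] [InnerProductSpace ℝ V] [MeasurableSpace V]
    [BorelSpace V] {μ : Measure V} {y : V} {h : V → ℝ}
    (hm : AEStronglyMeasurable h μ) (hi : ∀ r, IntegrableOn h (ball y r) μ) {r : ℝ} (hr : 0 < r) :
    HasDerivAt (fun r => ∫ x, eta r (‖x - y‖ ^ 2) * h x ∂μ)
      (∫ x, (2 * om r (‖x - y‖ ^ 2) * ‖x - y‖ ^ 2 / r) * h x ∂μ) r := by
  have hmo : ∀ r, Measurable fun x : V => om r (‖x - y‖ ^ 2) := fun r =>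
    (Setup.cont_omx r y).measurable
  have hms : Measurable fun x : V => ‖x - y‖ ^ 2 := by
    have : Continuous fun x : V => ‖x - y‖ ^ 2 := by fun_prop
    exact this.measurable
  have hpos : ∀ x ∈ ball r (r / 2), r / 2 < x ∧ x < 2 * r := by
    intro x hx
    rw [mem_ball, Real.dist_eq, abs_lt] at hx
    constructor <;> linarith
  refine (hasDerivAt_integral_of_dominated_loc_of_deriv_le
    (F := fun r x => eta r (‖x - y‖ ^ 2) * h x)
    (F' := fun r x => (2 * om r (‖x - y‖ ^ 2) * ‖x - y‖ ^ 2 / r) * h x)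
    (bound := (ball y (2 * r)).indicator (fun x => 8 / r * ‖h x‖)) (μ := μ) (x₀ := r)
    (s := ball r (r / 2)) (ball_mem_nhds _ (by positivity)) ?_ ?_ ?_ ?_ ?_ ?_).2
  · exact Eventually.of_forall fun s => (Setup.meas_etax s y).aestronglyMeasurable.mul hm
  · have : IntegrableOn (fun x => eta r (‖x - y‖ ^ 2) * h x) (ball y r) μ := by
      refine (hi r).norm.mono' (((Setup.meas_etax r y).aestronglyMeasurable.mul hm).restrict)
        (Eventually.of_forall fun x => ?_)
      rw [norm_mul, Real.norm_of_nonneg (eta_nonneg _ _)]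
      exact mul_le_of_le_one_left (norm_nonneg _) (eta_le_one _ (by positivity))
    exact (integrableOn_iff_integrable_of_support_subset (by
      intro x hx; by_contra hc; exact hx (by simp [etax_zero hr hc]))).1 this
  · refine AEStronglyMeasurable.mul (Measurable.aestronglyMeasurable ?_) hm
    exact ((((hmo r).const_mul 2).mul hms).div_const r)
  · refine Eventually.of_forall fun x s hs => ?_
    obtain ⟨h1, h2⟩ := hpos s hs
    have hs0 : 0 < s := by linarith
    by_cases hx : x ∈ ball y (2 * r)
    · rw [indicator_of_mem hx, norm_mul]
      refine mul_le_mul_of_nonneg_right ?_ (norm_nonneg _)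
      have h3 := om_mul_le hs0 (q := ‖x - y‖ ^ 2) (by positivity)
      have h4 := om_nonneg s (‖x - y‖ ^ 2)
      rw [Real.norm_of_nonneg (by positivity), div_le_div_iff₀ hs0 hr]
      nlinarith
    · have : x ∉ ball y s := fun hh => hx (ball_subset_ball h2.le hh)
      simp [omx_zero hs0 this, indicator_of_notMem hx]
  · exact (integrable_indicator_iff measurableSet_ball).2 ((hi _).norm.const_mul _)
  · refine Eventually.of_forall fun x s hs => ?_
    exact (hasDerivAt_eta_r (by linarith [(hpos s hs).1]) _).mul_const _

namespace Setup
variable {P : MSPair 3} {J : Rn 2 →ₗᵢ[ℝ] Rn 3} {p : Rn 3} {k : Set (Rn 2)}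

/-- weighted area -/
def At (k : Set (Rn 2)) (b : Rn 2) (r : ℝ) : ℝ := ∫ a in k, eta r (‖a - b‖ ^ 2) ∂μH[2]

theorem Dt_deriv (S : Setup P J p k) (y : Rn 3) {r : ℝ} (hr : 0 < r) :
    HasDerivAt (Dt P y) (∫ x, (2 * om r (‖x - y‖ ^ 2) * ‖x - y‖ ^ 2 / r) * ‖gradient P.u x‖ ^ 2) r :=
  weight_deriv (μ := volume) (h := fun x => ‖gradient P.u x‖ ^ 2)
    ((grad_meas P.u).norm.pow_const 2).aestronglyMeasurable (fun r => S.int_g2 y r) hr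

theorem At_deriv (k : Set (Rn 2)) (b : Rn 2) {r : ℝ} (hr : 0 < r) :
    HasDerivAt (At k b) (∫ a in k, (2 * om r (‖a - b‖ ^ 2) * ‖a - b‖ ^ 2 / r) ∂μH[2]) r := by
  have := weight_deriv (μ := (μH[2] : Measure (Rn 2)).restrict k) (y := b) (h := fun _ => (1:ℝ))
    aestronglyMeasurable_const (fun r => by
      refine integrableOn_const (lt_of_le_of_lt (Measure.restrict_apply_le _ _) ?_).ne
      exact measure_ball_lt_top) hr
  simp only [mul_one] at this
  exact this

/-- measurable version of `u` -/
def ut (P : MSPair 3) : Rn 3 → ℝ := P.Kᶜ.indicator P.u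

theorem ut_meas (P : MSPair 3) : Measurable (ut P) := by
  classical
  have h := (locLip P).continuousOn
  rw [ut, ← Set.piecewise_eq_indicator]
  exact h.measurable_piecewise (continuous_zero.continuousOn) P.closed.measurableSet.compl

theorem ut_eq {P : MSPair 3} {x : Rn 3} (h : x ∉ P.K) : ut P x = P.u x := indicator_of_mem h _

theorem ut_ae (S : Setup P J p k) : ∀ᵐ x, ut P x = P.u x := by
  filter_upwards [compl_mem_ae_iff.2 S.vol_K] with x hx using ut_eq hx

theorem ray_notMem (S : Setup P J p k) (b : Rn 2) {ξ : Rn 3} (hξ : ξ ∉ range J) {s : ℝ} (hs : 0 < s) :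
    p + J b + s • ξ ∉ P.K := by
  rw [S.hK]
  rintro ⟨a, -, ha⟩
  apply hξ
  refine ⟨s⁻¹ • (a - b), ?_⟩
  simp only at ha
  have : J a - J b = s • ξ := by
    have : J a = J b + s • ξ := by
      rw [add_assoc] at ha; exact add_left_cancel ha
    rw [this]; abel
  rw [map_smul, map_sub, this, smul_smul, inv_mul_cancel₀ hs.ne', one_smul]

theorem ae_range (J : Rn 2 →ₗᵢ[ℝ] Rn 3) : ∀ᵐ ξ : Rn 3, ξ ∉ range J := by
  have := plane_null J 0
  simp only [zero_add] at this
  exact compl_mem_ae_iff.2 this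

theorem ae_scale {q : Rn 3 → Prop} (h : ∀ᵐ x, q x) (y : Rn 3) {s : ℝ} (hs : 0 < s) :
    ∀ᵐ ξ : Rn 3, q (y + s • ξ) := by
  have h0 : volume {x | ¬ q x} = 0 := h
  change volume ((fun ξ : Rn 3 => s • ξ) ⁻¹' ((fun x => y + x) ⁻¹' {x | ¬ q x})) = 0
  rw [Measure.addHaar_preimage_smul _ hs.ne', measure_preimage_add, h0, mul_zero]

theorem ae_ray {q : Rn 3 → Prop} (hm : MeasurableSet {x | q x}) (h : ∀ᵐ x, q x) (y : Rn 3) :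
    ∀ᵐ ξ : Rn 3, ∀ᵐ s : ℝ, 0 < s → q (y + s • ξ) := by
  have h1 : ∀ᵐ s : ℝ, ∀ᵐ ξ : Rn 3, (0 < s → q (y + s • ξ)) := by
    refine Eventually.of_forall fun s => ?_
    by_cases hs : 0 < s
    · filter_upwards [ae_scale h y hs] with ξ hξ _ using hξ
    · exact Eventually.of_forall fun ξ h => absurd h hs
  refine (Measure.ae_ae_comm ?_).1 h1
  have e : {z : ℝ × Rn 3 | 0 < z.1 → q (y + z.2 |> fun _ => y + z.1 • z.2)} =
    {z : ℝ × Rn 3 | 0 < z.1}ᶜ ∪ (fun z : ℝ × Rn 3 => y + z.1 • z.2) ⁻¹' {x | q x} := by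
    ext z; simp [imp_iff_not_or]
  have hc : Continuous (fun z : ℝ × Rn 3 => y + z.1 • z.2) := by fun_prop
  refine MeasurableSet.congr ?_ e.symm
  exact ((isOpen_lt continuous_const continuous_fst).measurableSet.compl).union (hc.measurable hm)

/-- `u` is differentiable along almost every ray almost everywhere. -/
theorem ray_diff (S : Setup P J p k) (y : Rn 3) :
    ∀ᵐ ξ : Rn 3, ∀ᵐ s : ℝ, 0 < s → DifferentiableAt ℝ P.u (y + s • ξ) :=
  ae_ray (measurableSet_of_differentiableAt ℝ P.u) S.aediff y

theorem ray_ac (S : Setup P J p k) (b : Rn 2) {ξ : Rn 3} (hξ : ξ ∉ range J) {r1 r2 : ℝ} (h1 : 0 < r1)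
    (h2 : r1 ≤ r2) :
    AbsolutelyContinuousOnInterval (fun s : ℝ => P.u (p + J b + s • ξ)) r1 r2 := by
  have hc : Continuous (fun s : ℝ => p + J b + s • ξ) := by fun_prop
  have hl : LipschitzWith ‖ξ‖₊ (fun s : ℝ => p + J b + s • ξ) := by
    refine LipschitzWith.of_dist_le_mul fun s t => ?_
    rw [dist_add_left, dist_eq_norm, ← sub_smul, norm_smul, Real.dist_eq, mul_comm]
    rfl
  set T := (fun s : ℝ => p + J b + s • ξ) '' Icc r1 r2 with hT
  have hTc : IsCompact T := isCompact_Icc.image hc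
  have hTK : T ⊆ P.Kᶜ := by
    rintro _ ⟨s, hs, rfl⟩
    exact S.ray_notMem b hξ (h1.trans_le hs.1)
  obtain ⟨C, hC⟩ := LocallyLipschitzOn.exists_lipschitzOnWith_of_compact hTc ((locLip P).mono hTK)
  have := hC.comp (hl.lipschitzOnWith (s := Icc r1 r2)) (mapsTo_image _ _)
  rw [← uIcc_of_le h2] at this
  exact this.absolutelyContinuousOnInterval

theorem ray_deriv {y ξ : Rn 3} {s : ℝ} (h : DifferentiableAt ℝ P.u (y + s • ξ)) :
    HasDerivAt (fun s : ℝ => P.u (y + s • ξ)) (inner ℝ ξ (gradient P.u (y + s • ξ))) s := by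
  have h1 := h.hasGradientAt.hasFDerivAt
  have h2 : HasDerivAt (fun s : ℝ => y + s • ξ) ξ s := by
    simpa using ((hasDerivAt_id s).smul_const ξ).const_add y
  have := h1.comp_hasDerivAt s h2
  have e : inner ℝ ξ (gradient P.u (y + s • ξ)) =
      (InnerProductSpace.toDual ℝ (Rn 3)) (gradient P.u (y + s • ξ)) ξ := by
    rw [InnerProductSpace.toDual_apply_apply, real_inner_comm]
  rw [e]
  exact this

theorem ray_ftc (S : Setup P J p k) (b : Rn 2) (c : ℝ) {r1 r2 : ℝ} (h1 : 0 < r1)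
    (h2 : r1 ≤ r2) :
    ∀ᵐ ξ : Rn 3, (P.u (p + J b + r2 • ξ) - c) ^ 2 - (P.u (p + J b + r1 • ξ) - c) ^ 2 =
      ∫ s in r1..r2, 2 * (P.u (p + J b + s • ξ) - c) * inner ℝ ξ (gradient P.u (p + J b + s • ξ)) := by
  filter_upwards [ae_range J, S.ray_diff (p + J b)] with ξ hξ hd
  have hac := S.ray_ac b hξ h1 h2
  have hacc : AbsolutelyContinuousOnInterval (fun _ : ℝ => c) r1 r2 :=
    ((LipschitzWith.const c).lipschitzOnWith).absolutelyContinuousOnInterval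
  have hac2 := (hac.sub hacc).mul (hac.sub hacc)
  have h3 := hac2.integral_deriv_eq_sub
  simp only [Pi.mul_apply, Pi.sub_apply] at h3
  rw [sq, sq, ← h3]
  refine intervalIntegral.integral_congr_ae ?_
  filter_upwards [hd] with s hs hs'
  rw [uIoc_of_le h2] at hs'
  have h4 := ((ray_deriv (hs (h1.trans hs'.1))).sub_const c)
  have h5 := (h4.mul h4).deriv
  refine Eq.trans h5 ?_
  ring
end Setup

end

section

namespace Setup
variable {P : MSPair 3} {J : Rn 2 →ₗᵢ[ℝ] Rn 3} {p : Rn 3} {k : Set (Rn 2)}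

def JJ (P : MSPair 3) (y : Rn 3) (c r : ℝ) : ℝ := 2 / r * ∫ x, om r (‖x - y‖ ^ 2) * (P.u x - c) ^ 2

def mm (ξ : Rn 3) : ℝ := max 0 (1 - ‖ξ‖ ^ 2)

theorem mm_nonneg (ξ : Rn 3) : 0 ≤ mm ξ := le_max_left _ _
theorem mm_le (ξ : Rn 3) : mm ξ ≤ 1 := max_le zero_le_one (by nlinarith [sq_nonneg ‖ξ‖])
theorem mm_zero {ξ : Rn 3} (h : ξ ∉ ball 0 1) : mm ξ = 0 := by
  have : 1 ≤ ‖ξ‖ := by simpa using h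
  exact max_eq_left (by nlinarith)
theorem mm_cont : Continuous mm := by unfold mm; fun_prop

theorem mm_om (y : Rn 3) {s : ℝ} (hs : 0 < s) (ξ : Rn 3) :
    mm ξ = s ^ 2 / 2 * om s (‖y + s • ξ - y‖ ^ 2) := by
  have : ‖y + s • ξ - y‖ ^ 2 / s ^ 2 = ‖ξ‖ ^ 2 := by
    rw [add_sub_cancel_left, norm_smul, mul_pow, Real.norm_of_nonneg hs.le]
    field_simp
  unfold mm om
  rw [this]; field_simp

theorem int_scale (g : Rn 3 → ℝ) (y : Rn 3) {s : ℝ} (hs : 0 < s) :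
    ∫ ξ, g (y + s • ξ) = (s ^ 3)⁻¹ * ∫ x, g x := by
  have := Measure.integral_comp_smul (volume : Measure (Rn 3)) (fun x => g (y + x)) s
  rw [this, integral_add_left_eq_self]
  simp [abs_of_pos hs]

theorem integrable_scale {g : Rn 3 → ℝ} (y : Rn 3) {s : ℝ} (hs : 0 < s) (h : Integrable g) :
    Integrable fun ξ => g (y + s • ξ) :=
  (integrable_comp_smul_iff (volume : Measure (Rn 3)) (fun x => g (y + x)) hs.ne').2
    (h.comp_add_left y)

theorem JJ_eq (y : Rn 3) (c : ℝ) {r : ℝ} (hr : 0 < r) :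
    JJ P y c r = 4 * ∫ ξ, mm ξ * (P.u (y + r • ξ) - c) ^ 2 := by
  have h := int_scale (fun x => om r (‖x - y‖ ^ 2) * (P.u x - c) ^ 2) y hr
  have h2 : ∀ ξ, mm ξ * (P.u (y + r • ξ) - c) ^ 2 =
      r ^ 2 / 2 * (om r (‖y + r • ξ - y‖ ^ 2) * (P.u (y + r • ξ) - c) ^ 2) := fun ξ => by
    rw [mm_om y hr ξ]; ring
  simp_rw [h2]
  rw [integral_const_mul, h, JJ]
  field_simp
  ring

theorem inner_Dt (S : Setup P J p k) (y : Rn 3) (c : ℝ) {s : ℝ} (hs : 0 < s) :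
    ∫ ξ, mm ξ * (2 * (P.u (y + s • ξ) - c) * inner ℝ ξ (gradient P.u (y + s • ξ))) =
      Dt P y s / (2 * s ^ 2) := by
  have h := int_scale (fun x => om s (‖x - y‖ ^ 2) * (P.u x - c) * inner ℝ (x - y) (gradient P.u x)) y hs
  have h2 : ∀ ξ, mm ξ * (2 * (P.u (y + s • ξ) - c) * inner ℝ ξ (gradient P.u (y + s • ξ))) =
      s * (om s (‖y + s • ξ - y‖ ^ 2) * (P.u (y + s • ξ) - c) *
        inner ℝ (y + s • ξ - y) (gradient P.u (y + s • ξ))) := fun ξ => by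
    rw [mm_om y hs ξ]
    have e : inner ℝ (y + s • ξ - y) (gradient P.u (y + s • ξ)) = s * inner ℝ ξ (gradient P.u (y + s • ξ)) := by
      rw [add_sub_cancel_left, real_inner_smul_left]
    rw [e]; ring
  simp_rw [h2]
  rw [integral_const_mul, h, S.outer y c hs]
  field_simp

theorem int_f2 (S : Setup P J p k) (y : Rn 3) (c r : ℝ) :
    IntegrableOn (fun x => (P.u x - c) ^ 2) (ball y r) := by
  refine S.int_dom (2 + 2 * c ^ 2) ((S.aesm.sub aestronglyMeasurable_const).pow 2) ?_
  refine Eventually.of_forall fun x _ => ?_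
  rw [abs_of_nonneg (sq_nonneg _)]
  have e : (P.u x - c) ^ 2 ≤ 2 * P.u x ^ 2 + 2 * c ^ 2 := by nlinarith [sq_nonneg (P.u x + c)]
  nlinarith [sq_nonneg ‖gradient P.u x‖, sq_nonneg (P.u x), sq_nonneg c,
    mul_nonneg (sq_nonneg c) (sq_nonneg (P.u x)), mul_nonneg (sq_nonneg c) (sq_nonneg ‖gradient P.u x‖)]

theorem int_mm (S : Setup P J p k) (y : Rn 3) (c : ℝ) {r : ℝ} (hr : 0 < r) :
    Integrable fun ξ => mm ξ * (P.u (y + r • ξ) - c) ^ 2 := by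
  have h1 : Integrable ((ball y r).indicator fun x => (P.u x - c) ^ 2) :=
    (integrable_indicator_iff measurableSet_ball).2 (S.int_f2 y c r)
  refine (integrable_scale y hr h1).mono ?_ (Eventually.of_forall fun ξ => ?_)
  · refine (mm_cont.aestronglyMeasurable).mul (AEStronglyMeasurable.pow ?_ 2)
    refine AEStronglyMeasurable.sub ?_ aestronglyMeasurable_const
    have hq : (fun ξ : Rn 3 => ut P (y + r • ξ)) =ᵐ[volume] fun ξ => P.u (y + r • ξ) :=
      ae_scale S.ut_ae y hr
    refine AEStronglyMeasurable.congr ?_ hq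
    have hc : Continuous (fun ξ : Rn 3 => y + r • ξ) := by fun_prop
    exact ((ut_meas P).comp hc.measurable).aestronglyMeasurable
  · by_cases hξ : ξ ∈ ball (0 : Rn 3) 1
    · have : y + r • ξ ∈ ball y r := by
        rw [mem_ball, dist_self_add_left, norm_smul, Real.norm_of_nonneg hr.le]
        have : ‖ξ‖ < 1 := by simpa using hξ
        nlinarith
      rw [indicator_of_mem this, norm_mul, Real.norm_of_nonneg (mm_nonneg _)]
      exact mul_le_of_le_one_left (norm_nonneg _) (mm_le _)
    · rw [mm_zero hξ]; simp

/-- joint integrand -/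
def GG (P : MSPair 3) (y : Rn 3) (c : ℝ) (z : ℝ × Rn 3) : ℝ :=
  mm z.2 * (2 * (ut P (y + z.1 • z.2) - c) * inner ℝ z.2 (gradient P.u (y + z.1 • z.2)))

theorem GG_meas (P : MSPair 3) (y : Rn 3) (c : ℝ) : Measurable (GG P y c) := by
  have hc : Continuous (fun z : ℝ × Rn 3 => y + z.1 • z.2) := by fun_prop
  have h1 := (ut_meas P).comp hc.measurable
  have h2 := (grad_meas P.u).comp hc.measurable
  exact (mm_cont.measurable.comp measurable_snd).mul
    (((h1.sub_const c).const_mul 2).mul (measurable_snd.inner h2))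

theorem GG_int (S : Setup P J p k) (y : Rn 3) (c : ℝ) {r1 r2 : ℝ} (h1 : 0 < r1) :
    Integrable (GG P y c) (((volume : Measure ℝ).restrict (Ioc r1 r2)).prod (volume : Measure (Rn 3))) := by
  set h : Rn 3 → ℝ := (ball y r2).indicator (fun x => (P.u x - c) ^ 2 + ‖gradient P.u x‖ ^ 2) with hh
  have hi : Integrable h :=
    (integrable_indicator_iff measurableSet_ball).2 ((S.int_f2 y c r2).add (S.int_g2 y r2))
  have h0 : ∀ x, 0 ≤ h x := fun x => indicator_nonneg (fun x _ => by positivity) x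
  have hb : ∀ s, s ∈ Ioc r1 r2 → ∀ᵐ ξ : Rn 3, ‖GG P y c (s, ξ)‖ ≤ h (y + s • ξ) := by
    intro s hs
    have hs0 : 0 < s := h1.trans hs.1
    filter_upwards [ae_scale S.ut_ae y hs0] with ξ hξ
    by_cases hm : ξ ∈ ball (0 : Rn 3) 1
    · have hn : ‖ξ‖ < 1 := by simpa using hm
      have hmem : y + s • ξ ∈ ball y r2 := by
        rw [mem_ball, dist_self_add_left, norm_smul, Real.norm_of_nonneg hs0.le]
        nlinarith [hs.2]
      rw [hh, indicator_of_mem hmem, GG]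
      simp only
      rw [hξ, norm_mul, norm_mul, norm_mul, Real.norm_of_nonneg (mm_nonneg _)]
      have e1 : ‖inner ℝ ξ (gradient P.u (y + s • ξ))‖ ≤ ‖gradient P.u (y + s • ξ)‖ :=
        (norm_inner_le_norm _ _).trans (mul_le_of_le_one_left (norm_nonneg _) hn.le)
      have e2 : ‖(2:ℝ)‖ = 2 := by norm_num
      rw [e2]
      set A := ‖P.u (y + s • ξ) - c‖
      have eA : (P.u (y + s • ξ) - c) ^ 2 = A ^ 2 := by simp [A, sq_abs]
      rw [eA]
      set B := ‖gradient P.u (y + s • ξ)‖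
      have hA : 0 ≤ A := norm_nonneg _
      calc mm ξ * (2 * A * ‖inner ℝ ξ (gradient P.u (y + s • ξ))‖) ≤ 1 * (2 * A * B) := by
            refine mul_le_mul (mm_le _) ?_ (by positivity) zero_le_one
            exact mul_le_mul_of_nonneg_left e1 (by positivity)
        _ ≤ _ := by nlinarith [sq_nonneg (A - B)]
    · rw [GG]; simp only [mm_zero hm, zero_mul, norm_zero]; exact h0 _
  have hsec : ∀ s ∈ Ioc r1 r2, Integrable (fun ξ => GG P y c (s, ξ)) := by
    intro s hs
    refine (integrable_scale y (h1.trans hs.1) hi).mono' ?_ (hb s hs)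
    exact ((GG_meas P y c).comp measurable_prodMk_left).aestronglyMeasurable
  have hGm := (GG_meas P y c).aestronglyMeasurable
    (μ := ((volume : Measure ℝ).restrict (Ioc r1 r2)).prod (volume : Measure (Rn 3)))
  rw [integrable_prod_iff hGm]
  refine ⟨(ae_restrict_iff' measurableSet_Ioc).2 (Eventually.of_forall hsec), ?_⟩
  refine Integrable.mono' (g := fun _ => (r1 ^ 3)⁻¹ * ∫ x, h x) ?_ hGm.norm.integral_prod_right' ?_
  · exact integrable_const _
  · refine (ae_restrict_iff' measurableSet_Ioc).2 (Eventually.of_forall fun s hs => ?_)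
    have hs0 : 0 < s := h1.trans hs.1
    rw [Real.norm_of_nonneg (integral_nonneg fun _ => norm_nonneg _)]
    calc ∫ ξ, ‖GG P y c (s, ξ)‖ ≤ ∫ ξ, h (y + s • ξ) :=
          integral_mono_ae (hsec s hs).norm (integrable_scale y hs0 hi) (hb s hs)
      _ = (s ^ 3)⁻¹ * ∫ x, h x := int_scale h y hs0
      _ ≤ _ := by
        refine mul_le_mul_of_nonneg_right ?_ (integral_nonneg h0)
        exact inv_anti₀ (by positivity) (pow_le_pow_left₀ h1.le hs.1.le 3)

theorem JJ_sub (S : Setup P J p k) (b : Rn 2) (c : ℝ) {r1 r2 : ℝ} (h1 : 0 < r1) (h2 : r1 ≤ r2) :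
    JJ P (p + J b) c r2 - JJ P (p + J b) c r1 = ∫ s in r1..r2, 2 * Dt P (p + J b) s / s ^ 2 := by
  set y := p + J b
  rw [JJ_eq y c (h1.trans_le h2), JJ_eq y c h1, ← mul_sub,
    ← integral_sub (S.int_mm y c (h1.trans_le h2)) (S.int_mm y c h1)]
  have e1 : ∫ ξ, (mm ξ * (P.u (y + r2 • ξ) - c) ^ 2 - mm ξ * (P.u (y + r1 • ξ) - c) ^ 2) =
      ∫ ξ, ∫ s in Ioc r1 r2, GG P y c (s, ξ) := by
    refine integral_congr_ae ?_
    filter_upwards [S.ray_ftc b c h1 h2, ae_range J] with ξ hξ hJ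
    rw [← mul_sub, hξ, intervalIntegral.integral_of_le h2, ← integral_const_mul]
    refine setIntegral_congr_fun measurableSet_Ioc fun s hs => ?_
    simp only [GG]
    rw [ut_eq (S.ray_notMem b hJ (h1.trans hs.1))]
  rw [e1, integral_integral_swap (f := fun ξ s => GG P y c (s, ξ)) (S.GG_int y c h1).swap,
    intervalIntegral.integral_of_le h2, ← integral_const_mul]
  refine setIntegral_congr_fun measurableSet_Ioc fun s hs => ?_
  have hs0 : 0 < s := h1.trans hs.1
  have e2 : ∫ ξ, GG P y c (s, ξ) = Dt P y s / (2 * s ^ 2) := by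
    rw [← S.inner_Dt y c hs0]
    refine integral_congr_ae ?_
    filter_upwards [ae_scale S.ut_ae y hs0] with ξ hξ
    simp only [GG, hξ]
  simp only [e2]
  field_simp
  ring

theorem JJ_deriv (S : Setup P J p k) (b : Rn 2) (c : ℝ) {r : ℝ} (hr : 0 < r) :
    HasDerivAt (JJ P (p + J b) c) (2 * Dt P (p + J b) r / r ^ 2) r := by
  set y := p + J b
  have hcont : ContinuousOn (fun s => 2 * Dt P y s / s ^ 2) (Ioi 0) := by
    intro s hs
    have hs : 0 < s := hs
    exact (((S.Dt_deriv y hs).continuousAt.const_mul 2).div (by fun_prop) (by positivity)).continuousWithinAt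
  have hr2 : 0 < r / 2 := by positivity
  have h1 : HasDerivAt (fun x => ∫ s in (r/2)..x, 2 * Dt P y s / s ^ 2) (2 * Dt P y r / r ^ 2) r := by
    refine intervalIntegral.integral_hasDerivAt_right ?_ ?_ ?_
    · refine (hcont.mono ?_).intervalIntegrable
      rw [uIcc_of_le (by linarith)]
      exact fun x hx => hr2.trans_le hx.1
    · exact hcont.stronglyMeasurableAtFilter isOpen_Ioi _ hr
    · exact hcont.continuousAt (Ioi_mem_nhds hr)
  refine (h1.add_const (JJ P y c (r / 2))).congr_of_eventuallyEq ?_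
  filter_upwards [Ioi_mem_nhds (show r / 2 < r by linarith)] with s hs
  rw [← S.JJ_sub b c hr2 (le_of_lt hs)]
  ring
end Setup

end

section

namespace Setup
variable {P : MSPair 3} {J : Rn 2 →ₗᵢ[ℝ] Rn 3} {p : Rn 3} {k : Set (Rn 2)}

theorem int_supp (S : Setup P J p k) {g : Rn 3 → ℝ} {y : Rn 3} {r : ℝ} (C : ℝ)
    (hg : AEStronglyMeasurable g volume) (hz : ∀ x, x ∉ ball y r → g x = 0)
    (h : ∀ x, x ∈ ball y r → |g x| ≤ C * (P.u x ^ 2 + ‖gradient P.u x‖ ^ 2 + 1)) :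
    Integrable g :=
  (integrableOn_iff_integrable_of_support_subset (by
      intro x hx; by_contra hc; exact hx (hz x hc))).1
    (S.int_dom (y := y) (r := r) C hg (Eventually.of_forall h))

theorem inner_sq_le {y x : Rn 3} {r : ℝ} (hx : x ∈ ball y r) :
    (inner ℝ (x - y) (gradient P.u x)) ^ 2 ≤ r ^ 2 * ‖gradient P.u x‖ ^ 2 := by
  have h1 : ‖x - y‖ < r := by simpa [dist_eq_norm] using hx
  rw [← sq_abs, ← mul_pow]
  refine pow_le_pow_left₀ (abs_nonneg _) ((abs_real_inner_le_norm _ _).trans ?_) 2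
  exact mul_le_mul_of_nonneg_right h1.le (norm_nonneg _)

theorem om_meas (r : ℝ) (y : Rn 3) : AEStronglyMeasurable (fun x : Rn 3 => om r (‖x - y‖ ^ 2)) volume :=
  (cont_omx r y).aestronglyMeasurable

theorem int_omF (S : Setup P J p k) (y : Rn 3) (c : ℝ) {r : ℝ} (hr : 0 < r) :
    Integrable fun x => om r (‖x - y‖ ^ 2) * (P.u x - c) ^ 2 := by
  refine S.int_supp (y := y) (r := r) (2 / r ^ 2 * (2 + 2 * c ^ 2))
    ((om_meas r y).mul ((S.aesm.sub aestronglyMeasurable_const).pow 2))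
    (fun x hx => by rw [omx_zero hr hx, zero_mul]) fun x _ => ?_
  rw [abs_of_nonneg (mul_nonneg (om_nonneg _ _) (sq_nonneg _)), mul_assoc]
  refine mul_le_mul (om_le r (by positivity)) ?_ (by positivity) (by positivity)
  have e : (P.u x - c) ^ 2 ≤ 2 * P.u x ^ 2 + 2 * c ^ 2 := by nlinarith [sq_nonneg (P.u x + c)]
  nlinarith [sq_nonneg ‖gradient P.u x‖, sq_nonneg (P.u x), sq_nonneg c,
    mul_nonneg (sq_nonneg c) (sq_nonneg (P.u x)), mul_nonneg (sq_nonneg c) (sq_nonneg ‖gradient P.u x‖)]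

theorem int_omS (S : Setup P J p k) (y : Rn 3) {r : ℝ} (hr : 0 < r) :
    Integrable fun x => om r (‖x - y‖ ^ 2) * (inner ℝ (x - y) (gradient P.u x)) ^ 2 := by
  refine S.int_supp (y := y) (r := r) (2 / r ^ 2 * r ^ 2)
    ((om_meas r y).mul ((meas_inner P y).aestronglyMeasurable.pow 2))
    (fun x hx => by rw [omx_zero hr hx, zero_mul]) fun x hx => ?_
  rw [abs_of_nonneg (mul_nonneg (om_nonneg _ _) (sq_nonneg _)), mul_assoc]
  refine mul_le_mul (om_le r (by positivity)) ?_ (by positivity) (by positivity)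
  refine (inner_sq_le hx).trans (mul_le_mul_of_nonneg_left ?_ (by positivity))
  nlinarith [sq_nonneg (P.u x)]

theorem int_omM (S : Setup P J p k) (y : Rn 3) (c : ℝ) {r : ℝ} (hr : 0 < r) :
    Integrable fun x => om r (‖x - y‖ ^ 2) * (P.u x - c) * inner ℝ (x - y) (gradient P.u x) := by
  refine ((S.int_omF y c hr).add (S.int_omS y hr)).mono'
    (((om_meas r y).mul (S.aesm.sub aestronglyMeasurable_const)).mul (meas_inner P y).aestronglyMeasurable)
    (Eventually.of_forall fun x => ?_)
  simp only [Pi.add_apply]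
  rw [Real.norm_eq_abs, mul_assoc, abs_mul, abs_of_nonneg (om_nonneg _ _), ← mul_add]
  refine mul_le_mul_of_nonneg_left ?_ (om_nonneg _ _)
  rw [abs_le]
  constructor <;> nlinarith [sq_nonneg ((P.u x - c) + inner ℝ (x - y) (gradient P.u x)),
    sq_nonneg ((P.u x - c) - inner ℝ (x - y) (gradient P.u x)), sq_nonneg (P.u x - c),
    sq_nonneg (inner ℝ (x - y) (gradient P.u x))]

theorem int_etaG (S : Setup P J p k) (y : Rn 3) {r : ℝ} (hr : 0 < r) :
    Integrable fun x => eta r (‖x - y‖ ^ 2) * ‖gradient P.u x‖ ^ 2 := by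
  refine S.int_supp (y := y) (r := r) 1
    ((meas_etax r y).aestronglyMeasurable.mul ((grad_meas P.u).norm.pow_const 2).aestronglyMeasurable)
    (fun x hx => by rw [etax_zero hr hx, zero_mul]) fun x hx => ?_
  rw [abs_of_nonneg (mul_nonneg (eta_nonneg _ _) (sq_nonneg _))]
  refine mul_le_mul (eta_le_one r (by positivity)) ?_ (by positivity) (by positivity)
  nlinarith [sq_nonneg (P.u x)]

theorem int_omG (S : Setup P J p k) (y : Rn 3) {r : ℝ} (hr : 0 < r) :
    Integrable fun x => (2 * om r (‖x - y‖ ^ 2) * ‖x - y‖ ^ 2) * ‖gradient P.u x‖ ^ 2 := by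
  have hms : Continuous fun x : Rn 3 => ‖x - y‖ ^ 2 := by fun_prop
  refine S.int_supp (y := y) (r := r) 4
    (((aestronglyMeasurable_const.mul (om_meas r y)).mul hms.aestronglyMeasurable).mul
      ((grad_meas P.u).norm.pow_const 2).aestronglyMeasurable)
    (fun x hx => by rw [omx_zero hr hx]; ring) fun x hx => ?_
  have := om_nonneg r (‖x - y‖ ^ 2)
  rw [abs_of_nonneg (by positivity)]
  refine mul_le_mul ?_ ?_ (by positivity) (by positivity)
  · have := om_mul_le hr (q := ‖x - y‖ ^ 2) (by positivity)
    linarith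
  · nlinarith [sq_nonneg (P.u x)]

def WW (P : MSPair 3) (J : Rn 2 →ₗᵢ[ℝ] Rn 3) (p : Rn 3) (k : Set (Rn 2)) (b : Rn 2) (c r : ℝ) : ℝ :=
  (Dt P (p + J b) r + At k b r) / r ^ 2 - JJ P (p + J b) c r / (2 * r)

theorem finite_ball (k : Set (Rn 2)) (b : Rn 2) (r : ℝ) :
    (μH[2] : Measure (Rn 2)).restrict k (ball b r) ≠ ∞ :=
  (lt_of_le_of_lt (Measure.restrict_apply_le _ _) measure_ball_lt_top).ne

theorem int_k {k : Set (Rn 2)} {g : Rn 2 → ℝ} {b : Rn 2} {r : ℝ} (C : ℝ) (hg : Continuous g)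
    (hz : ∀ a, a ∉ ball b r → g a = 0) (h : ∀ a, |g a| ≤ C) : IntegrableOn g k μH[2] := by
  have : IntegrableOn g (ball b r) ((μH[2] : Measure (Rn 2)).restrict k) := by
    refine Measure.integrableOn_of_bounded (M := C) (finite_ball k b r) hg.aestronglyMeasurable
      (Eventually.of_forall h)
  exact (integrableOn_iff_integrable_of_support_subset (by
      intro x hx; by_contra hc; exact hx (hz x hc))).1 this

theorem weiss_id (S : Setup P J p k) (b : Rn 2) {r : ℝ} (hr : 0 < r) :
    Dt P (p + J b) r + 2 * At k b r + 4 * (∫ x, om r (‖x - (p + J b)‖ ^ 2) * (inner ℝ (x - (p + J b)) (gradient P.u x)) ^ 2)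
    = (∫ x, (2 * om r (‖x - (p + J b)‖ ^ 2) * ‖x - (p + J b)‖ ^ 2) * ‖gradient P.u x‖ ^ 2)
      + ∫ a in k, (2 * om r (‖a - b‖ ^ 2) * ‖a - b‖ ^ 2) ∂μH[2] := by
  have h := S.inner_var b hr
  have i1 : IntegrableOn (fun a => eta r (‖a - b‖ ^ 2)) k μH[2] :=
    int_k 1 (contDiff_etax r b).continuous (fun a ha => etax_zero hr ha) fun a => by
      rw [abs_of_nonneg (eta_nonneg _ _)]; exact eta_le_one r (by positivity)
  have hms : Continuous fun x : Rn 2 => ‖x - b‖ ^ 2 := by fun_prop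
  have i2 : IntegrableOn (fun a => 2 * om r (‖a - b‖ ^ 2) * ‖a - b‖ ^ 2) k μH[2] :=
    int_k 4 ((continuous_const.mul (cont_omx r b)).mul hms)
      (fun a ha => by rw [omx_zero hr ha]; ring) fun a => by
      have := om_nonneg r (‖a - b‖ ^ 2)
      rw [abs_of_nonneg (by positivity)]
      have := om_mul_le hr (q := ‖a - b‖ ^ 2) (by positivity)
      linarith
  rw [integral_sub (i1.const_mul 2) i2, integral_const_mul] at h
  set y := p + J b
  have e : (∫ x, iv P y r x) = Dt P y r + (-1) * (∫ x, (2 * om r (‖x - y‖ ^ 2) * ‖x - y‖ ^ 2) * ‖gradient P.u x‖ ^ 2)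
      + 4 * (∫ x, om r (‖x - y‖ ^ 2) * (inner ℝ (x - y) (gradient P.u x)) ^ 2) := by
    rw [Dt, ← integral_comb (S.int_etaG y hr) (S.int_omG y hr) (S.int_omS y hr)]
    refine integral_congr_ae (Eventually.of_forall fun x => ?_)
    simp only [iv]; ring
  rw [e] at h
  rw [At]
  linarith

theorem W_deriv (S : Setup P J p k) (b : Rn 2) (c : ℝ) {r : ℝ} (hr : 0 < r) :
    HasDerivAt (WW P J p k b c) ((r ^ 3)⁻¹ * ∫ x, om r (‖x - (p + J b)‖ ^ 2) *
      (2 * inner ℝ (x - (p + J b)) (gradient P.u x) - (P.u x - c)) ^ 2) r := by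
  have hid := S.weiss_id b hr
  set y := p + J b
  have h1 := S.Dt_deriv y hr
  have h2 := At_deriv k b hr
  have h3 := S.JJ_deriv b c hr
  have h4 := ((h1.add h2).div (hasDerivAt_pow 2 r) (by positivity)).sub
    (h3.div ((hasDerivAt_id r).const_mul 2) (by simpa using hr.ne'))
  have e1 : ∫ x, om r (‖x - y‖ ^ 2) * (2 * inner ℝ (x - y) (gradient P.u x) - (P.u x - c)) ^ 2
      = (∫ x, om r (‖x - y‖ ^ 2) * (P.u x - c) ^ 2)
        + (-4) * (∫ x, om r (‖x - y‖ ^ 2) * (P.u x - c) * inner ℝ (x - y) (gradient P.u x))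
        + 4 * ∫ x, om r (‖x - y‖ ^ 2) * (inner ℝ (x - y) (gradient P.u x)) ^ 2 := by
    rw [← integral_comb (S.int_omF y c hr) (S.int_omM y c hr) (S.int_omS y hr)]
    refine integral_congr_ae (Eventually.of_forall fun x => ?_)
    simp only; ring
  have e2 := S.outer y c hr
  have e3 : JJ P y c r = 2 / r * ∫ x, om r (‖x - y‖ ^ 2) * (P.u x - c) ^ 2 := rfl
  have e4 : ∫ x, (2 * om r (‖x - y‖ ^ 2) * ‖x - y‖ ^ 2 / r) * ‖gradient P.u x‖ ^ 2 =
      r⁻¹ * ∫ x, (2 * om r (‖x - y‖ ^ 2) * ‖x - y‖ ^ 2) * ‖gradient P.u x‖ ^ 2 := by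
    rw [← integral_const_mul]
    refine integral_congr_ae (Eventually.of_forall fun x => ?_)
    simp only; ring
  have e5 : ∫ a in k, (2 * om r (‖a - b‖ ^ 2) * ‖a - b‖ ^ 2 / r) ∂μH[2] =
      r⁻¹ * ∫ a in k, (2 * om r (‖a - b‖ ^ 2) * ‖a - b‖ ^ 2) ∂μH[2] := by
    rw [← integral_const_mul]
    refine integral_congr_ae (Eventually.of_forall fun x => ?_)
    simp only; ring
  refine HasDerivAt.congr_deriv h4 ?_
  rw [e1, e4, e5]
  simp only [id_eq, Pi.add_apply]
  rw [e3]
  set F := ∫ x, om r (‖x - y‖ ^ 2) * (P.u x - c) ^ 2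
  set M := ∫ x, om r (‖x - y‖ ^ 2) * (P.u x - c) * inner ℝ (x - y) (gradient P.u x)
  set Z := ∫ x, om r (‖x - y‖ ^ 2) * (inner ℝ (x - y) (gradient P.u x)) ^ 2
  set X := ∫ x, (2 * om r (‖x - y‖ ^ 2) * ‖x - y‖ ^ 2) * ‖gradient P.u x‖ ^ 2
  set Y := ∫ a in k, (2 * om r (‖a - b‖ ^ 2) * ‖a - b‖ ^ 2) ∂μH[2]
  have hX : X = Dt P y r + 2 * At k b r + 4 * Z - Y := by linarith
  rw [hX]
  field_simp
  push_cast
  rw [e2]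
  ring

theorem H_deriv (S : Setup P J p k) (b : Rn 2) (c : ℝ) {r : ℝ} (hr : 0 < r) :
    HasDerivAt (fun r => JJ P (p + J b) c r / r) (2 / r * (WW P J p k b c r - At k b r / r ^ 2)) r := by
  have h := (S.JJ_deriv b c hr).div (hasDerivAt_id r) hr.ne'
  refine HasDerivAt.congr_deriv h ?_
  simp only [WW, id_eq]
  field_simp
  ring

theorem W_mono (S : Setup P J p k) (b : Rn 2) (c : ℝ) : MonotoneOn (WW P J p k b c) (Ioi 0) := by
  refine monotoneOn_of_deriv_nonneg (convex_Ioi 0) ?_ ?_ ?_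
  · exact fun r hr => (S.W_deriv b c hr).continuousAt.continuousWithinAt
  · exact fun r hr => (S.W_deriv b c (interior_subset hr)).differentiableAt.differentiableWithinAt
  · intro r hr
    have hr : 0 < r := interior_subset hr
    rw [(S.W_deriv b c hr).deriv]
    refine mul_nonneg (by positivity) (integral_nonneg fun x => ?_)
    exact mul_nonneg (om_nonneg _ _) (sq_nonneg _)
end Setup

theorem lim_above {H W A : ℝ → ℝ} (hH : ∀ r, 0 < r → HasDerivAt H (2 / r * (W r - A r)) r)
    (hW : MonotoneOn W (Ioi 0)) {C : ℝ} (h0 : ∀ r, 0 < r → 0 ≤ H r) (h1 : ∀ r, 0 < r → H r ≤ C)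
    {a : ℝ} (hA : ∀ ε > 0, ∀ᶠ r in atTop, A r ≤ a + ε) : ∀ r, 0 < r → W r ≤ a := by
  intro r0 hr0
  by_contra! hlt
  set δ := (W r0 - a) / 2 with hδ
  have hδ0 : 0 < δ := by rw [hδ]; linarith
  obtain ⟨R, hR⟩ := eventually_atTop.1 (hA δ hδ0)
  set R' := max R r0
  have hR' : 0 < R' := hr0.trans_le (le_max_right _ _)
  have hmono : MonotoneOn (fun r => H r - 2 * δ * Real.log r) (Ici R') := by
    have hd : ∀ r, R' ≤ r → HasDerivAt (fun r => H r - 2 * δ * Real.log r)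
        (2 / r * (W r - A r) - 2 * δ * r⁻¹) r := fun r hr =>
      (hH r (hR'.trans_le hr)).sub ((Real.hasDerivAt_log (hR'.trans_le hr).ne').const_mul _)
    refine monotoneOn_of_deriv_nonneg (convex_Ici _) ?_ ?_ ?_
    · exact fun r hr => (hd r hr).continuousAt.continuousWithinAt
    · exact fun r hr => (hd r (interior_subset hr)).differentiableAt.differentiableWithinAt
    · intro r hr
      have hr := interior_subset hr
      have hr1 : 0 < r := hR'.trans_le hr
      rw [(hd r hr).deriv]
      have h2 := hR r ((le_max_left _ _).trans hr)
      have h3 : W r0 ≤ W r := hW hr0 hr1 ((le_max_right _ _).trans hr)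
      have : 2 / r * (W r - A r) - 2 * δ * r⁻¹ = 2 / r * (W r - A r - δ) := by ring
      rw [this]
      exact mul_nonneg (by positivity) (by linarith)
  set T := (C + 1) / (2 * δ) with hT
  have hC : 0 ≤ C := (h0 _ hr0).trans (h1 _ hr0)
  have hT0 : 0 < T := by positivity
  have h4 := hmono (mem_Ici.2 le_rfl) (show R' * Real.exp T ∈ Ici R' by
    rw [mem_Ici]; exact le_mul_of_one_le_right hR'.le (Real.one_le_exp hT0.le))
    (le_mul_of_one_le_right hR'.le (Real.one_le_exp hT0.le))
  simp only at h4
  rw [Real.log_mul hR'.ne' (Real.exp_pos _).ne', Real.log_exp] at h4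
  have h5 := h1 (R' * Real.exp T) (by positivity)
  have h6 := h0 R' hR'
  have h7 : 2 * δ * T = C + 1 := by rw [hT]; field_simp
  nlinarith

theorem lim_below {H W A : ℝ → ℝ} (hH : ∀ r, 0 < r → HasDerivAt H (2 / r * (W r - A r)) r)
    (hW : MonotoneOn W (Ioi 0)) {C : ℝ} (h0 : ∀ r, 0 < r → 0 ≤ H r) (h1 : ∀ r, 0 < r → H r ≤ C)
    {a : ℝ} (hA : ∀ ε > 0, ∀ᶠ r in 𝓝[>] (0:ℝ), a - ε ≤ A r) : ∀ r, 0 < r → a ≤ W r := by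
  intro r0 hr0
  by_contra! hlt
  set δ := (a - W r0) / 2 with hδ
  have hδ0 : 0 < δ := by rw [hδ]; linarith
  obtain ⟨R, hR0, hR⟩ := (mem_nhdsGT_iff_exists_Ioc_subset).1 (hA δ hδ0)
  have hR0 : 0 < R := hR0
  set R' := min R r0
  have hR' : 0 < R' := lt_min hR0 hr0
  have hanti : AntitoneOn (fun r => H r + 2 * δ * Real.log r) (Ioc 0 R') := by
    have hd : ∀ r, 0 < r → HasDerivAt (fun r => H r + 2 * δ * Real.log r)
        (2 / r * (W r - A r) + 2 * δ * r⁻¹) r := fun r hr =>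
      (hH r hr).add ((Real.hasDerivAt_log hr.ne').const_mul _)
    refine antitoneOn_of_deriv_nonpos (convex_Ioc _ _) ?_ ?_ ?_
    · exact fun r hr => (hd r hr.1).continuousAt.continuousWithinAt
    · exact fun r hr => (hd r (interior_subset hr).1).differentiableAt.differentiableWithinAt
    · intro r hr
      have hr := interior_subset hr
      have hr1 : 0 < r := hr.1
      rw [(hd r hr1).deriv]
      have h2 : a - δ ≤ A r := hR ⟨hr1, hr.2.trans (min_le_left _ _)⟩
      have h3 : W r ≤ W r0 := hW hr1 hr0 (hr.2.trans (min_le_right _ _))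
      have : 2 / r * (W r - A r) + 2 * δ * r⁻¹ = 2 / r * (W r - A r + δ) := by ring
      rw [this]
      exact mul_nonpos_of_nonneg_of_nonpos (by positivity) (by linarith)
  set T := (C + 1) / (2 * δ) with hT
  have hC : 0 ≤ C := (h0 _ hr0).trans (h1 _ hr0)
  have hT0 : 0 < T := by positivity
  have hle : R' * Real.exp (-T) ≤ R' :=
    mul_le_of_le_one_right hR'.le (Real.exp_le_one_iff.2 (by linarith))
  have h4 := hanti (show R' * Real.exp (-T) ∈ Ioc 0 R' from ⟨by positivity, hle⟩) ⟨hR', le_rfl⟩ hle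
  simp only at h4
  rw [Real.log_mul hR'.ne' (Real.exp_pos _).ne', Real.log_exp] at h4
  have h5 := h1 (R' * Real.exp (-T)) (by positivity)
  have h6 := h0 R' hR'
  have h7 : 2 * δ * T = C + 1 := by rw [hT]; field_simp
  nlinarith

end

section

namespace Setup
variable {P : MSPair 3} {J : Rn 2 →ₗᵢ[ℝ] Rn 3} {p : Rn 3} {k : Set (Rn 2)}

theorem Dt_le (S : Setup P J p k) (y : Rn 3) {r : ℝ} (hr : 0 < r) : Dt P y r ≤ 96 * r ^ 2 := by
  refine le_trans ?_ (S.energy_bound y hr)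
  rw [Dt, ← setInt_eq (y := y) (r := r) (fun x hx => by rw [etax_zero hr hx, zero_mul])]
  refine setIntegral_mono (S.int_etaG y hr).integrableOn (S.int_g2 y r) fun x => ?_
  exact mul_le_of_le_one_left (sq_nonneg _) (eta_le_one r (by positivity))

theorem JJ_nonneg (P : MSPair 3) (y : Rn 3) (c : ℝ) {r : ℝ} (hr : 0 < r) : 0 ≤ JJ P y c r :=
  mul_nonneg (by positivity) (integral_nonneg fun _ => mul_nonneg (om_nonneg _ _) (sq_nonneg _))

theorem mm_int : Integrable mm := by
  have : IntegrableOn mm (ball 0 1) := Measure.integrableOn_of_bounded (M := 1) measure_ball_lt_top.ne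
    mm_cont.aestronglyMeasurable (Eventually.of_forall fun ξ => by
      rw [Real.norm_of_nonneg (mm_nonneg _)]; exact mm_le _)
  exact (integrableOn_iff_integrable_of_support_subset (by
      intro x hx; by_contra hc; exact hx (mm_zero hc))).1 this

theorem mem_K (S : Setup P J p k) (b : Rn 2) : p + J b ∈ P.K ↔ b ∈ k := by
  rw [S.hK]
  constructor
  · rintro ⟨a, ha, h⟩
    have : J a = J b := add_left_cancel h
    rwa [← J.injective this]
  · exact fun h => ⟨b, h, rfl⟩

theorem JJ_le_off (S : Setup P J p k) {b : Rn 2} (hb : b ∉ k) {r : ℝ} (hr : 0 < r) :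
    JJ P (p + J b) (P.u (p + J b)) r ≤ 192 * r := by
  have hy : p + J b ∈ P.Kᶜ := fun h => hb ((S.mem_K b).1 h)
  set y := p + J b with hy0
  set c := P.u y
  obtain ⟨C, t, ht, hC⟩ := locLip P hy
  rw [P.closed.isOpen_compl.nhdsWithin_eq hy] at ht
  obtain ⟨ρ, hρ, hball⟩ := Metric.mem_nhds_iff.1 ht
  have hsmall : ∀ s, 0 < s → s < ρ → JJ P y c s ≤ 4 * ((C * s) ^ 2 * ∫ ξ, mm ξ) := by
    intro s hs hsρ
    rw [JJ_eq y c hs, ← integral_const_mul (((C : ℝ) * s) ^ 2)]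
    refine mul_le_mul_of_nonneg_left ?_ (by norm_num)
    refine integral_mono (S.int_mm y c hs) (mm_int.const_mul _) fun ξ => ?_
    simp only
    by_cases hξ : ξ ∈ ball (0 : Rn 3) 1
    · have hn : ‖ξ‖ < 1 := by simpa using hξ
      have hd : dist (y + s • ξ) y ≤ s := by
        rw [dist_self_add_left, norm_smul, Real.norm_of_nonneg hs.le]
        nlinarith
      have h1 := hC.dist_le_mul _ (hball (show y + s • ξ ∈ ball y ρ from hd.trans_lt hsρ)) _
        (hball (mem_ball_self hρ))
      rw [Real.dist_eq] at h1
      rw [mul_comm]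
      refine mul_le_mul_of_nonneg_right ?_ (mm_nonneg _)
      rw [← sq_abs]
      refine pow_le_pow_left₀ (abs_nonneg _) (h1.trans ?_) 2
      exact mul_le_mul_of_nonneg_left hd C.2
    · simp [mm_zero hξ]
  have hanti : AntitoneOn (fun r => JJ P y c r - 192 * r) (Ioi 0) := by
    have hd : ∀ r, 0 < r → HasDerivAt (fun r => JJ P y c r - 192 * r)
        (2 * Dt P y r / r ^ 2 - 192 * 1) r := fun r hr =>
      (S.JJ_deriv b c hr).sub ((hasDerivAt_id r).const_mul 192)
    refine antitoneOn_of_deriv_nonpos (convex_Ioi _) ?_ ?_ ?_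
    · exact fun r hr => (hd r hr).continuousAt.continuousWithinAt
    · exact fun r hr => (hd r (interior_subset hr)).differentiableAt.differentiableWithinAt
    · intro r hr
      have hr : 0 < r := interior_subset hr
      rw [(hd r hr).deriv]
      have h2 := S.Dt_le y hr
      rw [sub_nonpos, div_le_iff₀ (by positivity)]
      linarith
  have hev : ∀ᶠ s in 𝓝[>] (0:ℝ), JJ P y c r - 192 * r ≤ 4 * ((C * s) ^ 2 * ∫ ξ, mm ξ) - 192 * s := by
    filter_upwards [Ioo_mem_nhdsGT (lt_min hρ hr)] with s hs
    have h1 := hsmall s hs.1 (hs.2.trans_le (min_le_left _ _))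
    have h2 := hanti (show s ∈ Ioi 0 from hs.1) (show r ∈ Ioi 0 from hr) (hs.2.le.trans (min_le_right _ _))
    simp only at h2
    linarith
  have hlim : Tendsto (fun s : ℝ => 4 * ((C * s) ^ 2 * ∫ ξ, mm ξ) - 192 * s) (𝓝[>] 0) (𝓝 0) := by
    have : Continuous (fun s : ℝ => 4 * ((C * s) ^ 2 * ∫ ξ, mm ξ) - 192 * s) := by fun_prop
    have h := this.tendsto 0
    simp only [mul_zero] at h
    norm_num at h
    exact h.mono_left nhdsWithin_le_nhds
  have := ge_of_tendsto hlim hev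
  linarith

theorem exists_c (S : Setup P J p k) {b : Rn 2} (hb : b ∈ closure kᶜ) :
    ∃ c, ∀ r, 0 < r → JJ P (p + J b) c r ≤ 192 * r := by
  obtain ⟨bn, hbn, hlim⟩ := mem_closure_iff_seq_limit.1 hb
  set y := p + J b with hy
  set yn : ℕ → Rn 3 := fun n => p + J (bn n) with hyn
  set cn : ℕ → ℝ := fun n => P.u (yn n) with hcn
  have hyl : Tendsto yn atTop (𝓝 y) := by
    have : Continuous fun a : Rn 2 => p + J a := by have := J.continuous; fun_prop
    exact (this.tendsto b).comp hlim
  have hJn : ∀ n r, 0 < r → JJ P (yn n) (cn n) r ≤ 192 * r := fun n r hr => S.JJ_le_off (hbn n) hr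
  have hev : ∀ᶠ n in atTop, dist (yn n) y < 1 := Metric.tendsto_nhds.1 hyl 1 one_pos
  -- boundedness of `cn`
  set m0 := ∫ x : Rn 3, om 1 (‖x‖ ^ 2) with hm0
  have iom : ∀ z : Rn 3, Integrable fun x : Rn 3 => om 1 (‖x - z‖ ^ 2) := by
    intro z
    have : IntegrableOn (fun x : Rn 3 => om 1 (‖x - z‖ ^ 2)) (ball z 1) :=
      Measure.integrableOn_of_bounded (M := 2) measure_ball_lt_top.ne (om_meas 1 z)
        (Eventually.of_forall fun x => by
          rw [Real.norm_of_nonneg (om_nonneg _ _)]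
          exact (om_le 1 (by positivity)).trans (by norm_num))
    exact (integrableOn_iff_integrable_of_support_subset (by
      intro x hx; by_contra hc; exact hx (omx_zero one_pos hc))).1 this
  have hmz : ∀ z : Rn 3, ∫ x : Rn 3, om 1 (‖x - z‖ ^ 2) = m0 := fun z =>
    integral_sub_right_eq_self (fun x : Rn 3 => om 1 (‖x‖ ^ 2)) z
  have hm0p : 0 < m0 := by
    have i0 := iom 0
    simp only [sub_zero] at i0
    rw [hm0, integral_pos_iff_support_of_nonneg (fun x => om_nonneg _ _) i0]
    refine lt_of_lt_of_le (measure_ball_pos volume (0 : Rn 3) one_pos) (measure_mono fun x hx => ?_)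
    refine (om_pos one_pos ?_).ne'
    have : ‖x‖ < 1 := by simpa using hx
    nlinarith [norm_nonneg x]
  set U := ∫ x in ball y 2, P.u x ^ 2 with hU
  have hbd : ∀ n, dist (yn n) y < 1 → cn n ^ 2 * m0 ≤ 192 + 4 * U := by
    intro n hn
    have h1 := hJn n 1 one_pos
    rw [JJ] at h1
    have iF := S.int_omF (yn n) (cn n) one_pos
    have iF0 := S.int_omF (yn n) 0 one_pos
    simp only [sub_zero] at iF0
    have h2 : cn n ^ 2 * m0 ≤ ∫ x, (2 * (om 1 (‖x - yn n‖ ^ 2) * (P.u x - cn n) ^ 2) +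
        2 * (om 1 (‖x - yn n‖ ^ 2) * P.u x ^ 2)) := by
      rw [← hmz (yn n), ← integral_const_mul]
      refine integral_mono ((iom _).const_mul _) ((iF.const_mul 2).add (iF0.const_mul 2)) fun x => ?_
      simp only
      have h0 := om_nonneg 1 (‖x - yn n‖ ^ 2)
      nlinarith [mul_nonneg h0 (sq_nonneg (2 * P.u x - cn n))]
    rw [integral_add (iF.const_mul 2) (iF0.const_mul 2), integral_const_mul, integral_const_mul] at h2
    have h3 : ∫ x, om 1 (‖x - yn n‖ ^ 2) * P.u x ^ 2 ≤ 2 * U := by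
      have hsub : ball (yn n) 1 ⊆ ball y 2 := ball_subset_ball' (by linarith)
      rw [← setInt_eq (y := y) (r := 2) (fun x hx => by
        rw [omx_zero one_pos (fun hh => hx (hsub hh)), zero_mul]), hU, ← integral_const_mul]
      refine setIntegral_mono iF0.integrableOn ((S.int_u2 y 2).const_mul 2) fun x => ?_
      exact mul_le_mul_of_nonneg_right ((om_le 1 (by positivity)).trans (by norm_num)) (sq_nonneg _)
    linarith
  set B := (192 + 4 * U) / m0 + 1 with hB
  have hcb : ∀ᶠ n in atTop, cn n ∈ Icc (-B) B := by
    filter_upwards [hev] with n hn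
    have h1 := hbd n hn
    rw [← le_div_iff₀ hm0p] at h1
    rw [mem_Icc, ← abs_le]
    have h2 : |cn n| ^ 2 ≤ B - 1 := by rw [sq_abs, hB]; linarith
    nlinarith [abs_nonneg (cn n), sq_nonneg (|cn n| - 1)]
  obtain ⟨c, -, φ, hφ, hc⟩ := tendsto_subseq_of_frequently_bounded (isBounded_Icc (-B) B) hcb.frequently
  refine ⟨c, fun r hr => ?_⟩
  have hyφ := hyl.comp hφ.tendsto_atTop
  have hgood : ∀ᶠ n in atTop, dist (yn (φ n)) y < 1 ∧ cn (φ n) ∈ Icc (-B) B :=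
    hφ.tendsto_atTop.eventually (hev.and hcb)
  have key : Tendsto (fun n => ∫ x, om r (‖x - yn (φ n)‖ ^ 2) * (P.u x - cn (φ n)) ^ 2) atTop
      (𝓝 (∫ x, om r (‖x - y‖ ^ 2) * (P.u x - c) ^ 2)) := by
    refine tendsto_integral_filter_of_dominated_convergence
      ((ball y (r + 1)).indicator fun x => 2 / r ^ 2 * (2 * P.u x ^ 2 + 2 * B ^ 2)) ?_ ?_ ?_ ?_
    · exact Eventually.of_forall fun n =>
        (om_meas r _).mul ((S.aesm.sub aestronglyMeasurable_const).pow 2)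
    · filter_upwards [hgood] with n hn
      refine Eventually.of_forall fun x => ?_
      rw [Real.norm_of_nonneg (mul_nonneg (om_nonneg _ _) (sq_nonneg _))]
      by_cases hx : x ∈ ball y (r + 1)
      · rw [indicator_of_mem hx]
        refine mul_le_mul (om_le r (by positivity)) ?_ (by positivity) (by positivity)
        have h1 : cn (φ n) ^ 2 ≤ B ^ 2 := sq_le_sq' hn.2.1 hn.2.2
        nlinarith [sq_nonneg (P.u x + cn (φ n))]
      · rw [indicator_of_notMem hx, omx_zero hr, zero_mul]
        exact fun hh => hx (ball_subset_ball' (by linarith [hn.1]) hh)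
    · refine (integrable_indicator_iff measurableSet_ball).2 ?_
      exact (((S.int_u2 y _).const_mul 2).add (integrableOn_const measure_ball_lt_top.ne)).const_mul _
    · refine Eventually.of_forall fun x => ?_
      have h1 : Tendsto (fun n => om r (‖x - yn (φ n)‖ ^ 2)) atTop (𝓝 (om r (‖x - y‖ ^ 2))) := by
        have : Continuous fun z : Rn 3 => om r (‖x - z‖ ^ 2) := (continuous_om r).comp (by fun_prop)
        exact (this.tendsto y).comp hyφ
      exact h1.mul ((hc.const_sub (P.u x)).pow 2)
  have key2 := key.const_mul (2 / r)
  exact le_of_tendsto key2 (Eventually.of_forall fun n => hJn (φ n) r hr)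

theorem W_le (S : Setup P J p k) {b : Rn 2} {c : ℝ} (hc : ∀ r, 0 < r → JJ P (p + J b) c r ≤ 192 * r)
    {a : ℝ} (hA : ∀ ε > 0, ∀ᶠ r in atTop, At k b r / r ^ 2 ≤ a + ε) :
    ∀ r, 0 < r → WW P J p k b c r ≤ a :=
  lim_above (H := fun r => JJ P (p + J b) c r / r) (A := fun r => At k b r / r ^ 2) (C := 192)
    (fun _ hr => S.H_deriv b c hr) (S.W_mono b c) (fun _ hr => div_nonneg (JJ_nonneg P _ c hr) hr.le)
    (fun r hr => (div_le_iff₀ hr).2 (hc r hr)) hA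

theorem W_ge (S : Setup P J p k) {b : Rn 2} {c : ℝ} (hc : ∀ r, 0 < r → JJ P (p + J b) c r ≤ 192 * r)
    {a : ℝ} (hA : ∀ ε > 0, ∀ᶠ r in 𝓝[>] (0:ℝ), a - ε ≤ At k b r / r ^ 2) :
    ∀ r, 0 < r → a ≤ WW P J p k b c r :=
  lim_below (H := fun r => JJ P (p + J b) c r / r) (A := fun r => At k b r / r ^ 2) (C := 192)
    (fun _ hr => S.H_deriv b c hr) (S.W_mono b c) (fun _ hr => div_nonneg (JJ_nonneg P _ c hr) hr.le)
    (fun r hr => (div_le_iff₀ hr).2 (hc r hr)) hA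

end Setup

end

section

/-- unit cutoff in the plane -/
def e1 (α : Rn 2) : ℝ := eta 1 (‖α‖ ^ 2)

/-- its mass -/
def kap : ℝ := ∫ α, e1 α ∂(μH[2] : Measure (Rn 2))

theorem e1_cont : Continuous e1 := (continuous_eta 1).comp (by fun_prop)
theorem e1_nonneg (α : Rn 2) : 0 ≤ e1 α := eta_nonneg _ _
theorem e1_le (α : Rn 2) : e1 α ≤ 1 := eta_le_one _ (by positivity)
theorem e1_zero {α : Rn 2} (h : α ∉ ball (0 : Rn 2) 1) : e1 α = 0 := by
  have := etax_zero one_pos h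
  simpa [e1] using this
theorem e1_scale {r : ℝ} (hr : 0 < r) (α : Rn 2) : eta r (‖r • α‖ ^ 2) = e1 α := by
  have : ‖r • α‖ ^ 2 / r ^ 2 = ‖α‖ ^ 2 / 1 ^ 2 := by
    rw [norm_smul, mul_pow, Real.norm_of_nonneg hr.le]
    field_simp
  rw [e1, eta, this, eta]
theorem e1_int : Integrable e1 (μH[2] : Measure (Rn 2)) := by
  have := Setup.int_k (k := univ) (g := e1) (b := 0) (r := 1) 1 e1_cont (fun a ha => e1_zero ha)
    (fun a => by rw [abs_of_nonneg (e1_nonneg a)]; exact e1_le a)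
  simpa using this
theorem kap_pos : 0 < kap := by
  rw [kap, integral_pos_iff_support_of_nonneg e1_nonneg e1_int]
  refine lt_of_lt_of_le (measure_ball_pos _ (0 : Rn 2) one_pos) (measure_mono fun x hx => ?_)
  have : ‖x‖ < 1 := by simpa using hx
  have h2 : 0 < 1 - ‖x‖ ^ 2 / 1 ^ 2 := by norm_num; nlinarith [norm_nonneg x]
  rw [Function.mem_support, e1, eta, max_eq_right h2.le]
  positivity

/-- weighted mass of a set -/
def ms (s : Set (Rn 2)) : ℝ := ∫ α, s.indicator e1 α ∂(μH[2] : Measure (Rn 2))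

theorem ind_le (s : Set (Rn 2)) (α : Rn 2) : s.indicator e1 α ≤ e1 α :=
  indicator_le_self' (fun _ _ => e1_nonneg _) _

theorem ms_int {s : Set (Rn 2)} (hs : MeasurableSet s) :
    Integrable (s.indicator e1) (μH[2] : Measure (Rn 2)) := e1_int.indicator hs

theorem ms_mono {s t : Set (Rn 2)} (hs : MeasurableSet s) (ht : MeasurableSet t) (h : s ⊆ t) :
    ms s ≤ ms t :=
  integral_mono (ms_int hs) (ms_int ht) (indicator_le_indicator_of_subset h e1_nonneg)

theorem hyper_null {n : Rn 2} (hn : n ≠ 0) : (μH[2] : Measure (Rn 2)) {α | inner ℝ n α = 0} = 0 := by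
  have hne : LinearMap.ker (innerSL ℝ n).toLinearMap ≠ ⊤ := by
    intro h
    have : n ∈ LinearMap.ker (innerSL ℝ n).toLinearMap := by rw [h]; trivial
    rw [LinearMap.mem_ker] at this
    simp at this
    exact hn this
  have := Measure.addHaar_submodule (μH[2] : Measure (Rn 2)) _ hne
  refine Eq.trans (congrArg _ ?_) this
  ext α
  simp [LinearMap.mem_ker]

theorem ms_half {n : Rn 2} (hn : n ≠ 0) : ms {α | 0 < inner ℝ n α} = kap / 2 := by
  have hm1 : MeasurableSet {α : Rn 2 | 0 < inner ℝ n α} :=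
    (isOpen_lt continuous_const (by fun_prop)).measurableSet
  have hm2 : MeasurableSet {α : Rn 2 | inner ℝ n α < 0} :=
    (isOpen_lt (by fun_prop) continuous_const).measurableSet
  have h1 : ms {α | 0 < inner ℝ n α} = ms {α | inner ℝ n α < 0} := by
    rw [ms, ← integral_neg_eq_self]
    refine integral_congr_ae (Eventually.of_forall fun α => ?_)
    simp only [indicator, mem_ofPred_eq, inner_neg_right, Left.neg_pos_iff, e1, norm_neg]
  have h2 : ms {α | 0 < inner ℝ n α} + ms {α | inner ℝ n α < 0} = kap := by
    rw [ms, ms, ← integral_add (ms_int hm1) (ms_int hm2), kap]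
    refine integral_congr_ae ?_
    have : ∀ᵐ α ∂(μH[2] : Measure (Rn 2)), ¬ (inner ℝ n α = 0) := by
      rw [ae_iff]; simpa using hyper_null hn
    filter_upwards [this] with α hα
    rcases lt_or_gt_of_ne hα with h | h
    · simp [indicator, h, h.not_gt]
    · simp [indicator, h, h.not_gt]
  linarith

namespace Setup
variable {P : MSPair 3} {J : Rn 2 →ₗᵢ[ℝ] Rn 3} {p : Rn 3} {k : Set (Rn 2)}

theorem At_scale {k : Set (Rn 2)} (hk : IsClosed k) (b : Rn 2) {r : ℝ} (hr : 0 < r) :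
    At k b r / r ^ 2 = ms {α | b + r • α ∈ k} := by
  have h := Measure.integral_comp_smul (μH[2] : Measure (Rn 2))
    (fun x => k.indicator (fun a => eta r (‖a - b‖ ^ 2)) (b + x)) r
  rw [integral_add_left_eq_self, integral_indicator hk.measurableSet] at h
  simp only [finrank_euclideanSpace, Fintype.card_fin] at h
  rw [At, ms]
  have e : ∀ α : Rn 2, {α | b + r • α ∈ k}.indicator e1 α =
      k.indicator (fun a => eta r (‖a - b‖ ^ 2)) (b + r • α) := by
    intro α
    by_cases ha : b + r • α ∈ k
    · rw [indicator_of_mem (show α ∈ {α | b + r • α ∈ k} from ha), indicator_of_mem ha,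
        add_sub_cancel_left, e1_scale hr]
    · rw [indicator_of_notMem (show α ∉ {α | b + r • α ∈ k} from ha), indicator_of_notMem ha]
  simp_rw [e]
  rw [h, abs_of_pos (by positivity), smul_eq_mul]
  field_simp

theorem meas_T {k : Set (Rn 2)} (hk : MeasurableSet k) (b : Rn 2) (r : ℝ) :
    MeasurableSet {α : Rn 2 | b + r • α ∈ k} := by
  have : Continuous fun α : Rn 2 => b + r • α := by fun_prop
  exact this.measurable hk

theorem ms_tendsto {ι : Type*} {l : Filter ι} [l.IsCountablyGenerated] {s : ι → Set (Rn 2)} {t : Set (Rn 2)}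
    (hs : ∀ i, MeasurableSet (s i))
    (h : ∀ᵐ α ∂(μH[2] : Measure (Rn 2)), ∀ᶠ i in l, (α ∈ s i ↔ α ∈ t)) :
    Tendsto (fun i => ms (s i)) l (𝓝 (ms t)) := by
  refine tendsto_integral_filter_of_dominated_convergence e1 ?_ ?_ e1_int ?_
  · exact Eventually.of_forall fun i => (ms_int (hs i)).aestronglyMeasurable
  · refine Eventually.of_forall fun i => Eventually.of_forall fun α => ?_
    rw [Real.norm_of_nonneg (indicator_nonneg (fun _ _ => e1_nonneg _) _)]
    exact ind_le _ _
  · filter_upwards [h] with α hα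
    refine tendsto_const_nhds.congr' ?_
    filter_upwards [hα] with i hi
    by_cases ht : α ∈ t
    · rw [indicator_of_mem ht, indicator_of_mem (hi.2 ht)]
    · rw [indicator_of_notMem ht, indicator_of_notMem (fun hh => ht (hi.1 hh))]

theorem dens_up (S : Setup P J p k) (b : Rn 2) :
    ∀ ε > 0, ∀ᶠ r in atTop, At k b r / r ^ 2 ≤ kap / 2 + ε := by
  intro ε hε
  set n : Rn 2 := !₂[0, 1] with hn
  have hin : ∀ α : Rn 2, inner ℝ n α = α 1 := fun α => by
    simp [hn, PiLp.inner_apply, Fin.sum_univ_two]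
  have hn0 : n ≠ 0 := fun h => by
    have := congrArg (fun v : Rn 2 => v 1) h
    simp [hn] at this
  have hm : IsClosed {a : Rn 2 | 0 ≤ a 1} := isClosed_le continuous_const (by fun_prop)
  have hT : Tendsto (fun r : ℝ => ms {α | b + r • α ∈ {a : Rn 2 | 0 ≤ a 1}}) atTop (𝓝 (kap / 2)) := by
    rw [← ms_half hn0]
    refine ms_tendsto (fun r => meas_T hm.measurableSet b r) ?_
    have : ∀ᵐ α ∂(μH[2] : Measure (Rn 2)), ¬ (inner ℝ n α = 0) := by
      rw [ae_iff]; simpa using hyper_null hn0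
    filter_upwards [this] with α hα
    rw [hin] at hα
    simp only [hin, PiLp.add_apply, PiLp.smul_apply, smul_eq_mul]
    filter_upwards [eventually_gt_atTop (|b 1| / |α 1|), eventually_gt_atTop 0] with r h1 h2
    rw [div_lt_iff₀ (abs_pos.2 hα)] at h1
    have h3 := abs_le.1 (le_refl |b 1|)
    constructor
    · intro h
      by_contra hc
      have : α 1 < 0 := lt_of_le_of_ne (not_lt.1 hc) hα
      rw [abs_of_neg this] at h1
      nlinarith
    · intro h
      rw [abs_of_pos h] at h1
      linarith [h3.1]
  have hev := hT.eventually (eventually_lt_nhds (show kap / 2 < kap / 2 + ε by linarith))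
  filter_upwards [hev, eventually_gt_atTop 0] with r h1 h2
  rw [At_scale S.hk b h2]
  refine le_trans (ms_mono (meas_T S.hk.measurableSet b r) (meas_T hm.measurableSet b r) ?_) h1.le
  exact fun α hα => S.hk0 _ hα

theorem dens_tan (S : Setup P J p k) {a0 b : Rn 2} (hd : a0 ≠ b) (hball : ball a0 (dist a0 b) ⊆ k) :
    ∀ ε > 0, ∀ᶠ r in 𝓝[>] (0:ℝ), kap / 2 - ε ≤ At k b r / r ^ 2 := by
  intro ε hε
  have hn0 : a0 - b ≠ 0 := sub_ne_zero.2 hd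
  have hiff : ∀ (α : Rn 2) (r : ℝ), 0 < r →
      (b + r • α ∈ ball a0 (dist a0 b) ↔ r * ‖α‖ ^ 2 < 2 * inner ℝ (a0 - b) α) := by
    intro α r hr
    have e : b + r • α - a0 = r • α - (a0 - b) := by abel
    rw [mem_ball, dist_eq_norm, dist_eq_norm, e, ← sq_lt_sq₀ (norm_nonneg _) (norm_nonneg _),
      norm_sub_sq_real, norm_smul, real_inner_smul_left, real_inner_comm, Real.norm_of_nonneg hr.le]
    constructor
    · intro h; by_contra! hc; nlinarith
    · intro h; nlinarith
  have hT : Tendsto (fun r : ℝ => ms {α | b + r • α ∈ ball a0 (dist a0 b)}) (𝓝[>] 0) (𝓝 (kap / 2)) := by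
    rw [← ms_half hn0]
    refine ms_tendsto (fun r => meas_T measurableSet_ball b r) (Eventually.of_forall fun α => ?_)
    simp only [mem_ofPred_eq]
    by_cases h : 0 < inner ℝ (a0 - b) α
    · have : Tendsto (fun r : ℝ => r * ‖α‖ ^ 2) (𝓝[>] 0) (𝓝 0) := by
        have hc : Continuous fun r : ℝ => r * ‖α‖ ^ 2 := by fun_prop
        have := hc.tendsto 0
        rw [zero_mul] at this
        exact this.mono_left nhdsWithin_le_nhds
      filter_upwards [this.eventually (eventually_lt_nhds (show 0 < 2 * inner ℝ (a0 - b) α by linarith)),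
        self_mem_nhdsWithin] with r h1 h2
      rw [hiff α r h2]
      exact ⟨fun _ => h, fun _ => h1⟩
    · filter_upwards [self_mem_nhdsWithin] with r h2
      have h2 : 0 < r := h2
      rw [hiff α r h2]
      refine ⟨fun h3 => ?_, fun h3 => absurd h3 h⟩
      have : 0 ≤ r * ‖α‖ ^ 2 := by positivity
      linarith
  have hev := hT.eventually (eventually_gt_nhds (show kap / 2 - ε < kap / 2 by linarith))
  filter_upwards [hev, self_mem_nhdsWithin] with r h1 h2
  rw [At_scale S.hk b h2]
  refine h1.le.trans (ms_mono (meas_T measurableSet_ball b r) (meas_T S.hk.measurableSet b r) ?_)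
  exact fun α hα => hball hα

theorem dens_pt (S : Setup P J p k) {b : Rn 2}
    (h : Tendsto (fun r => (μH[2] : Measure (Rn 2)) (k ∩ closedBall b r) / μH[2] (closedBall b r)) (𝓝[>] 0) (𝓝 1)) :
    ∀ ε > 0, ∀ᶠ r in 𝓝[>] (0:ℝ), kap - ε ≤ At k b r / r ^ 2 := by
  intro ε hε
  set μ := (μH[2] : Measure (Rn 2)) with hμ
  set V := μ.real (ball (0 : Rn 2) 1) with hV
  have hV0 : 0 < V := ENNReal.toReal_pos (measure_ball_pos _ _ one_pos).ne' measure_ball_lt_top.ne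
  have hreal : Tendsto (fun r => (μ (k ∩ closedBall b r) / μ (closedBall b r)).toReal) (𝓝[>] 0) (𝓝 1) := by
    have := (ENNReal.tendsto_toReal ENNReal.one_ne_top).comp h
    rw [ENNReal.toReal_one] at this
    exact this
  filter_upwards [hreal.eventually (eventually_gt_nhds (show 1 - ε / V < 1 by
    have : 0 < ε / V := by positivity
    linarith)), self_mem_nhdsWithin] with r h1 h2
  have hr : 0 < r := h2
  have hB : μ.real (closedBall b r) = r ^ 2 * V := by
    rw [measureReal_def, hμ, Measure.addHaar_closedBall _ _ hr.le]
    simp [hV, measureReal_def, hμ, hr.le]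
  rw [ENNReal.toReal_div] at h1
  change _ < μ.real (k ∩ closedBall b r) / μ.real (closedBall b r) at h1
  rw [hB, lt_div_iff₀ (by positivity)] at h1
  have h3 : μ.real (closedBall b r ∩ k) + μ.real (closedBall b r \ k) = μ.real (closedBall b r) :=
    measureReal_inter_add_sdiff S.hk.measurableSet measure_closedBall_lt_top.ne
  rw [inter_comm, hB] at h3
  have h4 : μ.real (closedBall b r \ k) ≤ ε * r ^ 2 := by
    have : (1 - ε / V) * (r ^ 2 * V) = r ^ 2 * V - ε * r ^ 2 := by field_simp
    linarith
  -- compare the integrals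
  have i1 : Integrable (fun a => eta r (‖a - b‖ ^ 2)) μ := by
    have : IntegrableOn (fun a : Rn 2 => eta r (‖a - b‖ ^ 2)) univ μ :=
      int_k 1 (contDiff_etax r b).continuous (fun a ha => etax_zero hr ha) fun a => by
        rw [abs_of_nonneg (eta_nonneg _ _)]; exact eta_le_one r (by positivity)
    simpa using this
  have h5 : (∫ a in k, eta r (‖a - b‖ ^ 2) ∂μ) + ∫ a in kᶜ, eta r (‖a - b‖ ^ 2) ∂μ =
      ∫ a, eta r (‖a - b‖ ^ 2) ∂μ := integral_add_compl S.hk.measurableSet i1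
  have h6 : ∫ a, eta r (‖a - b‖ ^ 2) ∂μ = kap * r ^ 2 := by
    have := At_scale isClosed_univ b hr
    simp only [At, Measure.restrict_univ, mem_univ, ms] at this
    rw [div_eq_iff (by positivity)] at this
    rw [this, kap]
    congr 2
    simp [indicator]
  have h7 : ∫ a in kᶜ, eta r (‖a - b‖ ^ 2) ∂μ ≤ μ.real (closedBall b r \ k) := by
    have : μ.real (closedBall b r \ k) = ∫ a in kᶜ, (closedBall b r).indicator (fun _ => (1:ℝ)) a ∂μ := by
      rw [integral_indicator_const _ measurableSet_closedBall, smul_eq_mul, mul_one, measureReal_def,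
        measureReal_def, Measure.restrict_apply measurableSet_closedBall]
      rfl
    rw [this]
    refine integral_mono i1.integrableOn ?_ fun a => ?_
    · refine (integrable_indicator_iff measurableSet_closedBall).2 (integrableOn_const ?_)
      exact (lt_of_le_of_lt (Measure.restrict_apply_le _ _) measure_closedBall_lt_top).ne
    · by_cases ha : a ∈ closedBall b r
      · rw [indicator_of_mem ha]; exact eta_le_one r (by positivity)
      · rw [indicator_of_notMem ha, etax_zero hr (fun hh => ha (ball_subset_closedBall hh))]
  rw [le_div_iff₀ (by positivity)]
  change _ ≤ ∫ a in k, eta r (‖a - b‖ ^ 2) ∂μ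
  nlinarith

/-- blow-up center, first case -/
theorem center_null (S : Setup P J p k) (h0 : (μH[2] : Measure (Rn 2)) k = 0) :
    ∃ b c w, b ∉ k ∧ ∀ r, 0 < r → WW P J p k b c r = w := by
  have hb : (!₂[0, -1] : Rn 2) ∉ k := fun h => by
    have := S.hk0 _ h
    norm_num at this
  obtain ⟨c, hc⟩ := S.exists_c (subset_closure (show (!₂[0, -1] : Rn 2) ∈ kᶜ from hb))
  have hA : ∀ r, At k !₂[0, -1] r = 0 := fun r => by
    rw [At, Measure.restrict_eq_zero.2 h0, integral_zero_measure]
  refine ⟨_, c, 0, hb, fun r hr => le_antisymm (S.W_le hc (fun ε hε => ?_) r hr) (S.W_ge hc (fun ε hε => ?_) r hr)⟩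
  · exact Eventually.of_forall fun r => by rw [hA]; simp [hε.le]
  · exact Eventually.of_forall fun r => by rw [hA]; simp [hε.le]

/-- blow-up center, second case -/
theorem center_pos (S : Setup P J p k) (h0 : (μH[2] : Measure (Rn 2)) k ≠ 0) :
    ∃ a0 b c w, a0 ≠ b ∧ ball a0 (dist a0 b) ⊆ k ∧ ∀ r, 0 < r → WW P J p k b c r = w := by
  have hae := Besicovitch.ae_tendsto_measure_inter_div (μH[2] : Measure (Rn 2)) k
  have hne : NeBot (ae ((μH[2] : Measure (Rn 2)).restrict k)) := by
    rw [ae_neBot]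
    simpa [Measure.restrict_eq_zero] using h0
  obtain ⟨a0, h1, h2⟩ := (hae.and (ae_restrict_mem S.hk.measurableSet)).exists
  have hcl : a0 ∉ closure kᶜ := by
    intro hcl
    obtain ⟨c, hc⟩ := S.exists_c hcl
    have h3 := S.W_ge hc (S.dens_pt h1) 1 one_pos
    have h4 := S.W_le hc (S.dens_up a0) 1 one_pos
    linarith [kap_pos]
  have hne2 : (closure kᶜ).Nonempty := ⟨!₂[0, -1], subset_closure fun h => by
    have := S.hk0 _ h
    norm_num at this⟩
  obtain ⟨b, hb, hdist⟩ := isClosed_closure.exists_infDist_eq_dist hne2 a0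
  obtain ⟨c, hc⟩ := S.exists_c hb
  have hab : a0 ≠ b := fun h => hcl (h ▸ hb)
  have hball : ball a0 (dist a0 b) ⊆ k := by
    intro x hx
    by_contra hxk
    have := infDist_le_dist_of_mem (x := a0) (subset_closure (show x ∈ kᶜ from hxk))
    rw [hdist] at this
    rw [mem_ball, dist_comm] at hx
    linarith
  refine ⟨a0, b, c, kap / 2, hab, hball, fun r hr => le_antisymm ?_ ?_⟩
  · exact S.W_le hc (S.dens_up b) r hr
  · exact S.W_ge hc (S.dens_tan hab hball) r hr
end Setup

end

section

namespace Setup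
variable {P : MSPair 3} {J : Rn 2 →ₗᵢ[ℝ] Rn 3} {p : Rn 3} {k : Set (Rn 2)}

theorem euler_ae (S : Setup P J p k) {b : Rn 2} {c w : ℝ} (hw : ∀ r, 0 < r → WW P J p k b c r = w) :
    ∀ᵐ x, 2 * inner ℝ (x - (p + J b)) (gradient P.u x) = P.u x - c := by
  set y := p + J b with hy
  have h1 : ∀ n : ℕ, ∀ᵐ x, x ∈ ball y ((n : ℝ) + 1) →
      2 * inner ℝ (x - y) (gradient P.u x) = P.u x - c := by
    intro n
    have hr : (0:ℝ) < (n : ℝ) + 1 := by positivity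
    set r : ℝ := (n : ℝ) + 1
    have hd := S.W_deriv b c hr
    have hd0 : HasDerivAt (WW P J p k b c) 0 r :=
      (hasDerivAt_const r w).congr_of_eventuallyEq (by
        filter_upwards [Ioi_mem_nhds hr] with s hs using hw s hs)
    have h0 := hd.unique hd0
    rw [← hy] at h0
    have h00 : ∫ x, om r (‖x - y‖ ^ 2) * (2 * inner ℝ (x - y) (gradient P.u x) - (P.u x - c)) ^ 2 = 0 := by
      rcases mul_eq_zero.1 h0 with h | h
      · exact absurd h (by positivity)
      · exact h
    have hint : Integrable fun x => om r (‖x - y‖ ^ 2) *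
        (2 * inner ℝ (x - y) (gradient P.u x) - (P.u x - c)) ^ 2 := by
      have := ((S.int_omF y c hr).add ((S.int_omM y c hr).const_mul (-4))).add ((S.int_omS y hr).const_mul 4)
      refine this.congr (Eventually.of_forall fun x => ?_)
      simp only [Pi.add_apply]; ring
    have hz := (integral_eq_zero_iff_of_nonneg
      (fun x => mul_nonneg (om_nonneg _ _) (sq_nonneg _)) hint).1 h00
    filter_upwards [hz] with x hx hxb
    simp only [Pi.zero_apply] at hx
    have hom : om r (‖x - y‖ ^ 2) ≠ 0 := by
      refine (om_pos hr ?_).ne'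
      have : ‖x - y‖ < r := by simpa [dist_eq_norm] using hxb
      exact pow_lt_pow_left₀ this (norm_nonneg _) two_ne_zero
    have := pow_eq_zero_iff two_ne_zero |>.1 ((mul_eq_zero.1 hx).resolve_left hom)
    linarith
  filter_upwards [ae_all_iff.2 h1] with x hx
  obtain ⟨n, hn⟩ := exists_nat_gt (dist x y)
  exact hx n (by rw [mem_ball]; linarith)

theorem homog_ae (S : Setup P J p k) {b : Rn 2} {c w : ℝ} (hw : ∀ r, 0 < r → WW P J p k b c r = w) :
    ∀ᵐ ξ : Rn 3, ∀ t, 0 < t → P.u (p + J b + t • ξ) - c = √t * (P.u (p + J b + ξ) - c) := by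
  set y := p + J b with hy
  have hq : ∀ᵐ x, 2 * inner ℝ (x - y) (gradient P.u x) = ut P x - c := by
    filter_upwards [S.euler_ae hw, S.ut_ae] with x h1 h2
    rw [h2]; exact h1
  have hqm : MeasurableSet {x | 2 * inner ℝ (x - y) (gradient P.u x) = ut P x - c} :=
    measurableSet_eq_fun ((meas_inner P y).const_mul 2) ((ut_meas P).sub_const c)
  filter_upwards [ae_range J, S.ray_diff y, ae_ray hqm hq y] with ξ hξ hd he t ht
  set r1 := min 1 t
  set r2 := max 1 t
  have hr1 : 0 < r1 := lt_min one_pos ht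
  have hr12 : r1 ≤ r2 := min_le_max
  have hac := S.ray_ac b hξ hr1 hr12
  have hacc : AbsolutelyContinuousOnInterval (fun _ : ℝ => c) r1 r2 :=
    ((LipschitzWith.const c).lipschitzOnWith).absolutelyContinuousOnInterval
  have hsq : AbsolutelyContinuousOnInterval (fun s : ℝ => (√s)⁻¹) r1 r2 := by
    refine ContDiffOn.absolutelyContinuousOnInterval ?_
    intro s hs
    rw [uIcc_of_le hr12] at hs
    have hs0 : 0 < s := hr1.trans_le hs.1
    exact ((contDiffAt_id.sqrt hs0.ne').inv (Real.sqrt_pos.2 hs0).ne').contDiffWithinAt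
  obtain ⟨C, hC⟩ := ((hac.sub hacc).mul hsq).const_of_ae_hasDerivAt_zero (by
    filter_upwards [hd, he] with s hs1 hs2 hs
    rw [uIcc_of_le hr12] at hs
    have hs0 : 0 < s := hr1.trans_le hs.1
    have e1 := (ray_deriv (hs1 hs0)).sub_const c
    have e2 := ((hasDerivAt_id s).sqrt hs0.ne').inv (Real.sqrt_pos.2 hs0).ne'
    refine (HasDerivAt.mul e1 e2).congr_deriv ?_
    have e3 := hs2 hs0
    rw [ut_eq (S.ray_notMem b hξ hs0), add_sub_cancel_left, real_inner_smul_left] at e3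
    rw [← e3]
    simp only [id, Pi.inv_apply]
    have h4 : √s ^ 2 = s := Real.sq_sqrt hs0.le
    have h5 : √s ≠ 0 := (Real.sqrt_pos.2 hs0).ne'
    rw [h4]
    field_simp
    ring)
  have h1 := hC 1 (by rw [uIcc_of_le hr12]; exact ⟨min_le_left _ _, le_max_left _ _⟩)
  have h2 := hC t (by rw [uIcc_of_le hr12]; exact ⟨min_le_right _ _, le_max_right _ _⟩)
  simp only [Pi.mul_apply, Pi.sub_apply, Real.sqrt_one, inv_one, mul_one, one_smul] at h1 h2
  have h5 : √t ≠ 0 := (Real.sqrt_pos.2 ht).ne'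
  rw [← h1, ← div_eq_mul_inv, div_eq_iff h5] at h2
  rw [h2, mul_comm]

theorem homog (S : Setup P J p k) {b : Rn 2} {c w : ℝ} (hw : ∀ r, 0 < r → WW P J p k b c r = w)
    {t : ℝ} (ht : 0 < t) {x : Rn 3} (hx : x ∉ P.K) (hx2 : p + J b + t • (x - (p + J b)) ∉ P.K) :
    P.u (p + J b + t • (x - (p + J b))) - c = √t * (P.u x - c) := by
  set y := p + J b with hy
  have hcont : ∀ z, z ∉ P.K → ContinuousAt P.u z := fun z hz =>
    (locLip P).continuousOn.continuousAt (P.closed.isOpen_compl.mem_nhds hz)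
  have hdense := Measure.dense_of_ae (S.homog_ae hw)
  have hfr := mem_closure_iff_frequently.1 (hdense (x - y))
  have t1 : Tendsto (fun ξ : Rn 3 => P.u (y + t • ξ) - c) (𝓝 (x - y)) (𝓝 (P.u (y + t • (x - y)) - c)) := by
    have h1 : Tendsto (fun ξ : Rn 3 => y + t • ξ) (𝓝 (x - y)) (𝓝 (y + t • (x - y))) :=
      Continuous.tendsto (by fun_prop) _
    exact ((hcont _ hx2).tendsto.comp h1).sub_const c
  have t2 : Tendsto (fun ξ : Rn 3 => √t * (P.u (y + ξ) - c)) (𝓝 (x - y)) (𝓝 (√t * (P.u x - c))) := by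
    have h1 : Tendsto (fun ξ : Rn 3 => y + ξ) (𝓝 (x - y)) (𝓝 x) := by
      have : Continuous fun ξ : Rn 3 => y + ξ := by fun_prop
      have := this.tendsto (x - y)
      rwa [add_sub_cancel] at this
    exact (((hcont _ hx).tendsto.comp h1).sub_const c).const_mul _
  exact tendsto_nhds_unique_of_frequently_eq t1 t2 (hfr.mono fun ξ h => h t ht)

theorem conic (S : Setup P J p k) {b : Rn 2} {c w : ℝ} (hw : ∀ r, 0 < r → WW P J p k b c r = w)
    {t : ℝ} (ht : 0 < t) {x : Rn 3} (hx : x ∈ P.K) : p + J b + t • (x - (p + J b)) ∈ P.K := by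
  classical
  have hom := fun {x : Rn 3} => S.homog hw ht (x := x)
  set y := p + J b with hy
  set R := dist x y + 1 with hR
  have hR0 : 0 < R := by positivity
  set φ : Rn 3 → Rn 3 := fun x => y + t • (x - y) with hφ
  have hφc : Continuous φ := by fun_prop
  have hφl : LipschitzWith ⟨t, ht.le⟩ φ := by
    refine LipschitzWith.of_dist_le_mul fun a b => ?_
    change dist (y + t • (a - y)) (y + t • (b - y)) ≤ t * dist a b
    rw [dist_add_left, dist_eq_norm, dist_eq_norm, ← smul_sub, sub_sub_sub_cancel_right, norm_smul,
      Real.norm_of_nonneg ht.le]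
  have hK'c : IsClosed (φ ⁻¹' P.K) := P.closed.preimage hφc
  set v : Rn 3 → ℝ := fun x => c + (√t)⁻¹ * (P.u (φ x) - c) with hv
  set un : Rn 3 → ℝ := fun x => if x ∈ P.K then v x else P.u x with hun
  have hun1 : ∀ x, x ∉ P.K → un x = P.u x := fun x h => by simp only [hun]; exact if_neg h
  have hun2 : ∀ x, φ x ∉ P.K → un x = v x := fun x h => by
    by_cases hxK : x ∈ P.K
    · simp only [hun]; exact if_pos hxK
    · rw [hun1 x hxK]
      have := hom hxK h
      have h5 : √t ≠ 0 := (Real.sqrt_pos.2 ht).ne'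
      change _ = c + (√t)⁻¹ * (P.u (y + t • (x - y)) - c)
      rw [this]
      field_simp
      ring
  have hLu : LocallyLipschitzOn P.Kᶜ un := by
    intro z hz
    obtain ⟨C, s, hs, hC⟩ := locLip P hz
    refine ⟨C, s ∩ P.Kᶜ, inter_mem hs self_mem_nhdsWithin, ?_⟩
    intro a ha b hb
    rw [hun1 a ha.2, hun1 b hb.2]
    exact hC ha.1 hb.1
  have hLv : LocallyLipschitzOn (φ ⁻¹' P.K)ᶜ un := by
    intro z hz
    obtain ⟨C, s, hs, hC⟩ := locLip P (show φ z ∈ P.Kᶜ from hz)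
    rw [P.closed.isOpen_compl.nhdsWithin_eq hz] at hs
    have hs2 : φ ⁻¹' s ∈ 𝓝 z := hφc.continuousAt.preimage_mem_nhds hs
    have hC2 := hC.comp (hφl.lipschitzOnWith (s := φ ⁻¹' s)) (mapsTo_preimage _ _)
    refine ⟨‖(√t)⁻¹‖₊ * (C * ⟨t, ht.le⟩), φ ⁻¹' s ∩ (φ ⁻¹' P.K)ᶜ,
      inter_mem (mem_nhdsWithin_of_mem_nhds hs2) self_mem_nhdsWithin, ?_⟩
    refine LipschitzOnWith.of_dist_le_mul fun a ha b hb => ?_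
    rw [hun2 a ha.2, hun2 b hb.2]
    simp only [hv]
    rw [dist_add_left, dist_eq_norm, ← mul_sub, sub_sub_sub_cancel_right, norm_mul, ← dist_eq_norm,
      NNReal.coe_mul, mul_assoc]
    exact mul_le_mul_of_nonneg_left (hC2.dist_le_mul a ha.1 b hb.1) (norm_nonneg _)
  have hgrad : ∀ z, z ∉ P.K → gradient un z = gradient P.u z := by
    intro z hz
    have : un =ᶠ[𝓝 z] P.u := by
      filter_upwards [P.closed.isOpen_compl.mem_nhds hz] with a ha using hun1 a ha
    rw [gradient, gradient, this.fderiv_eq]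
  let Q : MSPair 3 :=
    { K := P.K ∩ (φ ⁻¹' P.K ∪ (ball y R)ᶜ)
      u := un
      closed := P.closed.inter (hK'c.union isOpen_ball.isClosed_compl)
      lip := by
        refine locLipOn_of fun z hz => ?_
        have hzz : z ∉ P.K ∨ φ z ∉ P.K := by
          by_contra! hc
          exact hz ⟨hc.1, Or.inl hc.2⟩
        rcases hzz with h | h
        · obtain ⟨C, s, hs, hC⟩ := hLu h
          rw [P.closed.isOpen_compl.nhdsWithin_eq h] at hs
          exact ⟨C, s, mem_nhdsWithin_of_mem_nhds hs, hC⟩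
        · obtain ⟨C, s, hs, hC⟩ := hLv h
          rw [hK'c.isOpen_compl.nhdsWithin_eq h] at hs
          exact ⟨C, s, mem_nhdsWithin_of_mem_nhds hs, hC⟩
      integ := by
        intro R' _
        have h1 : IntegrableOn (fun x => (un x) ^ 2 + ‖gradient un x‖ ^ 2) (ball 0 R') := by
          refine (S.int_both 0 R').congr (ae_restrict_of_ae ?_)
          filter_upwards [compl_mem_ae_iff.2 S.vol_K] with z hz
          rw [hun1 z hz, hgrad z hz]
        exact h1.mono_set sdiff_subset }
  have hQK : Q.K = P.K ∩ (φ ⁻¹' P.K ∪ (ball y R)ᶜ) := rfl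
  have hcomp : Competitor 3 P Q (ball y R) := by
    refine S.comp ?_ ?_
    · ext z
      rw [hQK]
      constructor
      · exact fun h => ⟨h.1.1, h.2⟩
      · exact fun h => ⟨⟨h.1, Or.inr h.2⟩, h.2⟩
    · intro z hz
      exact hun1 z fun h => hz (Or.inl (Or.inr h))
  have hKK := S.hred y R hR0 Q hcomp (by rw [hQK]; exact inter_subset_left) hun1
  rw [← hKK, hQK] at hx
  rcases hx.2 with h | h
  · exact h
  · exact absurd (show x ∈ ball y R by rw [mem_ball, hR]; linarith) h

theorem conic2 (S : Setup P J p k) {b : Rn 2} {c w : ℝ} (hw : ∀ r, 0 < r → WW P J p k b c r = w)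
    {t : ℝ} (ht : 0 < t) {a : Rn 2} (ha : a ∈ k) : b + t • (a - b) ∈ k := by
  have h := S.conic hw ht ((S.mem_K a).2 ha)
  rw [← S.mem_K]
  convert h using 1
  rw [add_sub_add_left_eq_sub, map_add, map_smul, map_sub, add_assoc]

theorem full (S : Setup P J p k) {e : Rn 2} (he : e ∈ k) (he1 : e 1 = 0) {a : Rn 2} (ha : 0 ≤ a 1) : a ∈ k := by
  by_cases h0 : (μH[2] : Measure (Rn 2)) k = 0
  · obtain ⟨b, c, w, hb, hw⟩ := S.center_null h0
    exfalso
    apply hb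
    have hc : Continuous fun t : ℝ => b + t • (e - b) := by fun_prop
    have hlim : Tendsto (fun t : ℝ => b + t • (e - b)) (𝓝[>] 0) (𝓝 b) := by
      have := hc.tendsto 0
      rw [zero_smul, add_zero] at this
      exact this.mono_left nhdsWithin_le_nhds
    refine S.hk.mem_of_tendsto hlim ?_
    filter_upwards [self_mem_nhdsWithin] with t ht
    exact S.conic2 hw ht he
  · obtain ⟨a0, b, c, w, hab, hball, hw⟩ := S.center_pos h0
    have hn0 : a0 - b ≠ 0 := sub_ne_zero.2 hab
    set n := a0 - b with hn
    have hhalf : ∀ α : Rn 2, 0 < inner ℝ n α → b + α ∈ k := by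
      intro α hα
      have hα0 : 0 < ‖α‖ ^ 2 := by
        have : α ≠ 0 := by rintro rfl; simp at hα
        positivity
      set r := inner ℝ n α / ‖α‖ ^ 2 with hr
      have hr0 : 0 < r := by positivity
      have hrα : r * ‖α‖ ^ 2 = inner ℝ n α := by rw [hr, div_mul_cancel₀ _ hα0.ne']
      have hmem : b + r • α ∈ k := by
        apply hball
        have e : b + r • α - a0 = r • α - n := by rw [hn]; abel
        rw [mem_ball, dist_eq_norm, dist_eq_norm, e, ← hn, ← sq_lt_sq₀ (norm_nonneg _) (norm_nonneg _),
          norm_sub_sq_real, norm_smul, real_inner_smul_left, real_inner_comm, Real.norm_of_nonneg hr0.le]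
        nlinarith
      have := S.conic2 hw (inv_pos.2 hr0) hmem
      rwa [add_sub_cancel_left, smul_smul, inv_mul_cancel₀ hr0.ne', one_smul] at this
    have hpos : ∀ α : Rn 2, 0 < inner ℝ n α → 0 ≤ α 1 := by
      intro α hα
      by_contra! hneg
      have ht : 0 < (|b 1| + 1) / (-α 1) := div_pos (by positivity) (by linarith)
      have h1 := S.conic2 hw ht (hhalf α hα)
      have h2 := S.hk0 _ h1
      simp only [add_sub_cancel_left, PiLp.add_apply, PiLp.smul_apply, smul_eq_mul] at h2
      have h3 : (|b 1| + 1) / (-α 1) * α 1 = -(|b 1| + 1) := by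
        have : α 1 ≠ 0 := hneg.ne
        field_simp
      rw [h3] at h2
      linarith [le_abs_self (b 1)]
    have hin : ∀ α : Rn 2, inner ℝ n α = n 0 * α 0 + n 1 * α 1 := fun α => by
      simp [PiLp.inner_apply, Fin.sum_univ_two, mul_comm]
    have hn00 : n 0 = 0 := by
      by_contra hne
      have := hpos !₂[(|n 1| + 1) / n 0, -1] (by
        rw [hin]
        simp
        rw [mul_div_cancel₀ _ hne]
        linarith [le_abs_self (n 1)])
      norm_num at this
    have hn1 : 0 < n 1 := by
      have h1 : n 1 ≠ 0 := by
        intro h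
        apply hn0
        ext i
        fin_cases i <;> simp [hn00, h]
      have h2 := hpos n (by rw [hin, hn00]; have := mul_self_pos.2 h1; linarith)
      exact lt_of_le_of_ne h2 h1.symm
    have hb1 : b 1 ≤ 0 := by
      have h1 := S.hk0 _ (S.conic2 hw two_pos he)
      simp only [PiLp.add_apply, PiLp.smul_apply, PiLp.sub_apply, smul_eq_mul, he1] at h1
      linarith
    have hopen : ∀ a : Rn 2, 0 < a 1 → a ∈ k := by
      intro a ha
      have := hhalf (a - b) (by
        rw [hin, hn00]
        simp only [PiLp.sub_apply, zero_mul, zero_add]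
        exact mul_pos hn1 (by linarith))
      rwa [add_sub_cancel] at this
    have hc : Continuous fun t : ℝ => a + t • (!₂[0, 1] : Rn 2) := by fun_prop
    have hlim : Tendsto (fun t : ℝ => a + t • (!₂[0, 1] : Rn 2)) (𝓝[>] 0) (𝓝 a) := by
      have := hc.tendsto 0
      rw [zero_smul, add_zero] at this
      exact this.mono_left nhdsWithin_le_nhds
    refine S.hk.mem_of_tendsto hlim ?_
    filter_upwards [self_mem_nhdsWithin] with t ht
    refine hopen _ ?_
    have ht : 0 < t := ht
    simp
    linarith
end Setup

theorem j_norm (a : Rn 2) : ‖(!₂[a 0, a 1, 0] : Rn 3)‖ = ‖a‖ := by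
  simp [EuclideanSpace.norm_eq, Fin.sum_univ_three, Fin.sum_univ_two]

/-- the embedding of the plane -/
def jj : Rn 2 →ₗᵢ[ℝ] Rn 3 where
  toFun a := !₂[a 0, a 1, 0]
  map_add' a b := by ext i; fin_cases i <;> simp
  map_smul' t a := by ext i; fin_cases i <;> simp
  norm_map' a := j_norm a

theorem jj_apply (a : Rn 2) : jj a = !₂[a 0, a 1, 0] := rfl

theorem main_thm (P : MSPair 3) (hmin : IsGlobalMin 3 P) (hred : MSIsReduced 3 P)
    (R : Rn 3 ≃ₗᵢ[ℝ] Rn 3) (p : Rn 3)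
    (hsub : P.K ⊆ (fun w => p + R w) '' modelHalfPlane)
    (hedge : ∃ x ∈ P.K, x ∈ (fun w => p + R w) '' modelEdge) :
    P.K = (fun w => p + R w) '' modelHalfPlane := by
  set J : Rn 2 →ₗᵢ[ℝ] Rn 3 := R.toLinearIsometry.comp jj with hJ
  have hJa : ∀ a, J a = R !₂[a 0, a 1, 0] := fun a => rfl
  have hback : ∀ w : Rn 3, w 2 = 0 → J !₂[w 0, w 1] = R w := by
    intro w hw
    rw [hJa]
    congr 1
    ext i
    fin_cases i <;> simp [hw]
  set k : Set (Rn 2) := (fun a => p + J a) ⁻¹' P.K with hk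
  have hJc : Continuous fun a => p + J a := by have := J.continuous; fun_prop
  have S : Setup P J p k := by
    refine ⟨hmin, hred, ?_, P.closed.preimage hJc, ?_⟩
    · rw [hk, image_preimage_eq_inter_range]
      refine (inter_eq_left.2 fun x hx => ?_).symm
      obtain ⟨w, hw, rfl⟩ := hsub hx
      exact ⟨!₂[w 0, w 1], by simp only [hback w hw.1]⟩
    · intro a ha
      obtain ⟨w, hw, h⟩ := hsub ha
      have h1 : R w = R !₂[a 0, a 1, 0] := add_left_cancel h
      have h2 := R.injective h1
      have h3 := hw.2
      rw [h2] at h3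
      simpa using h3
  refine hsub.antisymm ?_
  rintro _ ⟨w, hw, rfl⟩
  obtain ⟨x, hx, v, hv, rfl⟩ := hedge
  have he : (!₂[v 0, v 1] : Rn 2) ∈ k := by
    change p + J _ ∈ P.K
    rw [hback v hv.1]; exact hx
  have := S.full he (by simpa using hv.2) (a := !₂[w 0, w 1]) (by simpa using hw.2)
  change p + J _ ∈ P.K at this
  rwa [hback w hw.1] at this

end

/-- Let `(u, K)` be a reduced global Mumford–Shah minimizer in `ℝ³`.
If `K` is contained in a closed half-plane `H` (the image of the model half-plane by a
rotation `R ∈ SO(3)` followed by a translation by `p`) and `K` contains a point of the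
edge of `H`, then `K = H`. -/
theorem statement0 (P : MSPair 3) (hmin : IsGlobalMin 3 P) (hred : MSIsReduced 3 P)
    (R : Rn 3 ≃ₗᵢ[ℝ] Rn 3)
    (hdet : LinearMap.det (R.toLinearEquiv : Rn 3 →ₗ[ℝ] Rn 3) = 1)
    (p : Rn 3)
    (hsub : P.K ⊆ (fun w => p + R w) '' modelHalfPlane)
    (hedge : ∃ x ∈ P.K, x ∈ (fun w => p + R w) '' modelEdge) :
    P.K = (fun w => p + R w) '' modelHalfPlane := by
  exact main_thm P hmin hred R p hsub hedge
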